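/- arXiv:1706.01024 — 7 statements merged into one kernel-verified Lean document; each statement's English description precedes it below -/
import Mathlib

section
/- Let R = K[x,y,z] be a polynomial ring over a field K and I = ((xy)^2, (xz)^2, (yz)^2). Then Ass(R/I) = {(x,y), (x,z), (y,z)} and Ass(R/I^n) = {(x,y), (x,z), (y,z), (x,y,z)} for every integer n ≥ 2; in particular astab(I) = 2. -/
/-!
All ideals involved are monomial, so membership is tested on exponent vectors. A monomial
`x^a y^b z^c` lies in `I ^ n` exactly when `A = ⌊a/2⌋`, `B = ⌊b/2⌋`, `C = ⌊c/2⌋` satisfy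
`A + B ≥ n`, `A + C ≥ n`, `B + C ≥ n` and `A + B + C ≥ 2n` (`mem_pow_iff`).

*Lower bound.* Each claimed prime is the annihilator of an explicit monomial: `x^(2n-1) y z^(2n)`
for `(x, y)`, symmetrically for the other two, and `x^(2n-1) y^3 z^(2n-1)` for `(x, y, z)` when
`n ≥ 2` (`span_mem_ass`).

*Upper bound.* An associated prime `P` contains `xy`, `xz` and `yz`, hence two
of the variables. If it contains all three it is the maximal ideal. If it contains, say, `x` and `y` but
not `z`, then `P = (x, y)` (`eq_of_not_mem`), because inverting `z` turns `I ^ n` into the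
`(x, y)`-primary ideal `(x^2, y^2)^n`; leading monomials make this concrete. For `n = 1` the
maximal ideal is excluded, since no monomial outside `I` is multiplied into `I` by all of
`x`, `y`, `z`.
-/

open IsLocalRing

/-- `R` is a regular local ring: Noetherian local and the maximal ideal is generated by
`dim R` elements. -/
def IsRegularLocal (R : Type*) [CommRing R] [IsLocalRing R] : Prop :=
  IsNoetherianRing R ∧ ∃ s : Finset R,
    Ideal.span (s : Set R) = IsLocalRing.maximalIdeal R ∧
    (s.card : WithBot ℕ∞) = ringKrullDim R

/-- The height of an ideal: the infimum of heights of primes containing it. -/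
noncomputable def idealHeight {R : Type*} [CommRing R] (I : Ideal R) : ℕ∞ :=
  ⨅ (P : PrimeSpectrum R) (_ : I ≤ P.asIdeal), Order.height P

/-- The `m`-depth of `R ⧸ I`: the supremum of lengths of `R ⧸ I`-regular sequences
with entries in `m`. -/
noncomputable def depthIn {R : Type*} [CommRing R] (m I : Ideal R) : ℕ :=
  sSup {n : ℕ | ∃ rs : List R, rs.length = n ∧ (∀ r ∈ rs, r ∈ m) ∧
    RingTheory.Sequence.IsRegular (R ⧸ I) rs}

/-- The index of Ass-stability of `I`: the least `n₀ ≥ 1` with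
`Ass(R/Iⁿ) = Ass(R/I^{n₀})` for all `n ≥ n₀`. -/
noncomputable def astab {R : Type*} [CommRing R] (I : Ideal R) : ℕ :=
  sInf {n₀ : ℕ | 0 < n₀ ∧ ∀ n, n₀ ≤ n →
    associatedPrimes R (R ⧸ I ^ n) = associatedPrimes R (R ⧸ I ^ n₀)}

/-- The index of depth-stability of `I` (depth taken with respect to `m`). -/
noncomputable def dstab {R : Type*} [CommRing R] (m I : Ideal R) : ℕ :=
  sInf {n₀ : ℕ | 0 < n₀ ∧ ∀ n, n₀ ≤ n → depthIn m (I ^ n) = depthIn m (I ^ n₀)}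

/-- The set of elements integral over the ideal `I`. -/
def intClSet {R : Type*} [CommRing R] (I : Ideal R) : Set R :=
  {x | ∃ n : ℕ, 0 < n ∧ ∃ a : ℕ → R, (∀ i ∈ Finset.Icc 1 n, a i ∈ I ^ i) ∧
    x ^ n + ∑ i ∈ Finset.Icc 1 n, a i * x ^ (n - i) = 0}

/-- The integral closure of an ideal `I`.  (The set `intClSet I` is itself an ideal,
so taking the span does not enlarge it.) -/
noncomputable def intCl {R : Type*} [CommRing R] (I : Ideal R) : Ideal R :=
  Ideal.span (intClSet I)

/-- The index of Ass-stability for integral closures of powers of `I`. -/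
noncomputable def astabBar {R : Type*} [CommRing R] (I : Ideal R) : ℕ :=
  sInf {n₀ : ℕ | 0 < n₀ ∧ ∀ n, n₀ ≤ n →
    associatedPrimes R (R ⧸ intCl (I ^ n)) = associatedPrimes R (R ⧸ intCl (I ^ n₀))}

open MvPolynomial

/-! ### Monomial ideals and their associated primes -/

/-- `Q` is the monomial ideal whose monomials are those with exponent vector satisfying `V`. -/
def IsMonomialFor {K : Type*} [Field K] (Q : Ideal (MvPolynomial (Fin 3) K))
    (V : (Fin 3 →₀ ℕ) → Prop) : Prop :=
  ∀ f, f ∈ Q ↔ ∀ s ∈ f.support, V s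

/-- The condition on an exponent vector `s` for its monomial to lie in `I ^ n`. -/
def ExpPow (n : ℕ) (s : Fin 3 →₀ ℕ) : Prop :=
  n ≤ s 0 / 2 + s 1 / 2 ∧ n ≤ s 0 / 2 + s 2 / 2 ∧ n ≤ s 1 / 2 + s 2 / 2 ∧
    2 * n ≤ s 0 / 2 + s 1 / 2 + s 2 / 2

section

variable {K : Type*} [Field K]

theorem isMonomialFor_span (V : (Fin 3 →₀ ℕ) → Prop) (hV : ∀ s t, V s → s ≤ t → V t) :
    IsMonomialFor (Ideal.span ((fun s => monomial s (1 : K)) '' {s | V s})) V := by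
  intro f
  rw [mem_ideal_span_monomial_image]
  refine forall₂_congr fun s _ => ⟨?_, fun h => ⟨s, h, le_rfl⟩⟩
  rintro ⟨t, ht, hts⟩
  exact hV t s ht hts

theorem isMonomialFor_span_X (T : Set (Fin 3)) :
    IsMonomialFor (Ideal.span (X '' T : Set (MvPolynomial (Fin 3) K)))
      (fun s => ∃ i ∈ T, s i ≠ 0) :=
  fun _ => mem_ideal_span_X_image

theorem monomial_mem_iff {Q : Ideal (MvPolynomial (Fin 3) K)} {V : (Fin 3 →₀ ℕ) → Prop}
    (hQ : IsMonomialFor Q V) (s : Fin 3 →₀ ℕ) : monomial s (1 : K) ∈ Q ↔ V s := by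
  classical
  rw [hQ, support_monomial, if_neg one_ne_zero]
  simp

/-- Every polynomial is congruent modulo a monomial ideal to one having no monomial in it. -/
theorem exists_reduced {Q : Ideal (MvPolynomial (Fin 3) K)} {V : (Fin 3 →₀ ℕ) → Prop}
    (hQ : IsMonomialFor Q V) (f : MvPolynomial (Fin 3) K) :
    ∃ g, f - g ∈ Q ∧ ∀ s ∈ g.support, ¬ V s := by
  classical
  let g : MvPolynomial (Fin 3) K := ∑ s ∈ f.support.filter (fun s => ¬ V s), monomial s (f.coeff s)
  have hc : ∀ s, g.coeff s = if V s then 0 else f.coeff s := by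
    intro s
    simp only [g, coeff_sum, coeff_monomial, Finset.sum_ite_eq', Finset.mem_filter, mem_support_iff]
    by_cases h : V s <;> by_cases h' : f.coeff s = 0 <;> simp [h, h']
  refine ⟨g, (hQ _).2 fun s hs => ?_, fun s hs hV => ?_⟩
  · by_contra h
    simp [hc, h] at hs
  · simp [hc, hV] at hs

/-- Leading monomials multiply, so some monomial of `f * g` is a product of monomials of `f` and
`g`. Only leading monomials are controlled, which suffices once `f` and `g` are reduced. -/
theorem exists_add_mem_support {f g : MvPolynomial (Fin 3) K} (hf : f ≠ 0) (hg : g ≠ 0) :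
    ∃ s ∈ f.support, ∃ t ∈ g.support, s + t ∈ (f * g).support := by
  let m : MonomialOrder (Fin 3) := MonomialOrder.lex
  refine ⟨m.degree f, m.degree_mem_support hf, m.degree g, m.degree_mem_support hg, ?_⟩
  rw [← m.degree_mul hf hg]
  exact m.degree_mem_support (mul_ne_zero hf hg)

theorem isPrime_span_X (T : Set (Fin 3)) :
    (Ideal.span (X '' T : Set (MvPolynomial (Fin 3) K))).IsPrime := by
  have hM := isMonomialFor_span_X (K := K) T
  refine ⟨fun h => ?_, fun {f g} hfg => ?_⟩
  · have h1 := (monomial_mem_iff hM 0).1 (h ▸ Submodule.mem_top)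
    simp at h1
  · by_contra! hc
    obtain ⟨f', hf, hf'⟩ := exists_reduced hM f
    obtain ⟨g', hg, hg'⟩ := exists_reduced hM g
    have hf0 : f' ≠ 0 := by rintro rfl; exact hc.1 (by simpa using hf)
    have hg0 : g' ≠ 0 := by rintro rfl; exact hc.2 (by simpa using hg)
    have hmem : f' * g' ∈ Ideal.span (X '' T : Set (MvPolynomial (Fin 3) K)) := by
      have : f' * g' = f * g - (f - f') * g - f' * (g - g') := by ring
      rw [this]
      exact sub_mem (sub_mem hfg (Ideal.mul_mem_right _ _ hf)) (Ideal.mul_mem_left _ _ hg)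
    obtain ⟨s, hs, t, ht, hst⟩ := exists_add_mem_support hf0 hg0
    obtain ⟨i, hi, h⟩ := (hM _).1 hmem _ hst
    have h1 : s i = 0 := by by_contra h0; exact hf' s hs ⟨i, hi, h0⟩
    have h2 : t i = 0 := by by_contra h0; exact hg' t ht ⟨i, hi, h0⟩
    simp [h1, h2] at h

/-- Over a Noetherian ring an associated prime of `R ⧸ Q` is the colon ideal `Q : f` of a single
element, with no radical. -/
theorem mem_ass_iff {Q P : Ideal (MvPolynomial (Fin 3) K)} :
    P ∈ associatedPrimes (MvPolynomial (Fin 3) K) (MvPolynomial (Fin 3) K ⧸ Q) ↔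
      P.IsPrime ∧ ∃ f, ∀ g, g ∈ P ↔ g * f ∈ Q := by
  rw [AssociatedPrimes.mem_iff, isAssociatedPrime_iff]
  refine and_congr_right fun _ => ⟨?_, ?_⟩
  · rintro ⟨x, hx⟩
    obtain ⟨f, rfl⟩ := Ideal.Quotient.mk_surjective x
    refine ⟨f, fun g => ?_⟩
    rw [hx, Submodule.mem_colon_singleton, Submodule.mem_bot, ← Ideal.Quotient.eq_zero_iff_mem,
      map_mul]
    rfl
  · rintro ⟨f, hf⟩
    refine ⟨Ideal.Quotient.mk Q f, ?_⟩
    ext g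
    rw [hf, Submodule.mem_colon_singleton, Submodule.mem_bot, ← Ideal.Quotient.eq_zero_iff_mem,
      map_mul]
    rfl

/-- If the monomial with exponent `m` is multiplied into `Q` exactly by the monomials divisible by
some variable indexed by `T`, then its annihilator modulo `Q` is the prime generated by these
variables. -/
theorem span_mem_ass {Q : Ideal (MvPolynomial (Fin 3) K)} {V : (Fin 3 →₀ ℕ) → Prop}
    (hQ : IsMonomialFor Q V) (T : Set (Fin 3)) (m : Fin 3 →₀ ℕ)
    (h : ∀ s, V (s + m) ↔ ∃ i ∈ T, s i ≠ 0) :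
    Ideal.span (X '' T) ∈
      associatedPrimes (MvPolynomial (Fin 3) K) (MvPolynomial (Fin 3) K ⧸ Q) := by
  rw [mem_ass_iff]
  refine ⟨isPrime_span_X T, monomial m 1, fun g => ?_⟩
  rw [isMonomialFor_span_X T, hQ]
  constructor
  · intro hg s hs
    rw [mem_support_iff, coeff_mul_monomial'] at hs
    split_ifs at hs with hms
    · have := (h (s - m)).2 (hg (s - m) (by simpa using hs))
      rwa [tsub_add_cancel_of_le hms] at this
    · exact absurd rfl hs
  · intro hg s hs
    refine (h s).1 (hg _ ?_)
    rw [mem_support_iff, coeff_mul_monomial]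
    simpa using hs

/-! ### Monomials in the powers of `I` -/

theorem span_pow_le (n : ℕ) :
    (Ideal.span {(X 0 * X 1) ^ 2, (X 0 * X 2) ^ 2, (X 1 * X 2) ^ 2} :
      Ideal (MvPolynomial (Fin 3) K)) ^ n ≤
      Ideal.span ((fun s => monomial s (1 : K)) '' {s | ExpPow n s}) := by
  induction n with
  | zero =>
    rw [pow_zero, Ideal.one_eq_top, top_le_iff, Ideal.eq_top_iff_one]
    exact Ideal.subset_span ⟨0, by simp [ExpPow], rfl⟩
  | succ n ih =>
    rw [pow_succ]
    refine (Ideal.mul_mono_left ih).trans ?_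
    rw [Ideal.span_mul_span', Ideal.span_le]
    rintro _ ⟨_, ⟨s, hs, rfl⟩, b, hb, rfl⟩
    have key : ∃ t : Fin 3 →₀ ℕ, b = monomial t 1 ∧ ExpPow (n + 1) (s + t) := by
      obtain ⟨h1, h2, h3, h4⟩ := hs
      rcases hb with rfl | rfl | rfl
      · refine ⟨Finsupp.single 0 2 + Finsupp.single 1 2, ?_, ?_⟩
        · rw [mul_pow, X_pow_eq_monomial, X_pow_eq_monomial, monomial_mul, one_mul]
        · simp [ExpPow]; omega
      · refine ⟨Finsupp.single 0 2 + Finsupp.single 2 2, ?_, ?_⟩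
        · rw [mul_pow, X_pow_eq_monomial, X_pow_eq_monomial, monomial_mul, one_mul]
        · simp [ExpPow]; omega
      · refine ⟨Finsupp.single 1 2 + Finsupp.single 2 2, ?_, ?_⟩
        · rw [mul_pow, X_pow_eq_monomial, X_pow_eq_monomial, monomial_mul, one_mul]
        · simp [ExpPow]; omega
    obtain ⟨t, rfl, ht⟩ := key
    exact Ideal.subset_span ⟨s + t, ht, by simp [monomial_mul]⟩

theorem le_span_pow (n : ℕ) :
    Ideal.span ((fun s => monomial s (1 : K)) '' {s | ExpPow n s}) ≤
      (Ideal.span {(X 0 * X 1) ^ 2, (X 0 * X 2) ^ 2, (X 1 * X 2) ^ 2} :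
        Ideal (MvPolynomial (Fin 3) K)) ^ n := by
  set I : Ideal (MvPolynomial (Fin 3) K) :=
    Ideal.span {(X 0 * X 1) ^ 2, (X 0 * X 2) ^ 2, (X 1 * X 2) ^ 2} with hI
  rw [Ideal.span_le]
  rintro _ ⟨s, ⟨h1, h2, h3, h4⟩, rfl⟩
  -- A generator product `((xy)^2)^p ((xz)^2)^q ((yz)^2)^r` divides the monomial as soon as
  -- `p + q ≤ A`, `p + r ≤ B` and `q + r ≤ C`.
  obtain ⟨p, q, r, hn, hp, hq, hr⟩ : ∃ p q r : ℕ, p + q + r = n ∧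
      p + q ≤ s 0 / 2 ∧ p + r ≤ s 1 / 2 ∧ q + r ≤ s 2 / 2 :=
    ⟨n - (n - s 0 / 2) - (n - s 1 / 2), n - s 1 / 2, n - s 0 / 2, by omega, by omega, by omega,
      by omega⟩
  have hmem : ((X 0 * X 1) ^ 2) ^ p * ((X 0 * X 2) ^ 2) ^ q * ((X 1 * X 2) ^ 2) ^ r ∈ I ^ n := by
    rw [← hn, pow_add, pow_add]
    refine Ideal.mul_mem_mul (Ideal.mul_mem_mul ?_ ?_) ?_ <;>
      exact Ideal.pow_mem_pow (Ideal.subset_span (by simp)) _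
  obtain ⟨a, ha⟩ : ∃ a, s 0 = 2 * p + 2 * q + a := ⟨s 0 - (2 * p + 2 * q), by omega⟩
  obtain ⟨b, hb⟩ : ∃ b, s 1 = 2 * p + 2 * r + b := ⟨s 1 - (2 * p + 2 * r), by omega⟩
  obtain ⟨c, hc⟩ : ∃ c, s 2 = 2 * q + 2 * r + c := ⟨s 2 - (2 * q + 2 * r), by omega⟩
  have : (monomial s (1 : K)) = (X 0 ^ a * X 1 ^ b * X 2 ^ c) *
      (((X 0 * X 1) ^ 2) ^ p * ((X 0 * X 2) ^ 2) ^ q * ((X 1 * X 2) ^ 2) ^ r) := by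
    rw [monomial_eq, Finsupp.prod_fintype _ _ (by simp), Fin.prod_univ_three, ha, hb, hc, C_1]
    ring
  change monomial s (1 : K) ∈ I ^ n
  rw [this]
  exact Ideal.mul_mem_left _ _ hmem

/-- The explicit monomial description of `I ^ n`. -/
theorem mem_pow_iff (n : ℕ) :
    IsMonomialFor ((Ideal.span {(X 0 * X 1) ^ 2, (X 0 * X 2) ^ 2, (X 1 * X 2) ^ 2} :
      Ideal (MvPolynomial (Fin 3) K)) ^ n) (ExpPow n) := by
  rw [le_antisymm (span_pow_le n) (le_span_pow n)]
  refine isMonomialFor_span _ fun s t ⟨h1, h2, h3, h4⟩ hst => ?_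
  have h0 := hst 0
  have h1 := hst 1
  have h2 := hst 2
  refine ⟨?_, ?_, ?_, ?_⟩ <;> omega

/-! ### Upper bound on the associated primes -/

/-- An associated prime of `R ⧸ Q`, for `Q = I ^ n`, containing `X i` and `X j` but not `X k` is `(X i, X j)`.
The hypothesis `hV` is the description of the exponents of `I ^ n`, for an arbitrary
enumeration `i, j, k` of the variables. -/
theorem eq_of_not_mem {Q P : Ideal (MvPolynomial (Fin 3) K)} {V : (Fin 3 →₀ ℕ) → Prop}
    (hQ : IsMonomialFor Q V) (n : ℕ) (i j k : Fin 3) (hik : i ≠ k) (hjk : j ≠ k)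
    (hV : ∀ s, V s ↔ n ≤ s i / 2 + s j / 2 ∧ n ≤ s i / 2 + s k / 2 ∧ n ≤ s j / 2 + s k / 2 ∧
      2 * n ≤ s i / 2 + s j / 2 + s k / 2)
    (hP : P ∈ associatedPrimes (MvPolynomial (Fin 3) K) (MvPolynomial (Fin 3) K ⧸ Q))
    (hi : X i ∈ P) (hj : X j ∈ P) (hk : X k ∉ P) : P = Ideal.span (X '' {i, j}) := by
  obtain ⟨hprime, f, hf⟩ := mem_ass_iff.1 hP
  -- `J` plays the role of the ideal `(X i ^ 2, X j ^ 2) ^ n`.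
  let J := Ideal.span ((fun s => monomial s (1 : K)) ''
    {s : Fin 3 →₀ ℕ | n ≤ s i / 2 + s j / 2})
  have hJ : IsMonomialFor J (fun s => n ≤ s i / 2 + s j / 2) := by
    refine isMonomialFor_span _ fun s t h hst => ?_
    have h1 := hst i
    have h2 := hst j
    omega
  have hle : Ideal.span (X '' {i, j}) ≤ P := by
    rw [Ideal.span_le]
    rintro _ ⟨l, rfl | rfl, rfl⟩ <;> assumption
  have hfJ : f ∉ J := by
    intro hfJ
    refine hk (hprime.mem_of_pow_mem (2 * n) ((hf _).2 ((hQ _).2 fun s hs => ?_)))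
    rw [mem_support_iff, X_pow_eq_monomial, coeff_monomial_mul', one_mul] at hs
    split_ifs at hs with hks
    · have h1 := (hJ f).1 hfJ _ (mem_support_iff.2 hs)
      have h2 := hks k
      simp only [Finsupp.tsub_apply, Finsupp.single_apply, if_neg hik.symm, if_neg hjk.symm,
        if_true, Nat.sub_zero] at h1 h2
      rw [hV]
      omega
    · exact absurd rfl hs
  refine le_antisymm (fun g hg => ?_) hle
  by_contra hgn
  have hM := isMonomialFor_span_X (K := K) {i, j}
  obtain ⟨f', hff, hf'⟩ := exists_reduced hJ f
  obtain ⟨g', hgg, hg'⟩ := exists_reduced hM g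
  have hf0 : f' ≠ 0 := by rintro rfl; exact hfJ (by simpa using hff)
  have hg0 : g' ≠ 0 := by rintro rfl; exact hgn (by simpa using hgg)
  have hgP : g' ∈ P := by
    have := sub_mem hg (hle hgg)
    rwa [sub_sub_cancel] at this
  have hmem : f' * g' ∈ J := by
    have h1 : g' * f ∈ J := (hJ _).2 fun s hs => ((hV s).1 ((hQ _).1 ((hf _).1 hgP) s hs)).1
    have : f' * g' = g' * f - g' * (f - f') := by ring
    rw [this]
    exact sub_mem h1 (Ideal.mul_mem_left _ _ hff)
  obtain ⟨s, hs, t, ht, hst⟩ := exists_add_mem_support hf0 hg0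
  have h := (hJ _).1 hmem _ hst
  have h1 : t i = 0 := by by_contra h0; exact hg' t ht ⟨i, by simp, h0⟩
  have h2 : t j = 0 := by by_contra h0; exact hg' t ht ⟨j, by simp, h0⟩
  simp only [Finsupp.add_apply, h1, h2, add_zero] at h
  exact hf' s hs h

theorem span_pair (i j : Fin 3) :
    (Ideal.span {X i, X j} : Ideal (MvPolynomial (Fin 3) K)) = Ideal.span (X '' {i, j}) := by
  rw [Set.image_insert_eq, Set.image_singleton]

theorem span_triple :
    (Ideal.span {X 0, X 1, X 2} : Ideal (MvPolynomial (Fin 3) K)) =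
      Ideal.span (X '' {0, 1, 2}) := by
  rw [Set.image_insert_eq, Set.image_insert_eq, Set.image_singleton]

/-- A prime ideal containing all variables is generated by them. -/
theorem eq_span_triple {P : Ideal (MvPolynomial (Fin 3) K)} (hP : P.IsPrime)
    (h0 : X 0 ∈ P) (h1 : X 1 ∈ P) (h2 : X 2 ∈ P) :
    P = Ideal.span {X 0, X 1, X 2} := by
  rw [span_triple]
  have hM := isMonomialFor_span_X (K := K) {0, 1, 2}
  have hle : Ideal.span (X '' {0, 1, 2}) ≤ P := by
    rw [← span_triple, Ideal.span_le]
    rintro _ (rfl | rfl | rfl) <;> assumption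
  refine le_antisymm (fun g hg => ?_) hle
  have hgC : g - C (g.coeff 0) ∈ Ideal.span (X '' {0, 1, 2}) := by
    rw [hM]
    intro s hs
    by_contra! hc
    have hs0 : s = 0 := by
      ext l
      fin_cases l
      · exact hc 0 (by simp)
      · exact hc 1 (by simp)
      · exact hc 2 (by simp)
    subst hs0
    simp at hs
  have hCP : C (g.coeff 0) ∈ P := by
    have := sub_mem hg (hle hgC)
    rwa [sub_sub_cancel] at this
  have hz : g.coeff 0 = 0 := by
    by_contra hne
    exact hP.ne_top (Ideal.eq_top_of_isUnit_mem _ hCP ((isUnit_iff_ne_zero.2 hne).map C))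
  simpa [hz] using hgC

/-! ### Associated primes of the powers of `I` -/

theorem pairs_mem_ass (n : ℕ) (hn : 1 ≤ n) {Q : Ideal (MvPolynomial (Fin 3) K)}
    (hQ : IsMonomialFor Q (ExpPow n)) :
    ({Ideal.span {X 0, X 1}, Ideal.span {X 0, X 2}, Ideal.span {X 1, X 2}} :
      Set (Ideal (MvPolynomial (Fin 3) K))) ⊆
      associatedPrimes (MvPolynomial (Fin 3) K) (MvPolynomial (Fin 3) K ⧸ Q) := by
  rintro _ (rfl | rfl | rfl)
  · rw [span_pair]
    refine span_mem_ass hQ _ (Finsupp.single 0 (2 * n - 1) + Finsupp.single 1 1 +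
      Finsupp.single 2 (2 * n)) fun s => ?_
    simp [ExpPow]
    omega
  · rw [span_pair]
    refine span_mem_ass hQ _ (Finsupp.single 0 (2 * n - 1) + Finsupp.single 2 1 +
      Finsupp.single 1 (2 * n)) fun s => ?_
    simp [ExpPow]
    omega
  · rw [span_pair]
    refine span_mem_ass hQ _ (Finsupp.single 1 (2 * n - 1) + Finsupp.single 2 1 +
      Finsupp.single 0 (2 * n)) fun s => ?_
    simp [ExpPow]
    omega

theorem triple_mem_ass (n : ℕ) (hn : 2 ≤ n) {Q : Ideal (MvPolynomial (Fin 3) K)}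
    (hQ : IsMonomialFor Q (ExpPow n)) :
    Ideal.span {X 0, X 1, X 2} ∈
      associatedPrimes (MvPolynomial (Fin 3) K) (MvPolynomial (Fin 3) K ⧸ Q) := by
  rw [span_triple]
  refine span_mem_ass hQ _ (Finsupp.single 0 (2 * n - 1) + Finsupp.single 1 3 +
    Finsupp.single 2 (2 * n - 1)) fun s => ?_
  simp [ExpPow]
  omega

theorem ass_subset (n : ℕ) {Q : Ideal (MvPolynomial (Fin 3) K)}
    (hQ : IsMonomialFor Q (ExpPow n)) :
    associatedPrimes (MvPolynomial (Fin 3) K) (MvPolynomial (Fin 3) K ⧸ Q) ⊆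
      {Ideal.span {X 0, X 1}, Ideal.span {X 0, X 2}, Ideal.span {X 1, X 2},
        Ideal.span {X 0, X 1, X 2}} := by
  intro P hP
  obtain ⟨hprime, f, hf⟩ := mem_ass_iff.1 hP
  have hmem : ∀ i j : Fin 3, i ≠ j → X i ∈ P ∨ X j ∈ P := by
    intro i j hij
    refine hprime.mem_or_mem (hprime.mem_of_pow_mem (2 * n) ((hf _).2 ?_))
    refine Ideal.mul_mem_right _ _ ?_
    have : ((X i * X j) ^ (2 * n) : MvPolynomial (Fin 3) K) =
        monomial (Finsupp.single i (2 * n) + Finsupp.single j (2 * n)) 1 := by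
      rw [mul_pow, X_pow_eq_monomial, X_pow_eq_monomial, monomial_mul, one_mul]
    rw [this, monomial_mem_iff hQ]
    fin_cases i <;> fin_cases j <;> simp [ExpPow] at hij ⊢ <;> omega
  by_cases h0 : X 0 ∈ P
  · by_cases h1 : X 1 ∈ P
    · by_cases h2 : X 2 ∈ P
      · right; right; right
        exact eq_span_triple hprime h0 h1 h2
      · left
        rw [span_pair]
        exact eq_of_not_mem hQ n 0 1 2 (by decide) (by decide)
          (fun s => by simp only [ExpPow]) hP h0 h1 h2
    · right; left
      rw [span_pair]
      exact eq_of_not_mem hQ n 0 2 1 (by decide) (by decide)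
        (fun s => by simp only [ExpPow]; omega) hP h0
        ((hmem 1 2 (by decide)).resolve_left h1) h1
  · right; right; left
    rw [span_pair]
    exact eq_of_not_mem hQ n 1 2 0 (by decide) (by decide)
      (fun s => by simp only [ExpPow]; omega) hP
      ((hmem 0 1 (by decide)).resolve_left h0) ((hmem 0 2 (by decide)).resolve_left h0) h0

/-- The maximal ideal is not associated to `I`: an exponent vector that enters the exponent set
of `I` after any single unit step already lies in it. -/
theorem triple_notMem_ass {Q : Ideal (MvPolynomial (Fin 3) K)}
    (hQ : IsMonomialFor Q (ExpPow 1)) :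
    Ideal.span {X 0, X 1, X 2} ∉
      associatedPrimes (MvPolynomial (Fin 3) K) (MvPolynomial (Fin 3) K ⧸ Q) := by
  intro hP
  obtain ⟨hprime, f, hf⟩ := mem_ass_iff.1 hP
  refine hprime.ne_top ((Ideal.eq_top_iff_one _).2 ((hf 1).2 ?_))
  rw [one_mul, hQ]
  intro s hs
  have key : ∀ l : Fin 3, X l ∈ Ideal.span ({X 0, X 1, X 2} : Set (MvPolynomial (Fin 3) K)) →
      ExpPow 1 (Finsupp.single l 1 + s) := by
    intro l hl
    refine (hQ _).1 ((hf _).1 hl) _ ?_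
    rw [mem_support_iff, coeff_X_mul]
    exact mem_support_iff.1 hs
  have k0 := key 0 (Ideal.subset_span (by simp))
  have k1 := key 1 (Ideal.subset_span (by simp))
  have k2 := key 2 (Ideal.subset_span (by simp))
  simp [ExpPow] at k0 k1 k2 ⊢
  omega

end

open MvPolynomial in
theorem stmt8 {K : Type*} [Field K]
    (I : Ideal (MvPolynomial (Fin 3) K)) (hI : I = Ideal.span {(X 0 * X 1) ^ 2, (X 0 * X 2) ^ 2, (X 1 * X 2) ^ 2}) :
    associatedPrimes (MvPolynomial (Fin 3) K) (MvPolynomial (Fin 3) K ⧸ I) = {Ideal.span {X 0, X 1}, Ideal.span {X 0, X 2}, Ideal.span {X 1, X 2}} ∧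
    (∀ n : ℕ, 2 ≤ n → associatedPrimes (MvPolynomial (Fin 3) K) (MvPolynomial (Fin 3) K ⧸ I ^ n) =
      {Ideal.span {X 0, X 1}, Ideal.span {X 0, X 2}, Ideal.span {X 1, X 2}, Ideal.span {X 0, X 1, X 2}}) ∧
    astab I = 2 := by
  have hpow : ∀ n, IsMonomialFor (I ^ n) (ExpPow n) := fun n => hI ▸ mem_pow_iff n
  have hone : IsMonomialFor I (ExpPow 1) := pow_one I ▸ hpow 1
  have hall : ∀ n : ℕ, 2 ≤ n →
      associatedPrimes (MvPolynomial (Fin 3) K) (MvPolynomial (Fin 3) K ⧸ I ^ n) =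
      {Ideal.span {X 0, X 1}, Ideal.span {X 0, X 2}, Ideal.span {X 1, X 2},
        Ideal.span {X 0, X 1, X 2}} := by
    intro n hn
    refine (ass_subset n (hpow n)).antisymm ?_
    rintro P (h | h | h | rfl)
    · exact pairs_mem_ass n (by omega) (hpow n) (Or.inl h)
    · exact pairs_mem_ass n (by omega) (hpow n) (Or.inr (Or.inl h))
    · exact pairs_mem_ass n (by omega) (hpow n) (Or.inr (Or.inr h))
    · exact triple_mem_ass n hn (hpow n)
  refine ⟨?_, hall, ?_⟩
  · refine Set.Subset.antisymm (fun P hP => ?_) (pairs_mem_ass 1 le_rfl hone)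
    rcases ass_subset 1 hone hP with h | h | h | rfl
    · exact Or.inl h
    · exact Or.inr (Or.inl h)
    · exact Or.inr (Or.inr h)
    · exact absurd hP (triple_notMem_ass hone)
  · have h2 : (2 : ℕ) ∈ {n₀ : ℕ | 0 < n₀ ∧ ∀ n, n₀ ≤ n →
        associatedPrimes (MvPolynomial (Fin 3) K) (MvPolynomial (Fin 3) K ⧸ I ^ n) =
        associatedPrimes (MvPolynomial (Fin 3) K) (MvPolynomial (Fin 3) K ⧸ I ^ n₀)} :=
      ⟨by norm_num, fun n hn => by rw [hall n hn, hall 2 le_rfl]⟩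
    refine le_antisymm (Nat.sInf_le h2) (le_csInf ⟨2, h2⟩ ?_)
    rintro m ⟨hm, h⟩
    by_contra hlt
    obtain rfl : m = 1 := by omega
    refine triple_notMem_ass (hpow 1) ?_
    rw [← h 2 (by norm_num)]
    exact triple_mem_ass 2 le_rfl (hpow 2)
end

section
/- Let R = K[x,y,z] be a polynomial ring over a field K and I = ((xy)^2, (xz)^2, (yz)^2). Then Ass(R/\overline{I^n}) = {(x,y), (x,z), (y,z), (x,y,z)} for every integer n ≥ 1; in particular \overline{astab}(I) = 1. Moreover \overline{I} = ((xy)^2, (xz)^2, (yz)^2, xyz^2, xy^2z, x^2yz). -/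
/-!
The Newton polyhedron of `I = ((xy)², (xz)², (yz)²)` is cut out, inside the orthant, by
`a + b ≥ 2`, `a + c ≥ 2`, `b + c ≥ 2` and `a + b + c ≥ 4`.  Accordingly the integral closure of
`Iⁿ` is the intersection
`Jₙ = (x,y)^(2n) ∩ (x,z)^(2n) ∩ (y,z)^(2n) ∩ (x,y,z)^(4n)`
(`intCl_pow_eq`).  One inclusion holds because each of the four ideals is a valuation ideal of a
monomial valuation, hence integrally closed (`intCl_le_Q`); the other because the square of every
monomial of `Jₙ` lies in `I^(2n)` (`sq_mem_pow`).  For `n = 1` the minimal monomials of `Jₙ` are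
the six listed generators.

The four valuation ideals are primary, so the associated primes are among their radicals
(`exists_eq_of_mem_associatedPrimes`).  Each radical does occur, as the annihilator modulo `Jₙ` of
an explicit monomial: `x^(2n-1) z^(4n)` for `(x,y)`, similarly for the other pairs, and
`x^(2n-1) y^(2n-1) z` for `(x,y,z)` (`witness_spec`).
-/


open IsLocalRing

namespace SquareFreePairs

open MvPolynomial

variable {σ K : Type*} [Field K]

/-! ### Monomial valuations and their valuation ideals -/

/-- The monomial valuation with weights `w`: the least `w`-weight of a monomial of `f`
(and `⊤` for `f = 0`), computed in the power series ring, where it is known to be additive. -/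
noncomputable def ord (w : σ → ℕ) (f : MvPolynomial σ K) : ℕ∞ :=
  (f : MvPowerSeries σ K).weightedOrder w

lemma ord_mul (w : σ → ℕ) (f g : MvPolynomial σ K) : ord w (f * g) = ord w f + ord w g := by
  simp [ord, MvPowerSeries.weightedOrder_mul]

lemma ord_one (w : σ → ℕ) : ord w (1 : MvPolynomial σ K) = 0 := by
  simp [ord, MvPowerSeries.weightedOrder_one]

lemma ord_pow (w : σ → ℕ) (f : MvPolynomial σ K) (n : ℕ) : ord w (f ^ n) = n * ord w f := by
  induction n with
  | zero => simp [ord_one]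
  | succ n ih => rw [pow_succ, ord_mul, ih]; push_cast; ring

lemma le_ord_iff (w : σ → ℕ) (N : ℕ) (f : MvPolynomial σ K) :
    (N : ℕ∞) ≤ ord w f ↔ ∀ d, coeff d f ≠ 0 → N ≤ Finsupp.weight w d := by
  constructor
  · intro h d hd
    have := MvPowerSeries.weightedOrder_le w (f := (f : MvPowerSeries σ K)) (d := d)
      (by simpa using hd)
    exact_mod_cast h.trans this
  · intro h
    refine MvPowerSeries.nat_le_weightedOrder w fun d hd => ?_
    rw [coeff_coe]
    by_contra hne
    exact absurd (h d hne) (not_le.mpr hd)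

/-- The valuation ideal of all `f` with `ord w f ≥ N`. -/
noncomputable def Q (w : σ → ℕ) (N : ℕ) : Ideal (MvPolynomial σ K) where
  carrier := {f | (N : ℕ∞) ≤ ord w f}
  zero_mem' := by simp [ord]
  add_mem' {a b} ha hb := by
    have := MvPowerSeries.min_weightedOrder_le_add w (f := (a : MvPowerSeries σ K)) (g := b)
    simp only [Set.mem_ofPred_eq, ord, coe_add] at *
    exact (le_min ha hb).trans this
  smul_mem' c x hx := by
    simp only [Set.mem_ofPred_eq, smul_eq_mul, ord_mul] at *
    exact hx.trans le_add_self

lemma mem_Q {w : σ → ℕ} {N : ℕ} {f : MvPolynomial σ K} : f ∈ Q w N ↔ (N : ℕ∞) ≤ ord w f :=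
  Iff.rfl

lemma mem_Q_iff {w : σ → ℕ} {N : ℕ} {f : MvPolynomial σ K} :
    f ∈ Q w N ↔ ∀ d, coeff d f ≠ 0 → N ≤ Finsupp.weight w d :=
  le_ord_iff w N f

lemma Q_pow_le (w : σ → ℕ) (a n : ℕ) : (Q w a : Ideal (MvPolynomial σ K)) ^ n ≤ Q w (a * n) := by
  induction n with
  | zero => intro f _; simp [mem_Q]
  | succ n ih =>
    rw [pow_succ, Ideal.mul_le]
    intro f hf g hg
    have h1 := mem_Q.mp (ih hf)
    have h2 := mem_Q.mp hg
    rw [mem_Q, ord_mul, mul_add, mul_one]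
    push_cast at *
    exact add_le_add h1 h2

lemma Q_one_isPrime (w : σ → ℕ) : (Q w 1 : Ideal (MvPolynomial σ K)).IsPrime := by
  refine Ideal.isPrime_iff.mpr ⟨?_, ?_⟩
  · rw [Ideal.ne_top_iff_one, mem_Q, ord_one]; simp
  · intro f g h
    rw [mem_Q, ord_mul] at h
    simp only [mem_Q, Nat.cast_one, Order.one_le_iff_ne_zero] at *
    by_contra! h2
    simp [h2] at h

/-- Valuation ideals are integrally closed: comparing the orders of the two sides of an
equation of integral dependence bounds the order of its root from below. -/
lemma intCl_le_Q {w : σ → ℕ} {N : ℕ} {L : Ideal (MvPolynomial σ K)} (hL : L ≤ Q w N) :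
    intCl L ≤ Q w N := by
  refine Ideal.span_le.mpr ?_
  rintro x ⟨k, hk, a, ha, hx⟩
  by_contra hlt
  replace hlt : ord w x < N := not_le.mp fun h => hlt (mem_Q.mpr h)
  obtain ⟨v, hv⟩ := ENat.ne_top_iff_exists.mp hlt.ne_top
  rw [← hv, Nat.cast_lt] at hlt
  have key : x ^ k ∈ Q w (k * v + 1) := by
    rw [eq_neg_of_add_eq_zero_left hx]
    refine neg_mem (sum_mem fun i hi => ?_)
    have h1 := mem_Q.mp (Q_pow_le w N i (Ideal.pow_right_mono hL i (ha i hi)))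
    obtain ⟨hi1, hik⟩ := Finset.mem_Icc.mp hi
    rw [mem_Q, ord_mul, ord_pow, ← hv]
    refine le_trans ?_ (add_le_add_left h1 _)
    obtain ⟨m, rfl⟩ := Nat.exists_eq_add_of_le hik
    rw [Nat.add_sub_cancel_left]
    norm_cast
    nlinarith [Nat.mul_le_mul_right i hlt]
  rw [mem_Q, ord_pow, ← hv] at key
  norm_cast at key
  omega

/-! ### Associated primes of intersections of valuation ideals -/

lemma mem_colon_mk {R : Type*} [CommRing R] (J : Ideal R) (f g : R) :
    g ∈ (⊥ : Submodule R (R ⧸ J)).colon {Ideal.Quotient.mk J f} ↔ g * f ∈ J := by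
  rw [Submodule.mem_colon_singleton, Submodule.mem_bot, ← Ideal.Quotient.eq_zero_iff_mem, map_mul]
  rfl

/-- Each valuation ideal `Q w N` is primary with radical `Q w 1`, so an associated prime of a finite
intersection of such ideals is one of these radicals. -/
lemma exists_eq_of_mem_associatedPrimes [Finite σ] {ι : Type*} [Fintype ι] (w : ι → σ → ℕ)
    (N : ι → ℕ) {P : Ideal (MvPolynomial σ K)}
    (hP : P ∈ associatedPrimes _ (MvPolynomial σ K ⧸ (⨅ i, Q (w i) (N i) : Ideal _))) :
    ∃ i, P = Q (w i) 1 := by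
  obtain ⟨hprime, x, hx⟩ := Submodule.isAssociatedPrime_iff.mp hP
  obtain ⟨f, rfl⟩ := Ideal.Quotient.mk_surjective x
  have hmem : ∀ g, g ∈ P ↔ ∀ i, g * f ∈ Q (w i) (N i) := fun g => by
    rw [hx, mem_colon_mk, Ideal.mem_iInf]
  obtain ⟨i, hi⟩ : ∃ i, ∀ g, g * f ∈ Q (w i) (N i) → g ∈ P := by
    by_contra! h
    choose g hg hgP using h
    have : ∏ i, g i ∈ P := (hmem _).mpr fun i => by
      obtain ⟨c, hc⟩ := Finset.dvd_prod_of_mem g (Finset.mem_univ i)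
      rw [hc, mul_comm (g i), mul_assoc]
      exact Ideal.mul_mem_left _ _ (hg i)
    obtain ⟨i, -, hi⟩ := (Ideal.IsPrime.prod_mem_iff (hp := hprime)).mp this
    exact hgP i hi
  have hf : ¬ ((N i : ℕ∞) ≤ ord (w i) f) := fun h =>
    hprime.one_notMem (hi 1 (by rw [one_mul]; exact h))
  refine ⟨i, le_antisymm (fun g hg => ?_) (fun g hg => ?_)⟩
  · have h := mem_Q.mp ((hmem g).mp hg i)
    rw [ord_mul] at h
    rw [mem_Q, Nat.cast_one, Order.one_le_iff_ne_zero]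
    intro h0
    exact hf (by simpa [h0] using h)
  · refine hprime.mem_of_pow_mem (N i) (hi _ (Ideal.mul_mem_right _ _ ?_))
    simpa using Q_pow_le (w i) 1 (N i) (Ideal.pow_mem_pow hg _)

/-- A monomial witness: if multiplication by the monomial with exponent `e` carries exactly the
monomials of positive `w i₀`-weight into the intersection, then `Q (w i₀) 1` is the annihilator
of that monomial. -/
lemma mem_associatedPrimes_of_witness [Finite σ] {ι : Type*} (w : ι → σ → ℕ)
    (N : ι → ℕ) (i₀ : ι) (e : σ →₀ ℕ)
    (he : ∀ d, (∀ i, N i ≤ Finsupp.weight (w i) (d + e)) ↔ 1 ≤ Finsupp.weight (w i₀) d) :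
    Q (w i₀) 1 ∈ associatedPrimes (MvPolynomial σ K) (MvPolynomial σ K ⧸ (⨅ i, Q (w i) (N i) : Ideal _)) := by
  refine Submodule.isAssociatedPrime_iff.mpr
    ⟨Q_one_isPrime _, Ideal.Quotient.mk _ (monomial e 1), ?_⟩
  ext g
  rw [mem_colon_mk, Ideal.mem_iInf]
  simp only [mem_Q_iff]
  constructor
  · intro h i d hd
    rw [coeff_mul_monomial'] at hd
    split_ifs at hd with hle
    · rw [← tsub_add_cancel_of_le hle]
      exact (he _).mpr (h _ (by simpa using hd)) i
    · exact absurd rfl hd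
  · intro h d hd
    exact (he d).mp fun i => h i (d + e) (by simpa [coeff_mul_monomial] using hd)

/-! ### The ideal `((xy)², (xz)², (yz)²)` -/

/-- The weights defining the non-coordinate facets of the Newton polyhedron: the three pair sums
and the total degree. -/
def W : Fin 4 → Fin 3 → ℕ := ![![1, 1, 0], ![1, 0, 1], ![0, 1, 1], ![1, 1, 1]]

/-- The values at level `n` of the facet inequalities with weights `W`. -/
def B (n : ℕ) : Fin 4 → ℕ := ![2 * n, 2 * n, 2 * n, 4 * n]

lemma forall_B_le_iff (n : ℕ) (d : Fin 3 →₀ ℕ) :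
    (∀ i, B n i ≤ Finsupp.weight (W i) d) ↔
      2 * n ≤ d 0 + d 1 ∧ 2 * n ≤ d 0 + d 2 ∧ 2 * n ≤ d 1 + d 2 ∧
        4 * n ≤ d 0 + d 1 + d 2 := by
  simp [Fin.forall_fin_succ, B, W, Finsupp.weight_eq_sum, Fin.sum_univ_three]

/-- The exponent vector `(a, b, c)`. -/
noncomputable def expo (a b c : ℕ) : Fin 3 →₀ ℕ := Finsupp.equivFunOnFinite.symm ![a, b, c]

/-- The monomial ideal of the `n`-th multiple of the Newton polyhedron. -/
noncomputable def J (K : Type*) [Field K] (n : ℕ) : Ideal (MvPolynomial (Fin 3) K) :=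
  ⨅ i, Q (W i) (B n i)

lemma mem_J {n : ℕ} {f : MvPolynomial (Fin 3) K} :
    f ∈ J K n ↔ ∀ d, coeff d f ≠ 0 → 2 * n ≤ d 0 + d 1 ∧ 2 * n ≤ d 0 + d 2 ∧ 2 * n ≤ d 1 + d 2 ∧
        4 * n ≤ d 0 + d 1 + d 2 := by
  simp only [J, Ideal.mem_iInf, mem_Q_iff, ← forall_B_le_iff]
  exact ⟨fun h d hd i => h i d hd, fun h i d hd => h d hd i⟩

lemma monomial_eq_X (d : Fin 3 →₀ ℕ) (c : K) :
    monomial d c = C c * (X 0 ^ d 0 * X 1 ^ d 1 * X 2 ^ d 2) := by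
  rw [monomial_eq, Finsupp.prod_fintype _ _ (fun _ => pow_zero _), Fin.prod_univ_three]

lemma X_mem_J {n a b c : ℕ} (h1 : 2 * n ≤ a + b) (h2 : 2 * n ≤ a + c) (h3 : 2 * n ≤ b + c)
    (h4 : 4 * n ≤ a + b + c) : (X 0 ^ a * X 1 ^ b * X 2 ^ c : MvPolynomial (Fin 3) K) ∈ J K n := by
  have := monomial_eq_X (K := K) (expo a b c) 1
  simp only [expo, Finsupp.equivFunOnFinite_symm_apply_apply, map_one, one_mul] at this
  rw [show (X 0 ^ a * X 1 ^ b * X 2 ^ c : MvPolynomial (Fin 3) K) = _ from this.symm, mem_J]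
  intro d hd
  rw [coeff_monomial] at hd
  split_ifs at hd with h
  · subst h
    exact ⟨h1, h2, h3, h4⟩
  · exact absurd rfl hd

/-- To bound a monomial ideal from above it suffices to bound its monomials. -/
lemma J_le {n : ℕ} {L : Ideal (MvPolynomial (Fin 3) K)}
    (h : ∀ a b c, 2 * n ≤ a + b → 2 * n ≤ a + c → 2 * n ≤ b + c → 4 * n ≤ a + b + c →
      (X 0 ^ a * X 1 ^ b * X 2 ^ c : MvPolynomial (Fin 3) K) ∈ L) : J K n ≤ L := by
  intro f hf
  rw [mem_J] at hf
  rw [f.as_sum]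
  refine sum_mem fun d hd => ?_
  obtain ⟨h1, h2, h3, h4⟩ := hf d (mem_support_iff.mp hd)
  rw [monomial_eq_X]
  exact Ideal.mul_mem_left _ _ (h _ _ _ h1 h2 h3 h4)

/-- The ideal `((xy)², (xz)², (yz)²)`. -/
noncomputable def I₀ (K : Type*) [Field K] : Ideal (MvPolynomial (Fin 3) K) :=
  Ideal.span {(X 0 * X 1) ^ 2, (X 0 * X 2) ^ 2, (X 1 * X 2) ^ 2}

lemma I₀_le_J : I₀ K ≤ J K 1 := by
  refine Ideal.span_le.mpr ?_
  rintro f (rfl | rfl | rfl)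
  · simpa [mul_pow] using X_mem_J (K := K) (n := 1) (a := 2) (b := 2) (c := 0)
  · simpa [mul_pow] using X_mem_J (K := K) (n := 1) (a := 2) (b := 0) (c := 2)
  · simpa [mul_pow] using X_mem_J (K := K) (n := 1) (a := 0) (b := 2) (c := 2)

/-- The square of a monomial of `J n` is divisible by a product of `2n` generators of `I₀`:
after shrinking the exponent to `(a, b, c)` with entries at most `2n` and sum `4n`, it is
`(xy)^(2(2n-c)) (xz)^(2(2n-b)) (yz)^(2(2n-a))`. -/
lemma sq_mem_pow {n a b c : ℕ} (h1 : 2 * n ≤ a + b) (h2 : 2 * n ≤ a + c) (h3 : 2 * n ≤ b + c)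
    (h4 : 4 * n ≤ a + b + c) :
    (X 0 ^ a * X 1 ^ b * X 2 ^ c : MvPolynomial (Fin 3) K) ^ 2 ∈ (I₀ K ^ n) ^ 2 := by
  obtain ⟨p, q, r, a', b', c', hn, ha, hb, hc⟩ : ∃ p q r a' b' c' : ℕ, n * 2 = p + q + r ∧
      a * 2 = 2 * p + 2 * q + a' ∧ b * 2 = 2 * p + 2 * r + b' ∧ c * 2 = 2 * q + 2 * r + c' := by
    obtain ⟨u, v, t, hu, hv, ht, hs, hu', hv', ht'⟩ : ∃ u v t : ℕ, u ≤ a ∧ v ≤ b ∧ t ≤ c ∧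
        u + v + t = 4 * n ∧ u ≤ 2 * n ∧ v ≤ 2 * n ∧ t ≤ 2 * n :=
      ⟨min a (2 * n), min b (2 * n), 4 * n - min a (2 * n) - min b (2 * n), by omega, by omega,
        by omega, by omega, by omega, by omega, by omega⟩
    exact ⟨2 * n - t, 2 * n - v, 2 * n - u, 2 * a - 2 * u, 2 * b - 2 * v, 2 * c - 2 * t,
      by omega, by omega, by omega, by omega⟩
  have hx : (X 0 * X 1) ^ 2 ∈ I₀ K := Ideal.subset_span (by simp)
  have hy : (X 0 * X 2) ^ 2 ∈ I₀ K := Ideal.subset_span (by simp)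
  have hz : (X 1 * X 2) ^ 2 ∈ I₀ K := Ideal.subset_span (by simp)
  have := Ideal.mul_mem_mul (Ideal.mul_mem_mul (Ideal.pow_mem_pow hx p) (Ideal.pow_mem_pow hy q))
    (Ideal.pow_mem_pow hz r)
  rw [← pow_add, ← pow_add, ← hn] at this
  rw [← pow_mul]
  convert Ideal.mul_mem_left _ (X 0 ^ a' * X 1 ^ b' * X 2 ^ c') this using 1
  rw [mul_pow, mul_pow, ← pow_mul, ← pow_mul, ← pow_mul, ha, hb, hc]
  ring

lemma mem_intCl_of_sq_mem {R : Type*} [CommRing R] {L : Ideal R} {x : R} (h : x ^ 2 ∈ L ^ 2) :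
    x ∈ intCl L := by
  refine Ideal.subset_span ⟨2, by norm_num, fun i => if i = 2 then - x ^ 2 else 0, ?_, ?_⟩
  · intro i _
    dsimp only
    split_ifs with hi
    · subst hi; exact neg_mem h
    · exact zero_mem _
  · simp

lemma intCl_pow_eq (n : ℕ) : intCl (I₀ K ^ n) = J K n := by
  refine le_antisymm (le_iInf fun i => intCl_le_Q ?_)
    (J_le fun a b c h1 h2 h3 h4 => mem_intCl_of_sq_mem (sq_mem_pow h1 h2 h3 h4))
  have h : I₀ K ≤ Q (W i) (B 1 i) := I₀_le_J.trans (iInf_le _ i)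
  refine (Ideal.pow_right_mono h n).trans ((Q_pow_le _ _ _).trans ?_)
  have : B 1 i * n = B n i := by fin_cases i <;> simp [B]
  rw [this]

lemma J_one_eq : J K 1 = Ideal.span {(X 0 * X 1) ^ 2, (X 0 * X 2) ^ 2, (X 1 * X 2) ^ 2,
      X 0 * X 1 * X 2 ^ 2, X 0 * X 1 ^ 2 * X 2, X 0 ^ 2 * X 1 * X 2} := by
  apply le_antisymm
  · refine J_le fun a b c h1 h2 h3 h4 => ?_
    have key : ∀ a' b' c' : ℕ, (X 0 ^ a' * X 1 ^ b' * X 2 ^ c' : MvPolynomial (Fin 3) K) ∈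
        ({(X 0 * X 1) ^ 2, (X 0 * X 2) ^ 2, (X 1 * X 2) ^ 2,
      X 0 * X 1 * X 2 ^ 2, X 0 * X 1 ^ 2 * X 2, X 0 ^ 2 * X 1 * X 2} :
        Set (MvPolynomial (Fin 3) K)) → a' ≤ a → b' ≤ b → c' ≤ c →
        (X 0 ^ a * X 1 ^ b * X 2 ^ c : MvPolynomial (Fin 3) K) ∈
        Ideal.span {(X 0 * X 1) ^ 2, (X 0 * X 2) ^ 2, (X 1 * X 2) ^ 2,
      X 0 * X 1 * X 2 ^ 2, X 0 * X 1 ^ 2 * X 2, X 0 ^ 2 * X 1 * X 2} :=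
      fun a' b' c' hm ha hb hc => Ideal.mem_of_dvd _
        (mul_dvd_mul (mul_dvd_mul (pow_dvd_pow _ ha) (pow_dvd_pow _ hb)) (pow_dvd_pow _ hc))
        (Ideal.subset_span hm)
    have hcases : (2 ≤ a ∧ 2 ≤ b) ∨ (2 ≤ a ∧ 2 ≤ c) ∨ (2 ≤ b ∧ 2 ≤ c) ∨
        (1 ≤ a ∧ 1 ≤ b ∧ 2 ≤ c) ∨ (1 ≤ a ∧ 2 ≤ b ∧ 1 ≤ c) ∨ (2 ≤ a ∧ 1 ≤ b ∧ 1 ≤ c) := by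
      omega
    rcases hcases with h | h | h | h | h | h
    · exact key 2 2 0 (by simp [mul_pow]) h.1 h.2 (Nat.zero_le _)
    · exact key 2 0 2 (by simp [mul_pow]) h.1 (Nat.zero_le _) h.2
    · exact key 0 2 2 (by simp [mul_pow]) (Nat.zero_le _) h.1 h.2
    · exact key 1 1 2 (by simp) h.1 h.2.1 h.2.2
    · exact key 1 2 1 (by simp) h.1 h.2.1 h.2.2
    · exact key 2 1 1 (by simp) h.1 h.2.1 h.2.2
  · refine Ideal.span_le.mpr ?_
    rintro f (rfl | rfl | rfl | rfl | rfl | rfl)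
    · simpa [mul_pow] using X_mem_J (K := K) (n := 1) (a := 2) (b := 2) (c := 0)
    · simpa [mul_pow] using X_mem_J (K := K) (n := 1) (a := 2) (b := 0) (c := 2)
    · simpa [mul_pow] using X_mem_J (K := K) (n := 1) (a := 0) (b := 2) (c := 2)
    · simpa using X_mem_J (K := K) (n := 1) (a := 1) (b := 1) (c := 2)
    · simpa using X_mem_J (K := K) (n := 1) (a := 1) (b := 2) (c := 1)
    · simpa using X_mem_J (K := K) (n := 1) (a := 2) (b := 1) (c := 1)

/-! ### The associated primes -/

lemma Q_one_eq_span [Fintype σ] (w : σ → ℕ) :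
    (Q w 1 : Ideal (MvPolynomial σ K)) = Ideal.span (X '' {i | w i ≠ 0}) := by
  ext f
  rw [mem_ideal_span_X_image, mem_Q_iff]
  simp only [mem_support_iff, Nat.one_le_iff_ne_zero, Finsupp.weight_eq_sum, ne_eq,
    Finset.sum_eq_zero_iff, Finset.mem_univ, true_imp_iff, not_forall, smul_eq_mul, mul_eq_zero,
    not_or, Set.mem_ofPred_eq]
  refine forall₂_congr fun d _ => exists_congr fun i => ?_
  tauto

lemma Q_W_one :
    (Q (W 0) 1 : Ideal (MvPolynomial (Fin 3) K)) = Ideal.span {X 0, X 1} ∧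
    (Q (W 1) 1 : Ideal (MvPolynomial (Fin 3) K)) = Ideal.span {X 0, X 2} ∧
    (Q (W 2) 1 : Ideal (MvPolynomial (Fin 3) K)) = Ideal.span {X 1, X 2} ∧
    (Q (W 3) 1 : Ideal (MvPolynomial (Fin 3) K)) = Ideal.span {X 0, X 1, X 2} := by
  have h0 : {i | W 0 i ≠ 0} = {0, 1} := by ext i; fin_cases i <;> simp [W]
  have h1 : {i | W 1 i ≠ 0} = {0, 2} := by ext i; fin_cases i <;> simp [W]
  have h2 : {i | W 2 i ≠ 0} = {1, 2} := by ext i; fin_cases i <;> simp [W]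
  have h3 : {i | W 3 i ≠ 0} = {0, 1, 2} := by ext i; fin_cases i <;> simp [W]
  simp only [Q_one_eq_span, h0, h1, h2, h3, Set.image_insert_eq, Set.image_singleton, and_self]

/-- Exponents of monomials whose annihilators modulo `J n` are the four primes. -/
noncomputable def witness (n : ℕ) : Fin 4 → (Fin 3 →₀ ℕ) :=
  ![expo (2 * n - 1) 0 (4 * n), expo (2 * n - 1) (4 * n) 0, expo (4 * n) (2 * n - 1) 0,
    expo (2 * n - 1) (2 * n - 1) 1]

lemma witness_spec {n : ℕ} (hn : 1 ≤ n) (i : Fin 4) (d : Fin 3 →₀ ℕ) :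
    (∀ j, B n j ≤ Finsupp.weight (W j) (d + witness n i)) ↔ 1 ≤ Finsupp.weight (W i) d := by
  rw [forall_B_le_iff]
  fin_cases i <;>
    simp [witness, expo, W, Finsupp.weight_eq_sum, Fin.sum_univ_three] <;> omega

lemma associatedPrimes_eq {n : ℕ} (hn : 1 ≤ n) :
    associatedPrimes (MvPolynomial (Fin 3) K) (MvPolynomial (Fin 3) K ⧸ intCl (I₀ K ^ n)) =
      {Ideal.span {X 0, X 1}, Ideal.span {X 0, X 2}, Ideal.span {X 1, X 2},
        Ideal.span {X 0, X 1, X 2}} := by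
  obtain ⟨h0, h1, h2, h3⟩ := Q_W_one (K := K)
  rw [intCl_pow_eq, ← h0, ← h1, ← h2, ← h3]
  ext P
  simp only [Set.mem_insert_iff, Set.mem_singleton_iff]
  constructor
  · intro hP
    obtain ⟨i, rfl⟩ := exists_eq_of_mem_associatedPrimes W (B n) hP
    fin_cases i <;> simp
  · have h : ∀ i, Q (W i) 1 ∈ associatedPrimes _ (MvPolynomial (Fin 3) K ⧸ J K n) :=
      fun i => mem_associatedPrimes_of_witness W (B n) i (witness n i) (witness_spec hn i)
    rintro (rfl | rfl | rfl | rfl)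
    exacts [h 0, h 1, h 2, h 3]

end SquareFreePairs

open MvPolynomial in
theorem stmt9 {K : Type*} [Field K]
    (I : Ideal (MvPolynomial (Fin 3) K)) (hI : I = Ideal.span {(X 0 * X 1) ^ 2, (X 0 * X 2) ^ 2, (X 1 * X 2) ^ 2}) :
    (∀ n : ℕ, 1 ≤ n → associatedPrimes (MvPolynomial (Fin 3) K) (MvPolynomial (Fin 3) K ⧸ intCl (I ^ n)) =
      {Ideal.span {X 0, X 1}, Ideal.span {X 0, X 2}, Ideal.span {X 1, X 2}, Ideal.span {X 0, X 1, X 2}}) ∧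
    astabBar I = 1 ∧
    intCl I = Ideal.span {(X 0 * X 1) ^ 2, (X 0 * X 2) ^ 2, (X 1 * X 2) ^ 2,
      X 0 * X 1 * X 2 ^ 2, X 0 * X 1 ^ 2 * X 2, X 0 ^ 2 * X 1 * X 2} := by
  obtain rfl : I = SquareFreePairs.I₀ K := hI
  refine ⟨fun n hn => SquareFreePairs.associatedPrimes_eq hn, ?_, ?_⟩
  · refine le_antisymm (Nat.sInf_le ⟨one_pos, fun n hn => ?_⟩)
      (le_csInf ⟨1, one_pos, fun n hn => ?_⟩ fun m hm => hm.1) <;>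
    rw [SquareFreePairs.associatedPrimes_eq hn, SquareFreePairs.associatedPrimes_eq le_rfl]
  · have h := SquareFreePairs.intCl_pow_eq (K := K) 1
    rw [pow_one] at h
    rw [h, SquareFreePairs.J_one_eq]
end

section
/- Let R = K[x,y,z] be a polynomial ring over a field K, c a positive integer, and I = (x^{2c+2}, xy^{2c}z, y^{2c+2}z). Then I^n : I = I^{n-1} for every integer n ≥ 1 (with I^0 = R); consequently Ass(R/I^n) ⊆ Ass(R/I^{n+1}) for all n ≥ 1. -/
/-!
Write `f = x^(2c+2)`, `g = x y^(2c) z`, `h = y^(2c+2) z`. The ideal `I` is monomial, so `I ^ n` is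
spanned by the monomials `f^i g^j h^k` with `i + j + k = n`, and a polynomial lies in `I ^ n` exactly
when each of its monomials is divisible by one of these. In fact `I ^ (n+1) : (f, g) = I ^ n`, which
gives the colon equality. By the above this only has to be checked on monomials `m = x^a y^b z^e`,
where it is the combinatorial lemma `DivPow.of_mul`. If the products dividing `m f` and `m g` are
`f^i g^j h^k` and `f^u g^v h^w`, one is done by cancelling a factor unless `i = v = 0`. In that case
`e ≥ n + 1`, so `z` plays no role. If `k ≥ 1` and `a ≥ j`, or if `j ≥ 1` and `a ≥ j - 1`, one can still
drop an `h` or a `g` from the first product. Otherwise `a ≤ j - 2`, which forces `n` to be large compared with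
`u`, and then `w ≥ c` and `m` is divisible by `f^(u-1) g^c h^(w-c)` (by `h^n` when `u = 0`).

For the associated primes: if `P = I ^ n : r` is prime then
`P = (I ^ (n+1) : r f) ∩ (I ^ (n+1) : r g)`, and a prime that is a finite intersection of ideals equals
one of them.
-/

open IsLocalRing

/-- The monomial `x^a y^b z^e` is divisible by some `f^i g^j h^k` with `i + j + k = n`, where
`f = x^(2c+2)`, `g = x y^(2c) z`, `h = y^(2c+2) z`. -/
def DivPow (c n a b e : ℕ) : Prop :=
  ∃ i j k : ℕ, i + j + k = n ∧ (2 * c + 2) * i + j ≤ a ∧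
    2 * c * j + (2 * c + 2) * k ≤ b ∧ j + k ≤ e

/-- If `m f` and `m g` are both divisible by a product of `n + 1` of the generators, then the
monomial `m = x^a y^b z^e` is divisible by a product of `n` of them. -/
theorem DivPow.of_mul {c n a b e : ℕ} (hf : DivPow c (n + 1) (a + (2 * c + 2)) b e)
    (hg : DivPow c (n + 1) (a + 1) (b + 2 * c) (e + 1)) : DivPow c n a b e := by
  obtain ⟨i, j, k, h1, h2, h3, h4⟩ := hf
  obtain ⟨u, v, w, g1, g2, g3, g4⟩ := hg
  rcases i with _ | i
  swap
  · exact ⟨i, j, k, by omega, by linarith, h3, h4⟩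
  rcases v with _ | v
  swap
  · exact ⟨u, v, w, by omega, by linarith, by linarith, by omega⟩
  simp only [mul_zero, zero_add, add_zero] at *
  by_cases hk : 1 ≤ k ∧ j ≤ a
  · obtain ⟨k, rfl⟩ := Nat.exists_eq_add_of_le' hk.1
    exact ⟨0, j, k, by omega, by omega, by linarith, by omega⟩
  by_cases hj : 1 ≤ j ∧ j ≤ a + 1
  · obtain ⟨j, rfl⟩ := Nat.exists_eq_add_of_le' hj.1
    exact ⟨0, j, k, by omega, by omega, by linarith, by omega⟩
  rcases u with _ | u
  · refine ⟨0, 0, n, by omega, by omega, ?_, by omega⟩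
    obtain rfl : w = n + 1 := by omega
    linarith
  -- Here `(2c+2)(u+1) ≤ a + 1 < j ≤ n + 1`, so `w = n - u` is at least `c`.
  have hw : c ≤ w := by
    have : (2 * c + 2) * (u + 1) ≤ n := by omega
    nlinarith [Nat.zero_le (c * u)]
  obtain ⟨w, rfl⟩ := Nat.exists_eq_add_of_le hw
  refine ⟨u, c, w, by omega, by linarith, by linarith, by omega⟩

/-- The exponent vector `(a, b, e)`. -/
noncomputable def expo (a b e : ℕ) : Fin 3 →₀ ℕ := Finsupp.equivFunOnFinite.symm ![a, b, e]

theorem expo_le {a b e : ℕ} {s : Fin 3 →₀ ℕ} :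
    expo a b e ≤ s ↔ a ≤ s 0 ∧ b ≤ s 1 ∧ e ≤ s 2 := by
  simp [Finsupp.le_def, Fin.forall_fin_succ, expo]

theorem expo_add (a b e a' b' e' : ℕ) :
    expo a b e + expo a' b' e' = expo (a + a') (b + b') (e + e') := by
  ext i; fin_cases i <;> simp [expo]

section

open MvPolynomial

variable {K : Type*} [Field K]

theorem monomial_expo (a b e : ℕ) :
    monomial (expo a b e) (1 : K) = X 0 ^ a * X 1 ^ b * X 2 ^ e := by
  rw [monomial_eq, Finsupp.prod_fintype _ _ (by simp)]
  simp [Fin.prod_univ_three, expo]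

/-- The exponent vectors of the products of `n` of the generators. -/
def powExps (c n : ℕ) : Set (Fin 3 →₀ ℕ) :=
  {s | ∃ i j k : ℕ, i + j + k = n ∧
    s = expo ((2 * c + 2) * i + j) (2 * c * j + (2 * c + 2) * k) (j + k)}

variable (K) in
/-- The ideal `(x^(2c+2), x y^(2c) z, y^(2c+2) z)`. -/
noncomputable def theIdeal (c : ℕ) : Ideal (MvPolynomial (Fin 3) K) :=
  Ideal.span {X 0 ^ (2 * c + 2), X 0 * X 1 ^ (2 * c) * X 2, X 1 ^ (2 * c + 2) * X 2}

theorem gens_eq (c : ℕ) :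
    ({X 0 ^ (2 * c + 2), X 0 * X 1 ^ (2 * c) * X 2, X 1 ^ (2 * c + 2) * X 2} :
      Set (MvPolynomial (Fin 3) K)) =
    {monomial (expo (2 * c + 2) 0 0) 1, monomial (expo 1 (2 * c) 1) 1,
      monomial (expo 0 (2 * c + 2) 1) 1} := by
  simp [monomial_expo]

theorem theIdeal_pow (c n : ℕ) :
    theIdeal K c ^ n = Ideal.span ((fun s => monomial s (1 : K)) '' powExps c n) := by
  induction n with
  | zero =>
    rw [pow_zero, Ideal.one_eq_top, eq_comm, Ideal.eq_top_iff_one]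
    refine Ideal.subset_span ⟨expo 0 0 0, ⟨0, 0, 0, by simp⟩, ?_⟩
    simp [monomial_expo]
  | succ n ih =>
    rw [pow_succ, ih, theIdeal, Ideal.span_mul_span', gens_eq]
    congr 1
    ext p
    simp only [Set.mem_mul, Set.mem_image, Set.mem_insert_iff, Set.mem_singleton_iff]
    constructor
    · rintro ⟨_, ⟨_, ⟨i, j, k, hn, rfl⟩, rfl⟩, _, rfl | rfl | rfl, rfl⟩
      · refine ⟨_, ⟨i + 1, j, k, by omega, rfl⟩, ?_⟩
        rw [monomial_mul, expo_add, mul_one]; congr 3 <;> ring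
      · refine ⟨_, ⟨i, j + 1, k, by omega, rfl⟩, ?_⟩
        rw [monomial_mul, expo_add, mul_one]; congr 3 <;> ring
      · refine ⟨_, ⟨i, j, k + 1, by omega, rfl⟩, ?_⟩
        rw [monomial_mul, expo_add, mul_one]; congr 3 <;> ring
    · rintro ⟨_, ⟨i, j, k, hn, rfl⟩, rfl⟩
      rcases i with _ | i
      · rcases j with _ | j
        · obtain rfl : k = n + 1 := by omega
          refine ⟨_, ⟨_, ⟨0, 0, n, by omega, rfl⟩, rfl⟩, _, Or.inr (Or.inr rfl), ?_⟩
          rw [monomial_mul, expo_add, mul_one]; congr 3 <;> ring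
        · refine ⟨_, ⟨_, ⟨0, j, k, by omega, rfl⟩, rfl⟩, _, Or.inr (Or.inl rfl), ?_⟩
          rw [monomial_mul, expo_add, mul_one]; congr 3 <;> ring
      · refine ⟨_, ⟨_, ⟨i, j, k, by omega, rfl⟩, rfl⟩, _, Or.inl rfl, ?_⟩
        rw [monomial_mul, expo_add, mul_one]; congr 3 <;> ring

theorem mem_theIdeal_pow {c n : ℕ} {p : MvPolynomial (Fin 3) K} :
    p ∈ theIdeal K c ^ n ↔ ∀ s ∈ p.support, DivPow c n (s 0) (s 1) (s 2) := by
  rw [theIdeal_pow, mem_ideal_span_monomial_image]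
  refine forall₂_congr fun s _ => ⟨?_, ?_⟩
  · rintro ⟨_, ⟨i, j, k, hn, rfl⟩, h⟩
    exact ⟨i, j, k, hn, expo_le.1 h⟩
  · rintro ⟨i, j, k, hn, h⟩
    exact ⟨_, ⟨i, j, k, hn, rfl⟩, expo_le.2 h⟩

theorem divPow_of_mul_mem {c n a b e : ℕ} {p : MvPolynomial (Fin 3) K}
    (h : p * monomial (expo a b e) 1 ∈ theIdeal K c ^ n) {s : Fin 3 →₀ ℕ} (hs : s ∈ p.support) :
    DivPow c n (s 0 + a) (s 1 + b) (s 2 + e) := by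
  have := mem_theIdeal_pow.1 h (s + expo a b e) (by
    rw [mem_support_iff, coeff_mul_monomial, mul_one]
    exact mem_support_iff.1 hs)
  simpa [expo] using this

/-- `I ^ (n+1) : (f, g) ⊆ I ^ n`. -/
theorem mem_of_mul_mem {c n : ℕ} {p : MvPolynomial (Fin 3) K}
    (hf : p * X 0 ^ (2 * c + 2) ∈ theIdeal K c ^ (n + 1))
    (hg : p * (X 0 * X 1 ^ (2 * c) * X 2) ∈ theIdeal K c ^ (n + 1)) :
    p ∈ theIdeal K c ^ n := by
  refine mem_theIdeal_pow.2 fun s hs => DivPow.of_mul ?_ ?_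
  · exact divPow_of_mul_mem (a := 2 * c + 2) (b := 0) (e := 0)
      (by simpa [monomial_expo] using hf) hs
  · exact divPow_of_mul_mem (a := 1) (b := 2 * c) (e := 1)
      (by simpa [monomial_expo] using hg) hs

end

/-- If `A = B : S` for a finite set `S`, then `R ⧸ A` embeds in a finite power of `R ⧸ B`, so its
associated primes are associated primes of `R ⧸ B`. -/
theorem associatedPrimes_subset_of_colon {R : Type*} [CommRing R] [IsNoetherianRing R]
    {A B : Ideal R} (S : Finset R) (h : ∀ r, r ∈ A ↔ ∀ s ∈ S, r * s ∈ B) :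
    associatedPrimes R (R ⧸ A) ⊆ associatedPrimes R (R ⧸ B) := by
  intro P hP
  obtain ⟨hp, x, hx⟩ := isAssociatedPrime_iff.1 (AssociatedPrimes.mem_iff.1 hP)
  obtain ⟨x, rfl⟩ := Ideal.Quotient.mk_surjective x
  have key : P = S.inf fun s =>
      Submodule.colon (⊥ : Submodule R (R ⧸ B)) {Ideal.Quotient.mk B (x * s)} := by
    ext r
    rw [hx, Submodule.mem_colon_singleton, Submodule.mem_finsetInf, Submodule.mem_bot,
      Algebra.smul_def, Ideal.Quotient.algebraMap_eq, ← map_mul, Ideal.Quotient.eq_zero_iff_mem, h]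
    refine forall₂_congr fun s _ => ?_
    rw [Submodule.mem_colon_singleton, Submodule.mem_bot, Algebra.smul_def,
      Ideal.Quotient.algebraMap_eq, ← map_mul, Ideal.Quotient.eq_zero_iff_mem, mul_assoc]
  obtain ⟨s, -, hs⟩ := Ideal.eq_inf_of_isPrime_inf (key ▸ hp)
  exact AssociatedPrimes.mem_iff.2 (isAssociatedPrime_iff.2 ⟨hp, _, key.trans hs.symm⟩)

open MvPolynomial in
theorem stmt10 {K : Type*} [Field K] (c : ℕ) (hc : 0 < c)
    (I : Ideal (MvPolynomial (Fin 3) K)) (hI : I = Ideal.span {X 0 ^ (2 * c + 2), X 0 * X 1 ^ (2 * c) * X 2, X 1 ^ (2 * c + 2) * X 2}) :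
    (∀ n : ℕ, 1 ≤ n → Submodule.colon (I ^ n) I = I ^ (n - 1)) ∧
    (∀ n : ℕ, 1 ≤ n → associatedPrimes (MvPolynomial (Fin 3) K) (MvPolynomial (Fin 3) K ⧸ I ^ n) ⊆
      associatedPrimes (MvPolynomial (Fin 3) K) (MvPolynomial (Fin 3) K ⧸ I ^ (n + 1))) := by
  change I = theIdeal K c at hI
  have hf : X 0 ^ (2 * c + 2) ∈ I := hI ▸ Ideal.subset_span (by simp)
  have hg : X 0 * X 1 ^ (2 * c) * X 2 ∈ I := hI ▸ Ideal.subset_span (by simp)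
  have mul_mem : ∀ n, ∀ p ∈ I ^ n, ∀ q ∈ I, p * q ∈ I ^ (n + 1) := fun n p hp q hq => by
    rw [pow_succ]; exact Ideal.mul_mem_mul hp hq
  subst hI
  constructor
  · intro n hn
    obtain ⟨n, rfl⟩ := Nat.exists_eq_add_of_le' hn
    ext p
    rw [Submodule.mem_colon, Nat.add_sub_cancel]
    exact ⟨fun h => mem_of_mul_mem (h _ hf) (h _ hg), fun h q hq => mul_mem n p h q hq⟩
  · intro n _
    classical
    refine associatedPrimes_subset_of_colon
      {X 0 ^ (2 * c + 2), X 0 * X 1 ^ (2 * c) * X 2} fun r => ?_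
    simp only [Finset.mem_insert, Finset.mem_singleton, forall_eq_or_imp, forall_eq]
    exact ⟨fun h => ⟨mul_mem n r h _ hf, mul_mem n r h _ hg⟩, fun h => mem_of_mul_mem h.1 h.2⟩
end

section
/- Let R = K[x,y,z] be a polynomial ring over a field K, c a positive integer, and I = (x^{2c+2}, xy^{2c}z, y^{2c+2}z). Then depth(R/I^n) = 1 for all integers n with 1 ≤ n ≤ c+1, and depth(R/I^n) = 0 for all n ≥ c+2; in particular dstab(I) = c+2 and astab(I) = c+2. -/
/-!
The ideal `I = (x^(2c+2), x y^(2c) z, y^(2c+2) z)` is monomial, so membership in `I ^ n` is a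
condition on exponents (`mem_theI_pow`). Polynomials with nonzero constant term are nonzerodivisors
modulo a monomial ideal (`coeff_zero_of_mul_mem`), hence every associated prime of `I ^ n` lies in
`m = (x, y, z)`. It contains `x`, and `y` or `z`, and there is no prime strictly between `(x, y)` or
`(x, z)` and `m` (`prime_eq`); so it is `(x, y)`, `(x, z)` or `m` (`mem_ass_cases`). The first two
are minimal over `I ^ n`, hence always associated.

The prime `m` is associated to `I ^ n` exactly when some monomial `u ∉ I ^ n` satisfies
`x u, y u, z u ∈ I ^ n`. For `n = c + 2 + t` such a monomial is
`x^((2c+2)(t+1)) y^(2(c+1)²-1) z^(c+1)` (`maxId_mem_ass`), and for `n ≤ c + 1` comparing exponents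
shows that there is none (`InPow.of_add`, `maxId_notMem_ass`).

If `m` is associated, every element of `m` is a zero divisor and the depth is `0`. Otherwise `y + z`
is regular, and no regular sequence in `m` has length two, because `m` is minimal over `I ^ n + (r)`
for each regular `r ∈ m` (`length_le_one`). Both stability indices follow.
-/

open IsLocalRing

namespace Stmt11

open MvPolynomial

/-! ### Monomial ideals and primes containing two of the variables -/

section Monomial

variable {K : Type*} [Field K]

/-- A polynomial `h` with nonzero constant term is a nonzerodivisor modulo a monomial ideal. The
ideal is encoded by the upward closed set `p` of the exponents of its monomials. If an exponent of
`f` fails `p`, a minimal such exponent `s` has coefficient `h₀ fₛ ≠ 0` in `h * f`. -/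
lemma coeff_zero_of_mul_mem {σ : Type*} [Finite σ] (p : (σ →₀ ℕ) → Prop)
    (hp : ∀ s t, s ≤ t → p s → p t) {h f : MvPolynomial σ K} (h0 : coeff 0 h ≠ 0)
    (hf : ∀ s ∈ (h * f).support, p s) : ∀ s ∈ f.support, p s := by
  classical
  intro s
  induction s using WellFoundedLT.induction with
  | ind s ih =>
    intro hs
    by_contra hps
    apply hps
    apply hf
    rw [mem_support_iff, coeff_mul, Finset.sum_eq_single (0, s)]
    · exact mul_ne_zero h0 (mem_support_iff.mp hs)
    · rintro ⟨a, b⟩ hab hne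
      rw [Finset.HasAntidiagonal.mem_antidiagonal] at hab
      simp only at hab
      have hbs : b ≤ s := hab ▸ le_add_self
      have hbne : b ≠ s := by
        rintro rfl
        apply hne
        simpa using hab
      -- a smaller exponent `b` of `f` satisfies `p` by induction, hence so would `s`
      have : coeff b f = 0 := by
        by_contra hb
        exact hps (hp b s hbs (ih b (lt_of_le_of_ne hbs hbne) (mem_support_iff.mpr hb)))
      simp [this]
    · intro hn
      simp at hn

/-- The homogeneous maximal ideal `(x, y, z)` of `K[x, y, z]`. -/
noncomputable abbrev maxId (K : Type*) [Field K] : Ideal (MvPolynomial (Fin 3) K) :=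
  Ideal.span {X 0, X 1, X 2}

lemma mem_maxId {f : MvPolynomial (Fin 3) K} : f ∈ maxId K ↔ coeff 0 f = 0 := by
  have : maxId K = Ideal.span (X '' Set.univ) := by
    rw [maxId]
    congr 1
    ext x
    simp only [Set.mem_insert_iff, Set.mem_singleton_iff, Set.mem_image, Set.mem_univ, true_and,
      Fin.exists_fin_succ, IsEmpty.exists_iff, or_false]
    simp [eq_comm]
  rw [this, mem_ideal_span_X_image]
  constructor
  · intro h
    by_contra h0
    obtain ⟨i, -, hi⟩ := h 0 (mem_support_iff.mpr h0)
    simp at hi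
  · intro h m hm
    by_contra! hc
    have : m = 0 := by
      ext i
      simpa using hc i (Set.mem_univ i)
    subst this
    exact mem_support_iff.mp hm h

instance maxId_isPrime : (maxId K).IsPrime := by
  have : maxId K = RingHom.ker (constantCoeff (σ := Fin 3) (R := K)) := by
    ext f
    rw [mem_maxId, RingHom.mem_ker, constantCoeff_eq]
  rw [this]
  exact RingHom.ker_isPrime _

/-- A polynomial without pure powers of `X j` (the constant included) lies in the ideal generated
by the two other variables. -/
lemma mem_coordId {i j : Fin 3} (hj : j ≠ 0) (hij : j ≠ i)
    (hall : ∀ t : Fin 3, t = 0 ∨ t = i ∨ t = j) {f : MvPolynomial (Fin 3) K}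
    (hf : ∀ k, coeff (Finsupp.single j k) f = 0) :
    f ∈ Ideal.span {(X 0 : MvPolynomial (Fin 3) K), X i} := by
  have : ({X 0, X i} : Set (MvPolynomial (Fin 3) K)) = X '' {0, i} := by
    simp [Set.image_pair]
  rw [this, mem_ideal_span_X_image]
  intro m hm
  by_contra! hc
  have : m = Finsupp.single j (m j) := by
    ext t
    rcases hall t with rfl | rfl | rfl
    · simp [hc 0 (by simp), hj]
    · simp [hc t (by simp), hij]
    · simp
  apply mem_support_iff.mp hm
  rw [this]
  exact hf _

/-- There is no prime strictly between `(X 0, X i)` and the maximal ideal. If such a prime `P` omits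
`X j`, then modulo `X 0, X i` every `g ∈ P` is a polynomial in `X j` without constant term; dividing
by `X j` stays in `P`, so all its coefficients vanish. -/
lemma prime_eq {i j : Fin 3} (hj : j ≠ 0) (hij : j ≠ i)
    (hall : ∀ t : Fin 3, t = 0 ∨ t = i ∨ t = j) {P : Ideal (MvPolynomial (Fin 3) K)}
    (hP : P.IsPrime) (h0 : X 0 ∈ P) (hi : X i ∈ P) (hPm : P ≤ maxId K) :
    P = Ideal.span {X 0, X i} ∨ P = maxId K := by
  have hXall : X j ∈ P → ∀ t : Fin 3, (X t : MvPolynomial (Fin 3) K) ∈ P := by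
    intro hX t
    rcases hall t with rfl | rfl | rfl <;> assumption
  by_cases hXj : X j ∈ P
  · right
    refine le_antisymm hPm ?_
    rw [Ideal.span_le]
    rintro x (rfl | rfl | rfl) <;> exact hXall hXj _
  left
  refine le_antisymm ?_ ?_
  · have key : ∀ k, ∀ g ∈ P, coeff (Finsupp.single j k) g = 0 := by
      intro k
      induction k with
      | zero =>
        intro g hg
        simpa using mem_maxId.mp (hPm hg)
      | succ k ih =>
        intro g hg
        obtain ⟨a, b, h, rfl⟩ : ∃ a b h, g = X 0 * a + X i * b + X j * h := by
          have hle : maxId K ≤ Ideal.span {X 0, X i, X j} := by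
            rw [Ideal.span_le]
            have : ∀ t : Fin 3, (X t : MvPolynomial (Fin 3) K) ∈
                Ideal.span ({X 0, X i, X j} : Set (MvPolynomial (Fin 3) K)) := by
              intro t
              apply Ideal.subset_span
              rcases hall t with rfl | rfl | rfl <;> simp
            rintro x (rfl | rfl | rfl) <;> exact this _
          obtain ⟨a, b, h, e⟩ := Submodule.mem_span_triple.mp (hle (hPm hg))
          refine ⟨a, b, h, ?_⟩
          rw [← e]
          simp only [smul_eq_mul]
          ring
        have hh : h ∈ P := by
          have h1 : X j * h ∈ P := by
            rwa [Ideal.add_mem_iff_right] at hg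
            exact P.add_mem (P.mul_mem_right _ h0) (P.mul_mem_right _ hi)
          exact (hP.mem_or_mem h1).resolve_left hXj
        have e : Finsupp.single j (k + 1) = Finsupp.single j 1 + Finsupp.single j k := by
          rw [← Finsupp.single_add, add_comm]
        rw [coeff_add, coeff_add, coeff_X_mul', coeff_X_mul', if_neg (by simp [hj.symm]),
          if_neg (by simp [hij.symm]), e, coeff_X_mul, ih h hh]
        simp
    exact fun g hg => mem_coordId hj hij hall fun k => key k g hg
  · rw [Ideal.span_le]
    rintro x (rfl | rfl) <;> assumption

/-- The kernel of the substitution `X 0, X i ↦ 0` onto `K[X j]` is a prime to which `prime_eq`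
applies, so it is `(X 0, X i)`. -/
lemma coordId_isPrime {i j : Fin 3} (hj : j ≠ 0) (hij : j ≠ i)
    (hall : ∀ t : Fin 3, t = 0 ∨ t = i ∨ t = j) :
    (Ideal.span {(X 0 : MvPolynomial (Fin 3) K), X i}).IsPrime ∧
      X j ∉ Ideal.span {(X 0 : MvPolynomial (Fin 3) K), X i} := by
  let φ : MvPolynomial (Fin 3) K →ₐ[K] Polynomial K :=
    aeval fun t => if t = j then Polynomial.X else 0
  have hφ : ∀ t, φ (X t) = if t = j then Polynomial.X else 0 := fun t => aeval_X _ _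
  have hker := RingHom.ker_isPrime φ
  have hjk : X j ∉ RingHom.ker φ := by simp [RingHom.mem_ker, hφ]
  have hle : RingHom.ker φ ≤ maxId K := by
    intro f hf
    rw [RingHom.mem_ker] at hf
    rw [mem_maxId]
    have : (Polynomial.aeval (0 : K)).comp φ = aeval (fun _ => (0 : K)) := by
      ext t
      simp [hφ]
      split_ifs <;> simp
    have h2 := DFunLike.congr_fun this f
    rw [AlgHom.comp_apply, hf, map_zero] at h2
    have h3 : aeval (fun _ : Fin 3 => (0 : K)) f = constantCoeff f := by
      simp [aeval_zero']
    rw [h3, constantCoeff_eq] at h2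
    exact h2.symm
  rcases prime_eq hj hij hall hker (by simp [RingHom.mem_ker, hφ, hj.symm])
    (by simp [RingHom.mem_ker, hφ, hij.symm]) hle with h | h
  · rw [← h]
    exact ⟨hker, hjk⟩
  · exfalso
    apply hjk
    rw [h, mem_maxId]
    simp

end Monomial

/-! ### The exponents of the monomials of the powers -/

section Exponents

/-- `x ^ s 0 * y ^ s 1 * z ^ s 2` is divisible by a product of `n` of the generators `x^(2c+2)`,
`x y^(2c) z`, `y^(2c+2) z`, used `i`, `j`, `k` times respectively. -/
def InPow (c n : ℕ) (s : Fin 3 →₀ ℕ) : Prop :=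
  ∃ i j k, i + j + k = n ∧ (2 * c + 2) * i + j ≤ s 0 ∧ 2 * c * j + (2 * c + 2) * k ≤ s 1 ∧
    j + k ≤ s 2

lemma InPow.mono {c n : ℕ} (s t : Fin 3 →₀ ℕ) (hst : s ≤ t) : InPow c n s → InPow c n t := by
  rintro ⟨i, j, k, h, h0, h1, h2⟩
  exact ⟨i, j, k, h, h0.trans (hst 0), h1.trans (hst 1), h2.trans (hst 2)⟩

/-- For `n ≤ c + 1`, no monomial outside `I ^ n` is multiplied into `I ^ n` by both `y` and `z`. If
`z * u` needs `j + k = s 2 + 1` generators divisible by `z`, then `y * u` forces one more factor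
`x^(2c+2)`, and the `y`-exponent suffices for `u` to be divisible by
`(x^(2c+2))^(i+1) * (y^(2c+2) * z)^(s 2)`. -/
lemma InPow.of_add {c n : ℕ} (hn : n ≤ c + 1) {s : Fin 3 →₀ ℕ}
    (hy : InPow c n (Finsupp.single 1 1 + s)) (hz : InPow c n (Finsupp.single 2 1 + s)) :
    InPow c n s := by
  obtain ⟨i, j, k, h, h0, h1, h2⟩ := hz
  obtain ⟨i', j', k', h', h0', h1', h2'⟩ := hy
  simp at h0 h1 h2 h0' h1' h2'
  by_cases hjk : j + k ≤ s 2
  · exact ⟨i, j, k, h, h0, h1, hjk⟩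
  have hi : i + 1 ≤ i' := by omega
  have ha : (2 * c + 2) * (i + 1) ≤ (2 * c + 2) * i' := Nat.mul_le_mul_left _ hi
  have he : j + k = s 2 + 1 := by omega
  have hb : (2 * c + 2) * (j + k) = (2 * c + 2) * (s 2 + 1) := by rw [he]
  refine ⟨i + 1, 0, s 2, by omega, by omega, ?_, by omega⟩
  -- `2c·j + (2c+2)k = (2c+2)(s 2 + 1) - 2j` and `j ≤ n ≤ c + 1`.
  have hj : j ≤ c + 1 := by omega
  nlinarith

/-- The exponent of the monomial `x^((2c+2)(t+1)) y^(2(c+1)²-1) z^(c+1)`, which represents a nonzero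
socle element modulo `I ^ (c + 2 + t)`. -/
noncomputable def socExp (c t : ℕ) : Fin 3 →₀ ℕ :=
  Finsupp.single 0 ((2 * c + 2) * (t + 1)) +
    (Finsupp.single 1 ((2 * c + 2) * c + 2 * c + 1) + Finsupp.single 2 (c + 1))

lemma socExp_not_inPow (c t : ℕ) : ¬ InPow c (c + 2 + t) (socExp c t) := by
  rintro ⟨i, j, k, h, h0, h1, h2⟩
  simp [socExp] at h0 h1 h2
  have hi : i = t + 1 := by
    have h3 : t + 1 ≤ i := by omega
    have h4 : i ≤ t + 1 := Nat.le_of_mul_le_mul_left (by omega : (2 * c + 2) * i ≤ _) (by omega)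
    omega
  subst hi
  have hj : j = 0 := by omega
  subst hj
  have hk : k = c + 1 := by omega
  subst hk
  nlinarith

lemma socExp_add (c t : ℕ) (v : Fin 3) :
    InPow c (c + 2 + t) (Finsupp.single v 1 + socExp c t) := by
  fin_cases v
  -- as multiples of products of generators: `x u` uses `x y^(2c) z` once,
  -- `y u` uses only the pure ones, and `z u` uses `x y^(2c) z` to the power `c + 2`
  · refine ⟨t + 1, 1, c, by ring, ?_, ?_, ?_⟩ <;> simp [socExp] <;> nlinarith
  · refine ⟨t + 1, 0, c + 1, by ring, ?_, ?_, ?_⟩ <;> simp [socExp] <;> nlinarith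
  · refine ⟨t, c + 2, 0, by ring, ?_, ?_, ?_⟩ <;> simp [socExp] <;> nlinarith

end Exponents

/-! ### Membership in the powers of the ideal -/

section Powers

variable {K : Type*} [Field K]

/-- The ideal `(x^(2c+2), x y^(2c) z, y^(2c+2) z)` of `K[x, y, z]`. -/
noncomputable abbrev theI (K : Type*) [Field K] (c : ℕ) : Ideal (MvPolynomial (Fin 3) K) :=
  Ideal.span {X 0 ^ (2 * c + 2), X 0 * X 1 ^ (2 * c) * X 2, X 1 ^ (2 * c + 2) * X 2}

/-- The exponent of the product of `i`, `j`, `k` copies of the three generators. -/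
noncomputable def genExp (c i j k : ℕ) : Fin 3 →₀ ℕ :=
  Finsupp.single 0 ((2 * c + 2) * i + j) +
    (Finsupp.single 1 (2 * c * j + (2 * c + 2) * k) + Finsupp.single 2 (j + k))

lemma monomial_genExp (c i j k : ℕ) :
    monomial (genExp c i j k) (1 : K) = (X 0 ^ (2 * c + 2)) ^ i *
      (X 0 * X 1 ^ (2 * c) * X 2) ^ j * (X 1 ^ (2 * c + 2) * X 2) ^ k := by
  have : monomial (genExp c i j k) (1 : K) = X 0 ^ ((2 * c + 2) * i + j) *
      (X 1 ^ (2 * c * j + (2 * c + 2) * k) * X 2 ^ (j + k)) := by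
    simp [genExp, X_pow_eq_monomial, monomial_mul]
  rw [this]
  ring

/-- The exponents of the products of `n` generators. -/
def genSet (c n : ℕ) : Set (Fin 3 →₀ ℕ) :=
  {s | ∃ i j k, i + j + k = n ∧ s = genExp c i j k}

lemma theI_eq (c : ℕ) :
    theI K c = Ideal.span ((fun s => monomial s (1 : K)) '' genSet c 1) := by
  apply le_antisymm
  · rw [Ideal.span_le]
    rintro x (rfl | rfl | rfl) <;> apply Ideal.subset_span
    · exact ⟨genExp c 1 0 0, ⟨1, 0, 0, rfl, rfl⟩, by simp [monomial_genExp]⟩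
    · exact ⟨genExp c 0 1 0, ⟨0, 1, 0, rfl, rfl⟩, by simp [monomial_genExp]⟩
    · exact ⟨genExp c 0 0 1, ⟨0, 0, 1, rfl, rfl⟩, by simp [monomial_genExp]⟩
  · rw [Ideal.span_le]
    rintro x ⟨s, ⟨i, j, k, h, rfl⟩, rfl⟩
    simp only [monomial_genExp]
    have : (i = 1 ∧ j = 0 ∧ k = 0) ∨ (i = 0 ∧ j = 1 ∧ k = 0) ∨ (i = 0 ∧ j = 0 ∧ k = 1) := by
      omega
    rcases this with ⟨rfl, rfl, rfl⟩ | ⟨rfl, rfl, rfl⟩ | ⟨rfl, rfl, rfl⟩ <;>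
      apply Ideal.subset_span <;> simp

lemma theI_pow_eq (c n : ℕ) :
    theI K c ^ n = Ideal.span ((fun s => monomial s (1 : K)) '' genSet c n) := by
  apply le_antisymm
  · induction n with
    | zero =>
      rw [pow_zero, Ideal.one_eq_top, top_le_iff, Ideal.eq_top_iff_one]
      exact Ideal.subset_span ⟨genExp c 0 0 0, ⟨0, 0, 0, rfl, rfl⟩, by simp [monomial_genExp]⟩
    | succ n ih =>
      rw [pow_succ]
      refine (Ideal.mul_mono ih (theI_eq c).le).trans ?_
      rw [Ideal.span_mul_span', Ideal.span_le]
      rintro x ⟨_, ⟨_, ⟨i, j, k, h, rfl⟩, rfl⟩, _, ⟨_, ⟨i', j', k', h', rfl⟩, rfl⟩, rfl⟩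
      refine Ideal.subset_span ⟨genExp c (i + i') (j + j') (k + k'), ⟨_, _, _, ?_, rfl⟩, ?_⟩
      · omega
      · simp only [monomial_genExp]
        ring
  · rw [Ideal.span_le]
    rintro x ⟨s, ⟨i, j, k, rfl, rfl⟩, rfl⟩
    simp only [monomial_genExp, SetLike.mem_coe, pow_add (theI K c)]
    refine Ideal.mul_mem_mul (Ideal.mul_mem_mul ?_ ?_) ?_ <;> apply Ideal.pow_mem_pow <;>
      apply Ideal.subset_span <;> simp

lemma mem_theI_pow {c n : ℕ} {f : MvPolynomial (Fin 3) K} :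
    f ∈ theI K c ^ n ↔ ∀ s ∈ f.support, InPow c n s := by
  rw [theI_pow_eq, mem_ideal_span_monomial_image]
  refine forall₂_congr fun s _ => ?_
  constructor
  · rintro ⟨_, ⟨i, j, k, h, rfl⟩, hle⟩
    have h0 := hle 0
    have h1 := hle 1
    have h2 := hle 2
    simp [genExp] at h0 h1 h2
    exact ⟨i, j, k, h, h0, h1, h2⟩
  · rintro ⟨i, j, k, h, h0, h1, h2⟩
    refine ⟨_, ⟨i, j, k, h, rfl⟩, fun t => ?_⟩
    fin_cases t <;> simpa [genExp]

lemma monomial_mem_theI_pow {c n : ℕ} {s : Fin 3 →₀ ℕ} :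
    monomial s (1 : K) ∈ theI K c ^ n ↔ InPow c n s := by
  classical
  rw [mem_theI_pow, support_monomial, if_neg one_ne_zero]
  simp

end Powers

/-! ### Regular elements and associated primes of a quotient ring -/

section Quotient

variable {R : Type*} [CommRing R] {J : Ideal R}

lemma isSMulRegular_quotient_iff {r : R} :
    IsSMulRegular (R ⧸ J) r ↔ ∀ f, r * f ∈ J → f ∈ J := by
  rw [isSMulRegular_iff_right_eq_zero_of_smul]
  constructor
  · intro h f hf
    rw [← Ideal.Quotient.eq_zero_iff_mem] at hf ⊢
    exact h _ (by rw [← hf]; rfl)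
  · intro h x hx
    obtain ⟨f, rfl⟩ := Ideal.Quotient.mk_surjective x
    rw [Ideal.Quotient.eq_zero_iff_mem]
    exact h f (Ideal.Quotient.eq_zero_iff_mem.mp (by rw [← hx]; rfl))

lemma mem_associatedPrimes_quotient_iff [IsNoetherianRing R] {P : Ideal R} :
    P ∈ associatedPrimes R (R ⧸ J) ↔ P.IsPrime ∧ ∃ f, ∀ r, r ∈ P ↔ r * f ∈ J := by
  rw [AssociatedPrimes.mem_iff, isAssociatedPrime_iff]
  refine and_congr_right fun _ => ?_
  have key : ∀ f : R, P = (⊥ : Submodule R (R ⧸ J)).colon {Ideal.Quotient.mk J f} ↔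
      ∀ r, r ∈ P ↔ r * f ∈ J := by
    intro f
    rw [SetLike.ext_iff]
    refine forall_congr' fun r => iff_congr Iff.rfl ?_
    rw [Submodule.mem_colon_singleton, Submodule.mem_bot, ← Ideal.Quotient.eq_zero_iff_mem]
    rfl
  constructor
  · rintro ⟨x, hx⟩
    obtain ⟨f, rfl⟩ := Ideal.Quotient.mk_surjective x
    exact ⟨f, (key f).mp hx⟩
  · rintro ⟨f, hf⟩
    exact ⟨_, (key f).mpr hf⟩

/-- Regularity of `s` on `(R ⧸ J) / r (R ⧸ J)`, stated in `R` for the ideal `J + (r)`. -/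
lemma isSMulRegular_quotSMulTop {r s f : R}
    (h : IsSMulRegular (QuotSMulTop r (R ⧸ J)) s) (hf : s * f ∈ J ⊔ Ideal.span {r}) :
    f ∈ J ⊔ Ideal.span {r} := by
  have key : ∀ g : R, (Submodule.Quotient.mk (Ideal.Quotient.mk J g) : QuotSMulTop r (R ⧸ J)) = 0 ↔
      g ∈ J ⊔ Ideal.span {r} := by
    intro g
    rw [Submodule.Quotient.mk_eq_zero, Submodule.mem_smul_pointwise_iff_exists, sup_comm,
      Ideal.mem_span_singleton_sup]
    constructor
    · rintro ⟨y, -, hy⟩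
      obtain ⟨a, rfl⟩ := Ideal.Quotient.mk_surjective y
      refine ⟨a, g - a * r, ?_, by ring⟩
      rw [← Ideal.Quotient.eq_zero_iff_mem, map_sub, ← hy, mul_comm]
      exact sub_self _
    · rintro ⟨a, b, hb, rfl⟩
      refine ⟨Ideal.Quotient.mk J a, trivial, ?_⟩
      rw [map_add, Ideal.Quotient.eq_zero_iff_mem.mpr hb, add_zero, mul_comm]
      rfl
  rw [← key] at hf ⊢
  exact isSMulRegular_iff_right_eq_zero_of_smul.mp h _ hf

end Quotient

/-! ### The associated primes of the powers -/

section Ass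

variable {K : Type*} [Field K] {c n : ℕ}

lemma X_mem_of_le {P : Ideal (MvPolynomial (Fin 3) K)} (hP : P.IsPrime) (h : theI K c ^ n ≤ P) :
    X 0 ∈ P ∧ (X 1 ∈ P ∨ X 2 ∈ P) := by
  have hI : theI K c ≤ P := hP.le_of_pow_le h
  constructor
  · exact hP.mem_of_pow_mem (2 * c + 2) (hI (Ideal.subset_span (by simp)))
  · rcases hP.mem_or_mem (hI (Ideal.subset_span
      (show X 1 ^ (2 * c + 2) * X 2 ∈ _ by simp))) with h | h
    · exact Or.inl (hP.mem_of_pow_mem _ h)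
    · exact Or.inr h

lemma prime_cases {P : Ideal (MvPolynomial (Fin 3) K)} (hP : P.IsPrime) (h : theI K c ^ n ≤ P)
    (hPm : P ≤ maxId K) :
    P = Ideal.span {X 0, X 1} ∨ P = Ideal.span {X 0, X 2} ∨ P = maxId K := by
  obtain ⟨h0, h1 | h2⟩ := X_mem_of_le hP h
  · rcases prime_eq (j := 2) (by decide) (by decide) (by decide) hP h0 h1 hPm with h | h <;>
      simp [h]
  · rcases prime_eq (j := 1) (by decide) (by decide) (by decide) hP h0 h2 hPm with h | h <;>
      simp [h]

lemma theI_pow_le_maxId (hn : 1 ≤ n) : theI K c ^ n ≤ maxId K := by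
  refine (Ideal.pow_le_self (by omega)).trans ?_
  rw [Ideal.span_le]
  rintro x (rfl | rfl | rfl) <;> rw [SetLike.mem_coe, mem_maxId, ← constantCoeff_eq] <;> simp

/-- An associated prime of `I ^ n` lies in the maximal ideal, since polynomials with nonzero
constant term are nonzerodivisors modulo a monomial ideal. -/
lemma mem_ass_cases {P : Ideal (MvPolynomial (Fin 3) K)}
    (hP : P ∈ associatedPrimes _ (MvPolynomial (Fin 3) K ⧸ theI K c ^ n)) :
    P = Ideal.span {X 0, X 1} ∨ P = Ideal.span {X 0, X 2} ∨ P = maxId K := by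
  obtain ⟨hp, f, hf⟩ := mem_associatedPrimes_quotient_iff.mp hP
  refine prime_cases (c := c) (n := n) hp (fun r hr => (hf r).mpr (Ideal.mul_mem_right _ _ hr)) ?_
  intro h hh
  rw [mem_maxId]
  by_contra h0
  apply hp.ne_top
  rw [Ideal.eq_top_iff_one, hf, one_mul, mem_theI_pow]
  exact coeff_zero_of_mul_mem _ InPow.mono h0 (mem_theI_pow.mp ((hf h).mp hh))

lemma minimal_xy (hn : 1 ≤ n) : Ideal.span {X 0, X 1} ∈ (theI K c ^ n).minimalPrimes := by
  obtain ⟨hp, h2⟩ := coordId_isPrime (K := K) (i := 1) (j := 2) (by decide) (by decide) (by decide)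
  refine ⟨⟨hp, (Ideal.pow_le_self (by omega)).trans ?_⟩, ?_⟩
  · have h0 : X 0 ∈ Ideal.span {(X 0 : MvPolynomial (Fin 3) K), X 1} :=
      Ideal.subset_span (by simp)
    have h1 : X 1 ∈ Ideal.span {(X 0 : MvPolynomial (Fin 3) K), X 1} :=
      Ideal.subset_span (by simp)
    rw [Ideal.span_le]
    rintro x (rfl | rfl | rfl)
    · exact Ideal.pow_mem_of_mem _ h0 _ (by omega)
    · exact Ideal.mul_mem_right _ _ (Ideal.mul_mem_right _ _ h0)
    · exact Ideal.mul_mem_right _ _ (Ideal.pow_mem_of_mem _ h1 _ (by omega))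
  · rintro Q ⟨hQ, hIQ⟩ hle
    obtain ⟨h0, h1⟩ := X_mem_of_le hQ hIQ
    have h1 := h1.resolve_right fun h => h2 (hle h)
    rw [Ideal.span_le]
    rintro x (rfl | rfl) <;> assumption

lemma minimal_xz (hn : 1 ≤ n) : Ideal.span {X 0, X 2} ∈ (theI K c ^ n).minimalPrimes := by
  obtain ⟨hp, h2⟩ := coordId_isPrime (K := K) (i := 2) (j := 1) (by decide) (by decide) (by decide)
  refine ⟨⟨hp, (Ideal.pow_le_self (by omega)).trans ?_⟩, ?_⟩
  · have h0 : X 0 ∈ Ideal.span {(X 0 : MvPolynomial (Fin 3) K), X 2} :=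
      Ideal.subset_span (by simp)
    have h1 : X 2 ∈ Ideal.span {(X 0 : MvPolynomial (Fin 3) K), X 2} :=
      Ideal.subset_span (by simp)
    rw [Ideal.span_le]
    rintro x (rfl | rfl | rfl)
    · exact Ideal.pow_mem_of_mem _ h0 _ (by omega)
    · exact Ideal.mul_mem_left _ _ h1
    · exact Ideal.mul_mem_left _ _ h1
  · rintro Q ⟨hQ, hIQ⟩ hle
    obtain ⟨h0, h1⟩ := X_mem_of_le hQ hIQ
    have h1 := h1.resolve_left fun h => h2 (hle h)
    rw [Ideal.span_le]
    rintro x (rfl | rfl) <;> assumption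

lemma maxId_mem_ass (hn : c + 2 ≤ n) :
    maxId K ∈ associatedPrimes _ (MvPolynomial (Fin 3) K ⧸ theI K c ^ n) := by
  obtain ⟨t, rfl⟩ := Nat.exists_eq_add_of_le hn
  refine mem_associatedPrimes_quotient_iff.mpr ⟨inferInstance, monomial (socExp c t) 1, fun r => ?_⟩
  constructor
  · intro hr
    have hX : ∀ v, X v * monomial (socExp c t) (1 : K) ∈ theI K c ^ (c + 2 + t) := by
      intro v
      rw [X, monomial_mul, one_mul, monomial_mem_theI_pow]
      exact socExp_add c t v
    obtain ⟨a, b, d, rfl⟩ := Submodule.mem_span_triple.mp hr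
    simp only [smul_eq_mul, add_mul, mul_assoc]
    exact Ideal.add_mem _ (Ideal.add_mem _ (Ideal.mul_mem_left _ _ (hX 0))
      (Ideal.mul_mem_left _ _ (hX 1))) (Ideal.mul_mem_left _ _ (hX 2))
  · intro hr
    rw [mem_maxId]
    by_contra h0
    refine socExp_not_inPow c t (coeff_zero_of_mul_mem _ InPow.mono h0 (mem_theI_pow.mp hr) _ ?_)
    simp

lemma maxId_notMem_ass (hn : n ≤ c + 1) :
    maxId K ∉ associatedPrimes _ (MvPolynomial (Fin 3) K ⧸ theI K c ^ n) := by
  intro h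
  obtain ⟨hp, f, hf⟩ := mem_associatedPrimes_quotient_iff.mp h
  apply hp.ne_top
  rw [Ideal.eq_top_iff_one, hf, one_mul, mem_theI_pow]
  intro s hs
  have hX : ∀ v, X v ∈ maxId K → InPow c n (Finsupp.single v 1 + s) := by
    intro v hv
    apply mem_theI_pow.mp ((hf (X v)).mp hv)
    rw [mem_support_iff, coeff_X_mul]
    exact mem_support_iff.mp hs
  exact InPow.of_add hn (hX 1 (Ideal.subset_span (by simp))) (hX 2 (Ideal.subset_span (by simp)))

lemma ass_eq (hn : c + 2 ≤ n) :
    associatedPrimes _ (MvPolynomial (Fin 3) K ⧸ theI K c ^ n) =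
      {Ideal.span {X 0, X 1}, Ideal.span {X 0, X 2}, maxId K} := by
  have hmin : (theI K c ^ n).minimalPrimes ⊆
      associatedPrimes _ (MvPolynomial (Fin 3) K ⧸ theI K c ^ n) := by
    have := Module.associatedPrimes.minimalPrimes_annihilator_subset_associatedPrimes
      (MvPolynomial (Fin 3) K) (MvPolynomial (Fin 3) K ⧸ theI K c ^ n)
    rwa [Ideal.annihilator_quotient] at this
  apply Set.Subset.antisymm
  · intro P hP
    simpa using mem_ass_cases hP
  · rintro P (rfl | rfl | rfl)
    · exact hmin (minimal_xy (by omega))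
    · exact hmin (minimal_xz (by omega))
    · exact maxId_mem_ass hn

end Ass

/-! ### Depth -/

section Depth

variable {K : Type*} [Field K] {c n : ℕ}

lemma nil_isRegular (hn : 1 ≤ n) : RingTheory.Sequence.IsRegular
    (MvPolynomial (Fin 3) K ⧸ theI K c ^ n) ([] : List (MvPolynomial (Fin 3) K)) := by
  have : Nontrivial (MvPolynomial (Fin 3) K ⧸ theI K c ^ n) :=
    Ideal.Quotient.nontrivial_iff.mpr
      (ne_top_of_le_ne_top maxId_isPrime.ne_top (theI_pow_le_maxId hn))
  exact RingTheory.Sequence.IsRegular.nil _ _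

lemma depth_eq_zero (hn : c + 2 ≤ n) : depthIn (maxId K) (theI K c ^ n) = 0 := by
  have : {k : ℕ | ∃ rs : List (MvPolynomial (Fin 3) K), rs.length = k ∧ (∀ r ∈ rs, r ∈ maxId K) ∧
      RingTheory.Sequence.IsRegular (MvPolynomial (Fin 3) K ⧸ theI K c ^ n) rs} = {0} := by
    apply Set.Subset.antisymm
    · rintro k ⟨rs, rfl, hm, hr⟩
      rcases rs with _ | ⟨r, rs⟩
      · rfl
      exfalso
      obtain ⟨hp, f, hf⟩ := mem_associatedPrimes_quotient_iff.mp (maxId_mem_ass (K := K) hn)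
      have hreg := ((RingTheory.Sequence.isWeaklyRegular_cons_iff _ _ _).mp hr.1).1
      apply hp.ne_top
      rw [Ideal.eq_top_iff_one, hf, one_mul]
      exact isSMulRegular_quotient_iff.mp hreg f ((hf r).mp (hm r (by simp)))
    · rintro _ rfl
      exact ⟨[], rfl, by simp, nil_isRegular (by omega)⟩
  rw [depthIn, this, csSup_singleton]

/-- If `r, s` were regular, `r` would avoid the minimal primes `(x, y)` and `(x, z)` of `I ^ n`. Then
the maximal ideal would be minimal over `I ^ n + (r)`, and `s` a zero divisor modulo this ideal. -/
lemma length_le_one (hn : 1 ≤ n) {rs : List (MvPolynomial (Fin 3) K)} (hm : ∀ r ∈ rs, r ∈ maxId K)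
    (hr : RingTheory.Sequence.IsRegular (MvPolynomial (Fin 3) K ⧸ theI K c ^ n) rs) :
    rs.length ≤ 1 := by
  rcases rs with _ | ⟨r, _ | ⟨s, rs⟩⟩
  · simp
  · simp
  exfalso
  obtain ⟨hreg, hr2⟩ := (RingTheory.Sequence.isWeaklyRegular_cons_iff _ _ _).mp hr.1
  have hreg2 := ((RingTheory.Sequence.isWeaklyRegular_cons_iff _ _ _).mp hr2).1
  have hrm : r ∈ maxId K := hm r (by simp)
  have hsm : s ∈ maxId K := hm s (by simp)
  have hnot : ∀ Q ∈ (theI K c ^ n).minimalPrimes, r ∉ Q := by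
    intro Q hQ hrQ
    obtain ⟨y, hy, hxy⟩ := Ideal.exists_mul_mem_of_mem_minimalPrimes hQ hrQ
    exact hy (isSMulRegular_quotient_iff.mp hreg y hxy)
  have hmin : maxId K ∈ (theI K c ^ n ⊔ Ideal.span {r}).minimalPrimes := by
    refine ⟨⟨inferInstance, sup_le (theI_pow_le_maxId hn) ?_⟩, ?_⟩
    · rwa [Ideal.span_singleton_le_iff_mem]
    · rintro Q ⟨hQ, hle⟩ hQm
      have hrQ : r ∈ Q := (Ideal.span_singleton_le_iff_mem _).mp (le_sup_right.trans hle)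
      rcases prime_cases (c := c) (n := n) hQ (le_sup_left.trans hle) hQm with rfl | rfl | rfl
      · exact absurd hrQ (hnot _ (minimal_xy hn))
      · exact absurd hrQ (hnot _ (minimal_xz hn))
      · exact le_rfl
  obtain ⟨y, hy, hxy⟩ := Ideal.exists_mul_mem_of_mem_minimalPrimes hmin hsm
  exact hy (isSMulRegular_quotSMulTop hreg2 hxy)

/-- For `n ≤ c + 1` the element `y + z` avoids all associated primes of `I ^ n`. -/
lemma depth_eq_one (hn : 1 ≤ n) (hnc : n ≤ c + 1) : depthIn (maxId K) (theI K c ^ n) = 1 := by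
  have hX : ∀ v, (X v : MvPolynomial (Fin 3) K) ∈ maxId K := fun v => by simp [mem_maxId]
  have hmem : (X 1 + X 2 : MvPolynomial (Fin 3) K) ∈ maxId K := Ideal.add_mem _ (hX 1) (hX 2)
  have hreg : IsSMulRegular (MvPolynomial (Fin 3) K ⧸ theI K c ^ n)
      (X 1 + X 2 : MvPolynomial (Fin 3) K) := by
    by_contra hc
    have h1 : (X 1 + X 2 : MvPolynomial (Fin 3) K) ∈
        ⋃ p ∈ associatedPrimes (MvPolynomial (Fin 3) K) (MvPolynomial (Fin 3) K ⧸ theI K c ^ n),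
          (p : Set (MvPolynomial (Fin 3) K)) := by
      rw [biUnion_associatedPrimes_eq_compl_regular]
      exact hc
    obtain ⟨P, hP, hmemP⟩ := Set.mem_iUnion₂.mp h1
    rcases mem_ass_cases hP with rfl | rfl | rfl
    · apply (coordId_isPrime (K := K) (i := 1) (j := 2) (by decide) (by decide) (by decide)).2
      exact (Ideal.add_mem_iff_right _ (Ideal.subset_span (by simp))).mp hmemP
    · apply (coordId_isPrime (K := K) (i := 2) (j := 1) (by decide) (by decide) (by decide)).2
      exact (Ideal.add_mem_iff_left _ (Ideal.subset_span (by simp))).mp hmemP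
    · exact maxId_notMem_ass hnc hP
  have hseq : RingTheory.Sequence.IsRegular (MvPolynomial (Fin 3) K ⧸ theI K c ^ n)
      [(X 1 + X 2 : MvPolynomial (Fin 3) K)] := by
    refine ⟨(RingTheory.Sequence.isWeaklyRegular_singleton_iff _ _).mpr hreg, ?_⟩
    intro htop
    have h1 : (Ideal.Quotient.mk (theI K c ^ n) 1) ∈
        (⊤ : Submodule (MvPolynomial (Fin 3) K) (MvPolynomial (Fin 3) K ⧸ theI K c ^ n)) := trivial
    rw [htop, Ideal.ofList_singleton, Submodule.ideal_span_singleton_smul,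
      Submodule.mem_smul_pointwise_iff_exists] at h1
    obtain ⟨y, -, hy⟩ := h1
    obtain ⟨g, rfl⟩ := Ideal.Quotient.mk_surjective y
    have h2 : (X 1 + X 2) * g - 1 ∈ theI K c ^ n := by
      rw [← Ideal.Quotient.eq_zero_iff_mem, map_sub, ← hy]
      exact sub_self _
    apply (maxId_isPrime (K := K)).ne_top
    rw [Ideal.eq_top_iff_one]
    have h3 := Ideal.sub_mem _ (Ideal.mul_mem_right g _ hmem) (theI_pow_le_maxId hn h2)
    simpa using h3
  apply IsGreatest.csSup_eq
  constructor
  · exact ⟨_, rfl, by simpa using hmem, hseq⟩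
  · rintro k ⟨rs, rfl, hm, hr⟩
    exact length_le_one hn hm hr

end Depth

end Stmt11

open MvPolynomial in
theorem stmt11 {K : Type*} [Field K] (c : ℕ) (hc : 0 < c)
    (I : Ideal (MvPolynomial (Fin 3) K)) (hI : I = Ideal.span {X 0 ^ (2 * c + 2), X 0 * X 1 ^ (2 * c) * X 2, X 1 ^ (2 * c + 2) * X 2}) :
    (∀ n : ℕ, 1 ≤ n → n ≤ c + 1 → depthIn (Ideal.span {X 0, X 1, X 2}) (I ^ n) = 1) ∧
    (∀ n : ℕ, c + 2 ≤ n → depthIn (Ideal.span {X 0, X 1, X 2}) (I ^ n) = 0) ∧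
    dstab (Ideal.span {X 0, X 1, X 2}) I = c + 2 ∧
    astab I = c + 2 := by
  subst hI
  refine ⟨fun n h1 h2 => Stmt11.depth_eq_one h1 h2, fun n h => Stmt11.depth_eq_zero h, ?_, ?_⟩
  · refine IsLeast.csInf_eq ⟨⟨by omega, fun n hn => ?_⟩, ?_⟩
    · rw [Stmt11.depth_eq_zero hn, Stmt11.depth_eq_zero le_rfl]
    · rintro n ⟨hn0, hn⟩
      by_contra! hlt
      -- stability from `n ≤ c + 1` on would equate the depths at `n` and `c + 2`
      have h := hn (c + 2) hlt.le
      rw [Stmt11.depth_eq_zero le_rfl, Stmt11.depth_eq_one hn0 (by omega)] at h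
      exact absurd h (by decide)
  · refine IsLeast.csInf_eq ⟨⟨by omega, fun n hn => ?_⟩, ?_⟩
    · rw [Stmt11.ass_eq hn, Stmt11.ass_eq le_rfl]
    · rintro n ⟨hn0, hn⟩
      by_contra! hlt
      have h := hn (c + 2) hlt.le
      have hm := Stmt11.maxId_mem_ass (K := K) (c := c) le_rfl
      rw [h] at hm
      exact Stmt11.maxId_notMem_ass (by omega) hm
end

section
/- Let R = K[x,y,z] be a polynomial ring over a field K, c a positive integer, and I = (x^{2c+2}, xy^{2c}z, y^{2c+2}z). Then the integral closure of I is \overline{I} = (x^{2c+2}, xy^{2c}z, y^{2c+2}z, x^3y^{2c-1}z, x^4y^{2c-2}z, …, x^{2c+1}yz) (i.e., I together with the monomials x^iy^{2c-i+2}z for 3 ≤ i ≤ 2c+1), and Ass(R/\overline{I}) = {(x,z), (x,y)}. -/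
/-!
Write `d = 2c + 2`. Both claims follow from one description of the ideal `L` on the right-hand side
as an intersection of three monomial valuation ideals. For a weight `w` on the variables let
`W w m` be the ideal of polynomials all of whose monomials have `w`-weight at least `m`. Comparing
exponents (the weights are the normals of the facets of the Newton polyhedron of `I` that are not
coordinate planes) gives
`L = W (1,0,d) d ⊓ (W (2,1,0) d ⊓ W (d-2,d-1,0) ((d-2)d))`.

The ideal `W w m` is the preimage of `(T ^ m)` under the ring homomorphism `X i ↦ X i * T ^ (w i)`
into a polynomial ring in `T` over a domain. As `T` is a prime element, this shows that `W w m` is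
integrally closed and that, for `0 < m`, it is primary with radical generated by the variables
of positive weight.

* Integral closure: `I` lies in each of the three ideals, so everything integral over `I` lies
  in `L`. Conversely the extra generator `g = x^i y^(d-i) z` satisfies `g^(d-1) ∈ I^(d-1)`, because
  `g^(d-1) = (x^d)^(i-1) (x y^(d-2) z)^(d-i) y^(d-i) z^(i-1)`.
* Associated primes: the first ideal is `(x,z)`-primary, and the last two are both
  `(x,y)`-primary, hence so is their intersection. Neither of the two components contains the other,
  so the associated primes of `L` are the two radicals.
-/

open IsLocalRing

section Helpers

open MvPolynomial

variable {σ K : Type*} [Field K]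

/-! ### Monomial valuation ideals -/

/-- If `x` is integral over the ideal `(p ^ m)` with `p` prime, then `p ^ m ∣ x`. -/
lemma dvd_of_integral_prime_pow {A : Type*} [CommRing A] [IsDomain A] [WfDvdMonoid A]
    {p x : A} (hp : Prime p) (m n : ℕ) (hn : 0 < n) (a : ℕ → A)
    (ha : ∀ i ∈ Finset.Icc 1 n, p ^ (m * i) ∣ a i)
    (h : x ^ n + ∑ i ∈ Finset.Icc 1 n, a i * x ^ (n - i) = 0) : p ^ m ∣ x := by
  by_cases hx : x = 0
  · simp [hx]
  obtain ⟨k, g, hg, rfl⟩ := WfDvdMonoid.max_power_factor hx hp.irreducible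
  by_contra hk
  have hkm : k < m := by
    by_contra hmk
    exact hk (Dvd.dvd.mul_right (pow_dvd_pow p (not_lt.mp hmk)) g)
  -- every term but the first has larger `p`-order than `x ^ n`
  have h1 : p ^ (k * n + 1) ∣ ∑ i ∈ Finset.Icc 1 n, a i * (p ^ k * g) ^ (n - i) := by
    refine Finset.dvd_sum fun i hi => ?_
    have hi' := Finset.mem_Icc.mp hi
    have h2 : p ^ (m * i + k * (n - i)) ∣ a i * (p ^ k * g) ^ (n - i) := by
      rw [pow_add, mul_pow, ← pow_mul]
      exact mul_dvd_mul (ha i hi) (dvd_mul_right _ _)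
    refine (pow_dvd_pow p ?_).trans h2
    obtain ⟨j, rfl⟩ := Nat.exists_eq_add_of_le hi'.2
    have h3 : (k + 1) * i ≤ m * i := Nat.mul_le_mul_right i hkm
    rw [Nat.add_sub_cancel_left]
    nlinarith
  have h4 : p ^ (k * n + 1) ∣ (p ^ k * g) ^ n := by
    rw [eq_neg_of_add_eq_zero_left h]
    exact (dvd_neg).mpr h1
  rw [mul_pow, ← pow_mul, pow_succ] at h4
  exact hg (hp.dvd_of_dvd_pow ((mul_dvd_mul_iff_left (pow_ne_zero _ hp.ne_zero)).mp h4))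

/-- The homomorphism `X i ↦ X i * T ^ (w i)` recording the `w`-weights of monomials. -/
noncomputable def wHom (w : σ → ℕ) :
    MvPolynomial σ K →ₐ[K] Polynomial (MvPolynomial σ K) :=
  aeval fun i => Polynomial.C (X i) * Polynomial.X ^ w i

/-- The ideal of polynomials all of whose monomials have `w`-weight at least `m`, encoded as the
preimage of `(T ^ m)` under `wHom w`. -/
noncomputable def wIdeal (w : σ → ℕ) (m : ℕ) : Ideal (MvPolynomial σ K) :=
  Ideal.comap (wHom w) (Ideal.span {Polynomial.X ^ m})

lemma wHom_monomial (w : σ → ℕ) (s : σ →₀ ℕ) (a : K) :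
    wHom w (monomial s a) =
      Polynomial.C (monomial s a) * Polynomial.X ^ (Finsupp.weight w s) := by
  rw [wHom, aeval_monomial, monomial_eq, Finsupp.weight_apply, Finsupp.prod, Finsupp.prod,
    Finsupp.sum]
  simp only [mul_pow, Finset.prod_mul_distrib, ← pow_mul, Finset.prod_pow_eq_pow_sum, map_mul,
    map_prod, map_pow, smul_eq_mul, mul_comm (w _)]
  rw [← mul_assoc]
  rfl

lemma coeff_wHom (w : σ → ℕ) (f : MvPolynomial σ K) (k : ℕ) (s : σ →₀ ℕ) :
    coeff s ((wHom w f).coeff k) = if Finsupp.weight w s = k then coeff s f else 0 := by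
  classical
  induction f using MvPolynomial.induction_on' with
  | monomial u a =>
    rw [wHom_monomial, Polynomial.coeff_C_mul_X_pow]
    split_ifs <;> simp_all [coeff_monomial] <;> grind
  | add p q hp hq =>
    rw [map_add, Polynomial.coeff_add, coeff_add, hp, hq, coeff_add]
    split_ifs <;> simp

lemma mem_wIdeal {w : σ → ℕ} {m : ℕ} {f : MvPolynomial σ K} :
    f ∈ wIdeal w m ↔ ∀ s ∈ f.support, m ≤ Finsupp.weight w s := by
  rw [wIdeal, Ideal.mem_comap, Ideal.mem_span_singleton, Polynomial.X_pow_dvd_iff]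
  constructor
  · intro h s hs
    by_contra! hlt
    have := coeff_wHom w f (Finsupp.weight w s) s
    rw [h _ hlt, if_pos rfl, coeff_zero] at this
    exact (mem_support_iff.mp hs) this.symm
  · intro h k hk
    ext s
    rw [coeff_wHom, coeff_zero, ite_eq_right_iff]
    rintro rfl
    by_contra hs
    exact absurd (h s (mem_support_iff.mpr hs)) (not_le.mpr hk)

lemma isPrimary_span_prime_pow {A : Type*} [CommRing A] [IsDomain A] {p : A} (hp : Prime p)
    {m : ℕ} (hm : 0 < m) : (Ideal.span {p ^ m}).IsPrimary := by
  rw [Ideal.isPrimary_iff]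
  constructor
  · rw [Ne, Ideal.span_singleton_eq_top, isUnit_pow_iff hm.ne']
    exact hp.not_isUnit
  · intro x y hxy
    by_cases hy : p ∣ y
    · refine Or.inr ⟨m, ?_⟩
      rw [Ideal.mem_span_singleton]
      exact pow_dvd_pow_of_dvd hy m
    · rw [Ideal.mem_span_singleton] at hxy ⊢
      exact Or.inl (hp.pow_dvd_of_dvd_mul_right m hy hxy)

lemma isPrimary_wIdeal (w : σ → ℕ) {m : ℕ} (hm : 0 < m) :
    (wIdeal w m : Ideal (MvPolynomial σ K)).IsPrimary :=
  Ideal.IsPrimary.comap (isPrimary_span_prime_pow Polynomial.prime_X hm) (wHom w).toRingHom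

lemma radical_wIdeal (w : σ → ℕ) {m : ℕ} (hm : 0 < m) :
    (wIdeal w m : Ideal (MvPolynomial σ K)).radical = Ideal.span (X '' {i | w i ≠ 0}) := by
  have h1 : (wIdeal w m : Ideal (MvPolynomial σ K)).radical = wIdeal w 1 := by
    rw [wIdeal, ← Ideal.comap_radical, ← Ideal.span_singleton_pow, Ideal.radical_pow _ hm.ne',
      wIdeal, pow_one,
      ((Ideal.span_singleton_prime Polynomial.X_ne_zero).mpr Polynomial.prime_X).radical]
  rw [h1]
  ext f
  rw [mem_wIdeal, mem_ideal_span_X_image]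
  refine forall₂_congr fun s _ => ?_
  rw [Nat.one_le_iff_ne_zero, Finsupp.weight_apply, Finsupp.sum, Ne, Finset.sum_eq_zero_iff]
  simp only [Finsupp.mem_support_iff, smul_eq_mul, mul_eq_zero, Set.mem_ofPred_eq]
  grind

/-- The ideals `wIdeal w m` are integrally closed. -/
lemma intCl_le_wIdeal {I : Ideal (MvPolynomial σ K)} {w : σ → ℕ} {m : ℕ}
    (hI : I ≤ wIdeal w m) : intCl I ≤ wIdeal w m := by
  refine Ideal.span_le.mpr ?_
  rintro x ⟨n, hn, a, ha, h⟩
  change wHom w x ∈ Ideal.span _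
  rw [Ideal.mem_span_singleton]
  refine dvd_of_integral_prime_pow Polynomial.prime_X m n hn (fun i => wHom w (a i)) ?_ ?_
  · intro i hi
    have h1 : I.map (wHom w) ≤ Ideal.span {Polynomial.X ^ m} := Ideal.map_le_iff_le_comap.mpr hI
    have h2 : wHom w (a i) ∈ Ideal.span {Polynomial.X ^ m} ^ i := by
      refine Ideal.pow_right_mono h1 i ?_
      rw [← Ideal.map_pow]
      exact Ideal.mem_map_of_mem _ (ha i hi)
    rwa [Ideal.span_singleton_pow, Ideal.mem_span_singleton, ← pow_mul] at h2
  · simpa using congrArg (wHom w) h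

/-! ### Associated primes of an intersection -/

/-- The associated primes of an irredundant intersection of two primary ideals. -/
lemma associatedPrimes_inf {A : Type*} [CommRing A] {P Q : Ideal A} (hP : P.IsPrimary)
    (hQ : Q.IsPrimary) (hPQ : ¬ P ≤ Q) (hQP : ¬ Q ≤ P) :
    associatedPrimes A (A ⧸ (P ⊓ Q)) = {P.radical, Q.radical} := by
  classical
  have key (x : A) : (Submodule.colon (⊥ : Submodule A (A ⧸ (P ⊓ Q)))
      {Ideal.Quotient.mk (P ⊓ Q) x}).radical =
      (if x ∈ P then ⊤ else P.radical) ⊓ (if x ∈ Q then ⊤ else Q.radical) := by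
    have h1 : Submodule.colon (⊥ : Submodule A (A ⧸ (P ⊓ Q))) {Ideal.Quotient.mk (P ⊓ Q) x} =
        Submodule.colon P {x} ⊓ Submodule.colon Q {x} := by
      ext y
      rw [Submodule.mem_inf, Submodule.mem_colon_singleton, Submodule.mem_colon_singleton,
        Submodule.mem_colon_singleton, Algebra.smul_def, Ideal.Quotient.algebraMap_eq, ← map_mul,
        Submodule.mem_bot, Ideal.Quotient.eq_zero_iff_mem]
      rfl
    rw [h1, Ideal.radical_inf, hP.radical_colon_singleton_eq_ite,
      hQ.radical_colon_singleton_eq_ite, ← Set.top_eq_univ]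
    have h2 (J : Ideal A) : Submodule.colon J (⊤ : Set A) = J := J.colon_univ
    rw [h2, h2]
  ext p
  simp only [Set.mem_insert_iff, Set.mem_singleton_iff]
  constructor
  · rintro ⟨hp, x, hx⟩
    obtain ⟨x, rfl⟩ := Ideal.Quotient.mk_surjective x
    rw [key] at hx
    split_ifs at hx with h1 h2 h2
    · exact absurd (by simpa using hx) hp.ne_top
    · exact Or.inr (by simpa using hx)
    · exact Or.inl (by simpa using hx)
    · rcases (hp.inf_le).mp hx.ge with h | h
      · exact Or.inl (le_antisymm (hx.le.trans inf_le_left) h)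
      · exact Or.inr (le_antisymm (hx.le.trans inf_le_right) h)
  · rintro (rfl | rfl)
    · obtain ⟨x, hx, hx'⟩ := SetLike.not_le_iff_exists.mp hQP
      exact ⟨Ideal.isPrime_radical hP, Ideal.Quotient.mk _ x, by rw [key]; simp [hx, hx']⟩
    · obtain ⟨x, hx, hx'⟩ := SetLike.not_le_iff_exists.mp hPQ
      exact ⟨Ideal.isPrime_radical hQ, Ideal.Quotient.mk _ x, by rw [key]; simp [hx, hx']⟩

/-! ### Exponents in three variables -/

lemma monomial_mem_wIdeal {w : Fin 3 → ℕ} {m i j k : ℕ} :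
    (X 0 ^ i * X 1 ^ j * X 2 ^ k : MvPolynomial (Fin 3) K) ∈ wIdeal w m ↔
      m ≤ i * w 0 + j * w 1 + k * w 2 := by
  classical
  have h : (X 0 ^ i * X 1 ^ j * X 2 ^ k : MvPolynomial (Fin 3) K) =
      monomial (Finsupp.single 0 i + Finsupp.single 1 j + Finsupp.single 2 k) 1 := by
    simp [X_pow_eq_monomial]
  rw [h, mem_wIdeal, support_monomial, if_neg one_ne_zero]
  simp [Finsupp.weight_single]

lemma mem_wIdeal_three {w : Fin 3 → ℕ} {m : ℕ} {f : MvPolynomial (Fin 3) K} :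
    f ∈ wIdeal w m ↔ ∀ s ∈ f.support, m ≤ s 0 * w 0 + s 1 * w 1 + s 2 * w 2 := by
  rw [mem_wIdeal]
  refine forall₂_congr fun s _ => ?_
  rw [Finsupp.weight_apply, Finsupp.sum_fintype _ _ (by simp), Fin.sum_univ_three]
  simp

lemma mem_ideal_of_support {J : Ideal (MvPolynomial (Fin 3) K)} {f : MvPolynomial (Fin 3) K}
    (h : ∀ s ∈ f.support, (X 0 ^ s 0 * X 1 ^ s 1 * X 2 ^ s 2 : MvPolynomial (Fin 3) K) ∈ J) :
    f ∈ J := by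
  rw [f.as_sum]
  refine J.sum_mem fun s hs => ?_
  rw [monomial_eq, Finsupp.prod_fintype _ _ (by simp), Fin.prod_univ_three]
  exact J.mul_mem_left _ (h s hs)

lemma monomial_mem_of_le {J : Ideal (MvPolynomial (Fin 3) K)} {i j k a b t : ℕ}
    (h : (X 0 ^ i * X 1 ^ j * X 2 ^ k : MvPolynomial (Fin 3) K) ∈ J)
    (ha : i ≤ a) (hb : j ≤ b) (ht : k ≤ t) :
    (X 0 ^ a * X 1 ^ b * X 2 ^ t : MvPolynomial (Fin 3) K) ∈ J :=
  J.mem_of_dvd (mul_dvd_mul (mul_dvd_mul (pow_dvd_pow _ ha) (pow_dvd_pow _ hb))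
    (pow_dvd_pow _ ht)) h

/-- The three inequalities cutting out the Newton polyhedron of `I` have no further lattice points
than those lying above the exponents of the listed generators. -/
lemma span_eq_inf (c : ℕ) :
    (Ideal.span
      ({X 0 ^ (2 * c + 2), X 0 * X 1 ^ (2 * c) * X 2, X 1 ^ (2 * c + 2) * X 2} ∪
       {p | ∃ i : ℕ, 3 ≤ i ∧ i ≤ 2 * c + 1 ∧ p = X 0 ^ i * X 1 ^ (2 * c + 2 - i) * X 2}) :
      Ideal (MvPolynomial (Fin 3) K)) =
    wIdeal ![1, 0, 2 * c + 2] (2 * c + 2) ⊓ (wIdeal ![2, 1, 0] (2 * c + 2) ⊓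
      wIdeal ![2 * c, 2 * c + 1, 0] (2 * c * (2 * c + 2))) := by
  have e1 : (X 0 ^ (2 * c + 2) : MvPolynomial (Fin 3) K) =
      X 0 ^ (2 * c + 2) * X 1 ^ 0 * X 2 ^ 0 := by simp
  have e2 : (X 0 * X 1 ^ (2 * c) * X 2 : MvPolynomial (Fin 3) K) =
      X 0 ^ 1 * X 1 ^ (2 * c) * X 2 ^ 1 := by simp
  have e3 : (X 1 ^ (2 * c + 2) * X 2 : MvPolynomial (Fin 3) K) =
      X 0 ^ 0 * X 1 ^ (2 * c + 2) * X 2 ^ 1 := by simp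
  have e4 (i : ℕ) : (X 0 ^ i * X 1 ^ (2 * c + 2 - i) * X 2 : MvPolynomial (Fin 3) K) =
      X 0 ^ i * X 1 ^ (2 * c + 2 - i) * X 2 ^ 1 := by simp
  refine le_antisymm (Ideal.span_le.mpr ?_) ?_
  · rintro p ((rfl | rfl | rfl) | ⟨i, h3, hi, rfl⟩)
    · rw [e1]
      refine ⟨monomial_mem_wIdeal.mpr ?_, monomial_mem_wIdeal.mpr ?_, monomial_mem_wIdeal.mpr ?_⟩ <;>
        simp <;> nlinarith
    · rw [e2]
      refine ⟨monomial_mem_wIdeal.mpr ?_, monomial_mem_wIdeal.mpr ?_, monomial_mem_wIdeal.mpr ?_⟩ <;>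
        simp <;> nlinarith
    · rw [e3]
      refine ⟨monomial_mem_wIdeal.mpr ?_, monomial_mem_wIdeal.mpr ?_, monomial_mem_wIdeal.mpr ?_⟩ <;>
        simp <;> nlinarith
    · rw [e4]
      obtain ⟨j, hj⟩ := Nat.exists_eq_add_of_le (show i ≤ 2 * c + 2 by omega)
      rw [hj, Nat.add_sub_cancel_left, ← hj]
      refine ⟨monomial_mem_wIdeal.mpr ?_, monomial_mem_wIdeal.mpr ?_, monomial_mem_wIdeal.mpr ?_⟩ <;>
        simp <;> nlinarith
  · rintro f ⟨h1, h2, h3⟩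
    refine mem_ideal_of_support fun s hs => ?_
    have h1 := mem_wIdeal_three.mp h1 s hs
    have h2 := mem_wIdeal_three.mp h2 s hs
    have h3 := mem_wIdeal_three.mp h3 s hs
    simp only [Matrix.cons_val] at h1 h2 h3
    generalize s 0 = a at *
    generalize s 1 = b at *
    generalize s 2 = t at *
    by_cases ha : 2 * c + 2 ≤ a
    · refine monomial_mem_of_le (i := 2 * c + 2) (j := 0) (k := 0) ?_ ha (by omega) (by omega)
      rw [← e1]
      exact Ideal.subset_span (by simp)
    have ht : 1 ≤ t := by
      rw [Nat.one_le_iff_ne_zero]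
      rintro rfl
      omega
    by_cases ha0 : a = 0
    · refine monomial_mem_of_le (i := 0) (j := 2 * c + 2) (k := 1) ?_ (by omega) (by omega) ht
      rw [← e3]
      exact Ideal.subset_span (by simp)
    -- for `2 ≤ a` and `a + b < d`, the third weight is at most `(d - 1) ^ 2 - a < (d - 2) * d`
    have hab : a = 1 ∨ 2 * c + 2 ≤ a + b := by
      by_contra! hcon
      obtain ⟨e, he⟩ := Nat.exists_eq_add_of_le (show a + b ≤ 2 * c + 1 by omega)
      have : 2 ≤ a := by omega
      nlinarith
    by_cases ha3 : a < 3
    · refine monomial_mem_of_le (i := 1) (j := 2 * c) (k := 1) ?_ (by omega) (by omega) ht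
      rw [← e2]
      exact Ideal.subset_span (by simp)
    · refine monomial_mem_of_le (i := a) (j := 2 * c + 2 - a) (k := 1) ?_ le_rfl (by omega) ht
      rw [← e4]
      exact Ideal.subset_span (Or.inr ⟨a, by omega, by omega, rfl⟩)

lemma mem_intCl_of_pow_mem {A : Type*} [CommRing A] {I : Ideal A} {x : A} {n : ℕ} (hn : 0 < n)
    (h : x ^ n ∈ I ^ n) : x ∈ intCl I := by
  classical
  refine Ideal.subset_span ⟨n, hn, fun i => if i = n then -x ^ n else 0, ?_, ?_⟩
  · intro i _
    dsimp only
    split_ifs with hi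
    · subst hi
      exact neg_mem h
    · exact zero_mem _
  · rw [Finset.sum_eq_single_of_mem n (Finset.mem_Icc.mpr ⟨hn, le_rfl⟩)]
    · simp
    · intro i _ hi
      simp [hi]

end Helpers

open MvPolynomial in
theorem stmt12 {K : Type*} [Field K] (c : ℕ) (hc : 0 < c)
    (I : Ideal (MvPolynomial (Fin 3) K)) (hI : I = Ideal.span {X 0 ^ (2 * c + 2), X 0 * X 1 ^ (2 * c) * X 2, X 1 ^ (2 * c + 2) * X 2}) :
    intCl I = Ideal.span
      ({X 0 ^ (2 * c + 2), X 0 * X 1 ^ (2 * c) * X 2, X 1 ^ (2 * c + 2) * X 2} ∪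
       {p | ∃ i : ℕ, 3 ≤ i ∧ i ≤ 2 * c + 1 ∧ p = X 0 ^ i * X 1 ^ (2 * c + 2 - i) * X 2}) ∧
    associatedPrimes (MvPolynomial (Fin 3) K) (MvPolynomial (Fin 3) K ⧸ intCl I) = {Ideal.span {X 0, X 2}, Ideal.span {X 0, X 1}} := by
  have hcl : intCl I = Ideal.span
      ({X 0 ^ (2 * c + 2), X 0 * X 1 ^ (2 * c) * X 2, X 1 ^ (2 * c + 2) * X 2} ∪
       {p | ∃ i : ℕ, 3 ≤ i ∧ i ≤ 2 * c + 1 ∧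
         p = X 0 ^ i * X 1 ^ (2 * c + 2 - i) * X 2}) := by
    apply le_antisymm
    · have hle := hI.le.trans (Ideal.span_mono (Set.subset_union_left (t :=
        {p : MvPolynomial (Fin 3) K | ∃ i : ℕ, 3 ≤ i ∧ i ≤ 2 * c + 1 ∧
          p = X 0 ^ i * X 1 ^ (2 * c + 2 - i) * X 2})))
      rw [span_eq_inf] at hle ⊢
      exact le_inf (intCl_le_wIdeal (hle.trans inf_le_left))
        (le_inf (intCl_le_wIdeal (hle.trans (inf_le_right.trans inf_le_left)))
          (intCl_le_wIdeal (hle.trans (inf_le_right.trans inf_le_right))))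
    · refine Ideal.span_le.mpr ?_
      rintro p (hp | ⟨i, h3, hi, rfl⟩)
      · refine mem_intCl_of_pow_mem one_pos ?_
        rw [pow_one, pow_one, hI]
        exact Ideal.subset_span hp
      · obtain ⟨j, hj⟩ := Nat.exists_eq_add_of_le (show i ≤ 2 * c + 2 by omega)
        obtain ⟨i, rfl⟩ := Nat.exists_eq_add_of_le' (show 1 ≤ i by omega)
        refine mem_intCl_of_pow_mem (n := i + j) (by omega) ?_
        have hx : (X 0 ^ (2 * c + 2) : MvPolynomial (Fin 3) K) ∈ I := by
          rw [hI]; exact Ideal.subset_span (by simp)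
        have hy : (X 0 * X 1 ^ (2 * c) * X 2 : MvPolynomial (Fin 3) K) ∈ I := by
          rw [hI]; exact Ideal.subset_span (by simp)
        have hm := Ideal.mul_mem_mul (Ideal.pow_mem_pow hx i) (Ideal.pow_mem_pow hy j)
        rw [← pow_add] at hm
        have e : ((X 0 ^ (i + 1) * X 1 ^ (2 * c + 2 - (i + 1)) * X 2) ^ (i + j) :
            MvPolynomial (Fin 3) K) =
            (X 1 ^ j * X 2 ^ i) * ((X 0 ^ (2 * c + 2)) ^ i * (X 0 * X 1 ^ (2 * c) * X 2) ^ j) := by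
          rw [show 2 * c + 2 - (i + 1) = j by omega, show 2 * c + 2 = i + j + 1 by omega]
          obtain ⟨k, hk⟩ := Nat.exists_eq_add_of_le' (show 1 ≤ i + j by omega)
          have hk2 : 2 * c = k := by omega
          have hpow : (X 1 ^ j : MvPolynomial (Fin 3) K) ^ (i + j) =
              X 1 ^ j * (X 1 ^ (2 * c)) ^ j := by
            rw [hk, hk2]; ring
          rw [mul_pow, mul_pow, hpow]
          ring
        rw [e]
        exact Ideal.mul_mem_left _ _ hm
  refine ⟨hcl, ?_⟩
  rw [hcl, span_eq_inf]
  have hr1 : (wIdeal ![1, 0, 2 * c + 2] (2 * c + 2) :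
      Ideal (MvPolynomial (Fin 3) K)).radical = Ideal.span {X 0, X 2} := by
    rw [radical_wIdeal _ (by omega)]
    have hs : {i : Fin 3 | ![1, 0, 2 * c + 2] i ≠ 0} = {0, 2} := by
      ext i; fin_cases i <;> simp
    rw [hs, Set.image_pair]
  have hr2 : (wIdeal ![2, 1, 0] (2 * c + 2) :
      Ideal (MvPolynomial (Fin 3) K)).radical = Ideal.span {X 0, X 1} := by
    rw [radical_wIdeal _ (by omega)]
    have hs : {i : Fin 3 | ![2, 1, 0] i ≠ 0} = {0, 1} := by
      ext i; fin_cases i <;> simp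
    rw [hs, Set.image_pair]
  have hr3 : (wIdeal ![2 * c, 2 * c + 1, 0] (2 * c * (2 * c + 2)) :
      Ideal (MvPolynomial (Fin 3) K)).radical = Ideal.span {X 0, X 1} := by
    rw [radical_wIdeal _ (by positivity)]
    have hs : {i : Fin 3 | ![2 * c, 2 * c + 1, 0] i ≠ 0} = {0, 1} := by
      ext i; fin_cases i <;> simp [hc.ne']
    rw [hs, Set.image_pair]
  rw [associatedPrimes_inf (isPrimary_wIdeal _ (by omega))
    ((isPrimary_wIdeal _ (by omega)).inf (isPrimary_wIdeal _ (by positivity)) (hr2.trans hr3.symm)),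
    Ideal.radical_inf, hr1, hr2, hr3, inf_idem]
  · -- `z` lies in the first component only
    intro h
    have h1 : (X 0 ^ 0 * X 1 ^ 0 * X 2 ^ 1 : MvPolynomial (Fin 3) K) ∈
        wIdeal ![1, 0, 2 * c + 2] (2 * c + 2) := monomial_mem_wIdeal.mpr (by simp)
    have h2 := monomial_mem_wIdeal.mp (h h1).1
    simp at h2
  · -- `y ^ d` lies in the second component only
    intro h
    have h1 : (X 0 ^ 0 * X 1 ^ (2 * c + 2) * X 2 ^ 0 : MvPolynomial (Fin 3) K) ∈
        wIdeal ![2, 1, 0] (2 * c + 2) ⊓ wIdeal ![2 * c, 2 * c + 1, 0] (2 * c * (2 * c + 2)) :=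
      ⟨monomial_mem_wIdeal.mpr (by simp), monomial_mem_wIdeal.mpr (by simp; nlinarith)⟩
    have h2 := monomial_mem_wIdeal.mp (h h1)
    simp at h2
end

section
/- Let R = K[x,y,z] be a polynomial ring over a field K, c a positive integer, and I = (x^{2c+2}, xy^{2c}z, y^{2c+2}z). Then (x^{2c+2}y^{2c+1}z)^n ∉ (I^2)^n for every integer n ≥ 1; in particular x^{2c+2}y^{2c+1}z does not belong to the integral closure \overline{I^2}. -/
/-!
Give `x`, `y`, `z` the weights `2`, `1`, `2c+2`. All three generators of `I` then have weight
`4c+4`, whereas `x^(2c+2) y^(2c+1) z` has weight `8c+7 < 2(4c+4)`. To use this, specialise along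
the monomial curve `x ↦ t^2`, `y ↦ t`, `z ↦ t^(2c+2)`: the ideal `I^2` is sent into `(t^(8c+8))`
and the monomial is sent to `t^(8c+7)`. Principal ideals generated by powers of `t` are integrally
closed in `K[t]` (`X_pow_dvd_of_integral_equation`), so everything integral over `I^2` is sent into
`(t^(8c+8))`, which does not contain `t^(8c+7)`.
-/

open IsLocalRing

/-- The ideal `(t^N)` of `K[t]` is integrally closed: if `g` had order `m < N` at `t`, then in an
equation of integral dependence every term other than `g ^ n` would have order greater than
`m * n`, the order of `g ^ n`. -/
lemma X_pow_dvd_of_integral_equation {K : Type*} [Field K] {N n : ℕ} {g : Polynomial K}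
    {a : ℕ → Polynomial K}
    (ha : ∀ i ∈ Finset.Icc 1 n, (Polynomial.X ^ N) ^ i ∣ a i)
    (h : g ^ n + ∑ i ∈ Finset.Icc 1 n, a i * g ^ (n - i) = 0) :
    Polynomial.X ^ N ∣ g := by
  by_cases hg : g = 0
  · simp [hg]
  obtain ⟨m, q, hq, rfl⟩ := WfDvdMonoid.max_power_factor hg Polynomial.irreducible_X
  rcases le_or_gt N m with hm | hm
  · exact (pow_dvd_pow _ hm).mul_right _
  exfalso
  have hsum : Polynomial.X ^ (m * n + 1) ∣
      ∑ i ∈ Finset.Icc 1 n, a i * (Polynomial.X ^ m * q) ^ (n - i) := by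
    refine Finset.dvd_sum fun i hi => ?_
    have hle : m * n + 1 ≤ N * i + m * (n - i) := by
      obtain ⟨h1, h2⟩ := Finset.mem_Icc.1 hi
      obtain ⟨k, rfl⟩ := Nat.exists_eq_add_of_le h2
      rw [Nat.add_sub_cancel_left]
      nlinarith
    refine (pow_dvd_pow _ hle).trans ?_
    rw [pow_add, mul_pow, pow_mul, pow_mul]
    exact mul_dvd_mul (ha i hi) (dvd_mul_right _ _)
  have hpow : Polynomial.X ^ (m * n + 1) ∣ (Polynomial.X ^ m * q) ^ n := by
    rw [eq_neg_of_add_eq_zero_left h]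
    exact hsum.neg_right
  rw [mul_pow, ← pow_mul, pow_succ] at hpow
  have hdvd := (mul_dvd_mul_iff_left (pow_ne_zero (m * n) Polynomial.X_ne_zero)).1 hpow
  exact hq (Polynomial.prime_X.dvd_of_dvd_pow hdvd)

open MvPolynomial in
theorem stmt14 {K : Type*} [Field K] (c : ℕ) (hc : 0 < c)
    (I : Ideal (MvPolynomial (Fin 3) K)) (hI : I = Ideal.span {X 0 ^ (2 * c + 2), X 0 * X 1 ^ (2 * c) * X 2, X 1 ^ (2 * c + 2) * X 2}) :
    (∀ n : ℕ, 1 ≤ n → (X 0 ^ (2 * c + 2) * X 1 ^ (2 * c + 1) * X 2) ^ n ∉ (I ^ 2) ^ n) ∧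
    X 0 ^ (2 * c + 2) * X 1 ^ (2 * c + 1) * X 2 ∉ intCl (I ^ 2) := by
  let φ : MvPolynomial (Fin 3) K →+* Polynomial K :=
    (aeval (![Polynomial.X ^ 2, Polynomial.X, Polynomial.X ^ (2 * c + 2)] :
      Fin 3 → Polynomial K)).toRingHom
  have φ0 : φ (X 0) = Polynomial.X ^ 2 := by simp [φ]
  have φ1 : φ (X 1) = Polynomial.X := by simp [φ]
  have φ2 : φ (X 2) = Polynomial.X ^ (2 * c + 2) := by simp [φ]
  have hu : φ (X 0 ^ (2 * c + 2) * X 1 ^ (2 * c + 1) * X 2) = Polynomial.X ^ (8 * c + 7) := by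
    simp only [map_mul, map_pow, φ0, φ1, φ2]
    ring
  have hmapI : I.map φ ≤ Ideal.span {Polynomial.X ^ (4 * c + 4)} := by
    rw [hI, Ideal.map_span, Ideal.span_le]
    rintro _ ⟨p, hp, rfl⟩
    suffices φ p = Polynomial.X ^ (4 * c + 4) by
      rw [this]
      exact Ideal.mem_span_singleton_self _
    rcases hp with rfl | rfl | rfl <;> simp only [map_mul, map_pow, φ0, φ1, φ2] <;> ring
  have hdvd : ∀ i : ℕ, ∀ p ∈ (I ^ 2) ^ i, (Polynomial.X ^ (8 * c + 8)) ^ i ∣ φ p := by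
    intro i p hp
    have hmem := Ideal.mem_map_of_mem φ hp
    rw [Ideal.map_pow, Ideal.map_pow] at hmem
    have hmem' := Ideal.pow_right_mono (Ideal.pow_right_mono hmapI 2) i hmem
    rw [Ideal.span_singleton_pow, Ideal.span_singleton_pow, Ideal.mem_span_singleton,
      ← pow_mul Polynomial.X] at hmem'
    convert hmem' using 3
    ring
  have hlt : ∀ {a b : ℕ}, (Polynomial.X : Polynomial K) ^ a ∣ Polynomial.X ^ b → a ≤ b :=
    fun h => (pow_dvd_pow_iff Polynomial.X_ne_zero Polynomial.not_isUnit_X).1 h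
  refine ⟨fun n hn hmem => ?_, fun hmem => ?_⟩
  · have h := hdvd n _ hmem
    rw [map_pow, hu, ← pow_mul, ← pow_mul] at h
    have := hlt h
    nlinarith
  · -- The preimage of `(t^(8c+8))` is an ideal, so it suffices that it contains `intClSet (I ^ 2)`.
    have hle : intCl (I ^ 2) ≤ (Ideal.span {Polynomial.X ^ (8 * c + 8)}).comap φ := by
      refine Ideal.span_le.2 ?_
      rintro p ⟨n, -, a, ha, hp⟩
      refine Ideal.mem_comap.2 (Ideal.mem_span_singleton.2 ?_)
      refine X_pow_dvd_of_integral_equation (n := n) (a := fun i => φ (a i))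
        (fun i hi => hdvd i _ (ha i hi)) ?_
      simpa only [map_add, map_sum, map_mul, map_pow, map_zero] using congrArg φ hp
    have h := Ideal.mem_span_singleton.1 (Ideal.mem_comap.1 (hle hmem))
    rw [hu] at h
    have := hlt h
    omega
end

section
/- Let R = K[x,y,z,u] be a polynomial ring over a field K and I = (xy, yz, zu). Then Ass(R/I^n) = Ass(R/I) for all n ≥ 1 (so astab(I) = 1), while depth(R/I) = 2 and depth(R/I^n) = 1 for all n ≥ 2 (so dstab(I) = 2). -/
/-!
The ideal `I = (xy, yz, zu)` is the edge ideal of the path `x - y - z - u`, with minimal primes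
`(x, z)`, `(y, z)` and `(y, u)`. For a set `S` of variables, the power `(S)ⁿ` consists of the
polynomials whose order with respect to the grading by degree in `S` is at least `n`, and such an
order is a valuation (`wo_mul`).

*Associated primes.* As the path is bipartite, `Iⁿ = (x, z)ⁿ ∩ (y, z)ⁿ ∩ (y, u)ⁿ`
(`mem_pathI_pow`), so membership in `Iⁿ` is a condition on three valuations. An annihilator of a
class modulo `Iⁿ` is then an intersection of valuation ideals, and the only primes among these are
the three minimal primes; explicit monomials realise each of them (`associatedPrimes_pathI_pow`).

*Depth for `n ≥ 2`.* The element `x + y` has order zero for all three valuations, hence is regular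
on `R ⧸ Iⁿ`. Sections of `R ⧸ Iⁿ` on the punctured spectrum need not extend: the class of
`(yz)ⁿ⁻¹` on the component of `(x, z)`, extended by zero, is the fraction `y (yz)ⁿ⁻¹ / (x + y)`.
Its numerator is a socle element modulo `(Iⁿ, x + y)`, and a change-of-rings argument transfers it
to a socle element modulo `(Iⁿ, r)` for any regular `r` (`not_isSMulRegular_pair`), so no regular
sequence in `(x, y, z, u)` has length two.

*Depth for `n = 1`.* The sequence `x + y, z + u` is regular: modulo `x + y` the ideal `I` becomes
`(x², xz, zu) = (x², z) ∩ (x, u)`, and `z + u` has order zero for weighted orders cutting out both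
components. Longer regular sequences are excluded because `R ⧸ I` has dimension at most two
(`supportDim_pathI_le`).
-/

open IsLocalRing

/-! ### Weighted orders and monomial ideals -/

section Weights

open MvPolynomial

variable {K : Type*} [Field K]

/-- The order of a polynomial in `x, y, z, u` for the grading in which the `i`-th variable has
degree `w i`: the least weighted degree of a monomial that occurs, and `⊤` for the zero
polynomial. -/
noncomputable def wo (w : Fin 4 → ℕ) (f : MvPolynomial (Fin 4) K) : ℕ∞ :=
  (f : MvPowerSeries (Fin 4) K).weightedOrder w

lemma wo_mul (w : Fin 4 → ℕ) (f g : MvPolynomial (Fin 4) K) :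
    wo w (f * g) = wo w f + wo w g := by
  simp [wo, MvPowerSeries.weightedOrder_mul]

lemma wo_one (w : Fin 4 → ℕ) : wo w (1 : MvPolynomial (Fin 4) K) = 0 := by
  simp [wo]

lemma wo_pow (w : Fin 4 → ℕ) (f : MvPolynomial (Fin 4) K) (n : ℕ) :
    wo w (f ^ n) = n * wo w f := by
  induction n with
  | zero => simp [wo_one]
  | succ n ih => rw [pow_succ, wo_mul, ih]; push_cast; ring

lemma weight_four (w : Fin 4 → ℕ) (d : Fin 4 →₀ ℕ) :
    Finsupp.weight w d = d 0 * w 0 + d 1 * w 1 + d 2 * w 2 + d 3 * w 3 := by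
  simp [Finsupp.weight_eq_sum, Fin.sum_univ_four]

lemma le_wo_iff {w : Fin 4 → ℕ} {k : ℕ} {f : MvPolynomial (Fin 4) K} :
    (k : ℕ∞) ≤ wo w f ↔
      ∀ d, coeff d f ≠ 0 → k ≤ d 0 * w 0 + d 1 * w 1 + d 2 * w 2 + d 3 * w 3 := by
  simp only [← weight_four]
  constructor
  · intro h d hd
    have := h.trans (MvPowerSeries.weightedOrder_le w (f := (f : MvPowerSeries (Fin 4) K))
      (d := d) (by simpa using hd))
    exact_mod_cast this
  · intro h
    refine MvPowerSeries.nat_le_weightedOrder w fun d hd => ?_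
    by_contra hne
    exact absurd (h d (by simpa using hne)) (not_le.mpr hd)

/-- The ideal of polynomials of weighted order at least `k`. When `w` is the indicator of a set of
variables, this is the `k`-th power of the prime ideal generated by these variables. -/
noncomputable def W (K : Type*) [Field K] (w : Fin 4 → ℕ) (k : ℕ) :
    Ideal (MvPolynomial (Fin 4) K) where
  carrier := {f | (k : ℕ∞) ≤ wo w f}
  add_mem' {a b} ha hb := by
    have h := MvPowerSeries.min_weightedOrder_le_add w (f := (a : MvPowerSeries (Fin 4) K))
      (g := (b : MvPowerSeries (Fin 4) K))
    simp only [Set.mem_ofPred_eq, wo, MvPolynomial.coe_add] at *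
    exact (le_min ha hb).trans h
  zero_mem' := by simp [wo]
  smul_mem' c f hf := by
    simp only [Set.mem_ofPred_eq, smul_eq_mul, wo_mul] at *
    exact le_add_left hf

lemma mem_W {w : Fin 4 → ℕ} {k : ℕ} {f : MvPolynomial (Fin 4) K} :
    f ∈ W K w k ↔ (k : ℕ∞) ≤ wo w f := Iff.rfl

/-- An element of order zero is a nonzerodivisor modulo `W K w k`. -/
lemma mem_W_of_mul_mem {w : Fin 4 → ℕ} {k : ℕ} {f g : MvPolynomial (Fin 4) K}
    (hf : wo w f = 0) (h : f * g ∈ W K w k) : g ∈ W K w k := by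
  rwa [mem_W, wo_mul, hf, zero_add] at h

lemma W_isPrime (w : Fin 4 → ℕ) : (W K w 1).IsPrime := by
  refine ⟨?_, ?_⟩
  · rw [Ne, Ideal.eq_top_iff_one, mem_W, wo_one]
    simp
  · intro f g h
    rw [mem_W, wo_mul] at h
    simp only [mem_W, Nat.cast_one, Order.one_le_iff_ne_zero] at *
    by_contra! hh
    simp [hh] at h

/-- The monomial `x ^ a * y ^ b * z ^ c * u ^ d`. -/
noncomputable def mon (K : Type*) [Field K] (a b c d : ℕ) : MvPolynomial (Fin 4) K :=
  X 0 ^ a * X 1 ^ b * X 2 ^ c * X 3 ^ d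

lemma monomial_eq_mon (d : Fin 4 →₀ ℕ) :
    monomial d (1 : K) = mon K (d 0) (d 1) (d 2) (d 3) := by
  rw [monomial_eq, Finsupp.prod_fintype _ _ (by simp)]
  simp [mon, Fin.prod_univ_four]

lemma wo_X (w : Fin 4 → ℕ) (i : Fin 4) : wo w (X i : MvPolynomial (Fin 4) K) = w i := by
  rw [wo, X, coe_monomial, MvPowerSeries.weightedOrder_monomial_of_ne_zero _ one_ne_zero]
  simp [Finsupp.weight_apply]

lemma wo_mon (w : Fin 4 → ℕ) (a b c d : ℕ) :
    wo w (mon K a b c d) = ((a * w 0 + b * w 1 + c * w 2 + d * w 3 : ℕ) : ℕ∞) := by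
  simp only [mon, wo_mul, wo_pow, wo_X]
  push_cast
  rfl

/-- The sum of two distinct variables has order zero as soon as one of them has weight zero. -/
lemma wo_X_add_X (w : Fin 4 → ℕ) {i j : Fin 4} (hij : i ≠ j) (h : w i = 0 ∨ w j = 0) :
    wo w (X i + X j : MvPolynomial (Fin 4) K) = 0 := by
  rw [← nonpos_iff_eq_zero]
  have key : ∀ l : Fin 4, coeff (Finsupp.single l 1) (X i + X j : MvPolynomial (Fin 4) K) ≠ 0 →
      w l = 0 → wo w (X i + X j : MvPolynomial (Fin 4) K) ≤ 0 := by
    intro l hl hw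
    have := MvPowerSeries.weightedOrder_le w
      (f := ((X i + X j : MvPolynomial (Fin 4) K) : MvPowerSeries (Fin 4) K))
      (d := Finsupp.single l 1) (by rw [MvPolynomial.coeff_coe]; exact hl)
    simpa [wo, Finsupp.weight_apply, hw] using this
  rcases h with h | h
  · exact key i (by simp [coeff_X, Finsupp.single_left_inj, hij.symm]) h
  · exact key j (by simp [coeff_X, Finsupp.single_left_inj, hij]) h

/-- A polynomial lies in an ideal as soon as all its monomials do. -/
lemma mem_of_mon_mem {J : Ideal (MvPolynomial (Fin 4) K)} {f : MvPolynomial (Fin 4) K}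
    (h : ∀ d, coeff d f ≠ 0 → mon K (d 0) (d 1) (d 2) (d 3) ∈ J) : f ∈ J := by
  rw [f.as_sum]
  refine Ideal.sum_mem _ fun d hd => ?_
  have : monomial d (coeff d f) = C (coeff d f) * monomial d 1 := by simp [C_mul_monomial]
  rw [this, monomial_eq_mon]
  exact J.mul_mem_left _ (h d (by simpa using hd))

lemma mon_mul (a b c d a' b' c' d' : ℕ) :
    mon K a b c d * mon K a' b' c' d' = mon K (a + a') (b + b') (c + c') (d + d') := by
  simp only [mon]; ring

lemma mon_mem_of_le {J : Ideal (MvPolynomial (Fin 4) K)} {a b c d a' b' c' d' : ℕ}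
    (h : mon K a b c d ∈ J) (ha : a ≤ a') (hb : b ≤ b') (hc : c ≤ c') (hd : d ≤ d') :
    mon K a' b' c' d' ∈ J := by
  obtain ⟨a, rfl⟩ := Nat.exists_eq_add_of_le ha
  obtain ⟨b, rfl⟩ := Nat.exists_eq_add_of_le hb
  obtain ⟨c, rfl⟩ := Nat.exists_eq_add_of_le hc
  obtain ⟨d, rfl⟩ := Nat.exists_eq_add_of_le hd
  rw [← mon_mul]
  exact J.mul_mem_right _ h

end Weights

/-! ### Powers of the edge ideal and their associated primes -/

section PathIdeal

open MvPolynomial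

/-- Indicator weights of the three minimal vertex covers `{x, z}`, `{y, z}`, `{y, u}` of the path
`x - y - z - u`. -/
def cov : Fin 3 → Fin 4 → ℕ := ![![1, 0, 1, 0], ![0, 1, 1, 0], ![0, 1, 0, 1]]

/-- The edge ideal `(xy, yz, zu)` of the path `x - y - z - u`. -/
noncomputable def pathI (K : Type*) [Field K] : Ideal (MvPolynomial (Fin 4) K) :=
  Ideal.span {X 0 * X 1, X 1 * X 2, X 2 * X 3}

/-- The homogeneous maximal ideal `(x, y, z, u)`. -/
noncomputable def mIdeal (K : Type*) [Field K] : Ideal (MvPolynomial (Fin 4) K) :=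
  Ideal.span {X 0, X 1, X 2, X 3}

variable {K : Type*} [Field K]

lemma X_mul_X_mem :
    (X 0 * X 1 ∈ pathI K) ∧ (X 1 * X 2 ∈ pathI K) ∧ (X 2 * X 3 ∈ pathI K) :=
  ⟨Ideal.subset_span (by simp), Ideal.subset_span (by simp), Ideal.subset_span (by simp)⟩

/-- The powers of the edge ideal coincide with its symbolic powers: `Iⁿ` is the intersection of
the `n`-th powers of the minimal primes. For a monomial this is König's theorem for the path. -/
lemma mem_pathI_pow {n : ℕ} {f : MvPolynomial (Fin 4) K} :
    f ∈ pathI K ^ n ↔ ∀ i, (n : ℕ∞) ≤ wo (cov i) f := by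
  constructor
  · intro hf i
    have h1 : ∀ g ∈ pathI K, (1 : ℕ∞) ≤ wo (cov i) g := by
      have : pathI K ≤ W K (cov i) 1 := by
        rw [pathI, Ideal.span_le]
        rintro g (rfl | rfl | rfl) <;> rw [SetLike.mem_coe, mem_W, wo_mul, wo_X, wo_X] <;>
          fin_cases i <;> simp [cov]
      intro g hg
      simpa using mem_W.mp (this hg)
    have h2 : pathI K ^ n ≤ W K (cov i) n := by
      clear hf
      induction n with
      | zero => intro g _; simp [mem_W]
      | succ n ih =>
        rw [pow_succ, Ideal.mul_le]
        intro a ha b hb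
        rw [mem_W, wo_mul]
        push_cast
        exact add_le_add (ih ha) (h1 b hb)
    exact h2 hf
  · intro h
    refine mem_of_mon_mem fun d hd => ?_
    have e0 := le_wo_iff.mp (h 0) d hd
    have e1 := le_wo_iff.mp (h 1) d hd
    have e2 := le_wo_iff.mp (h 2) d hd
    simp only [cov, Matrix.cons_val_zero, Matrix.cons_val_one, Matrix.cons_val, mul_one, mul_zero,
      add_zero, zero_add] at e0 e1 e2
    -- Greedy matching: use `xy` and `zu` as often as possible, and `yz` on what is left.
    obtain ⟨i, j, k, hn, h0, h1, h2, h3⟩ : ∃ i j k, n = i + j + k ∧ i ≤ d 0 ∧ i + j ≤ d 1 ∧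
        j + k ≤ d 2 ∧ k ≤ d 3 := by
      obtain ⟨i, hi⟩ : ∃ i, i = min (d 0) (d 1) := ⟨_, rfl⟩
      obtain ⟨k, hk⟩ : ∃ k, k = min (d 2) (d 3) := ⟨_, rfl⟩
      obtain ⟨j, hj⟩ : ∃ j, j = min (d 1 - i) (d 2 - k) := ⟨_, rfl⟩
      have : n ≤ i + j + k := by omega
      exact ⟨min i n, min j (n - min i n), n - min i n - min j (n - min i n),
        by omega, by omega, by omega, by omega, by omega⟩
    refine mon_mem_of_le (a := i) (b := i + j) (c := j + k) (d := k) ?_ h0 h1 h2 h3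
    have e : mon K i (i + j) (j + k) k =
        (X 0 * X 1) ^ i * (X 1 * X 2) ^ j * (X 2 * X 3) ^ k := by
      simp only [mon]; ring
    rw [e, hn, pow_add, pow_add]
    exact Ideal.mul_mem_mul (Ideal.mul_mem_mul (Ideal.pow_mem_pow X_mul_X_mem.1 _)
      (Ideal.pow_mem_pow X_mul_X_mem.2.1 _)) (Ideal.pow_mem_pow X_mul_X_mem.2.2 _)

/-- Since `Iⁿ` is an intersection of primary ideals cut out by the valuations `wo (cov i)`, the
annihilator of the class of `f` is `⋂ i, {g | n ≤ wo (cov i) g + wo (cov i) f}`. -/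
lemma associatedPrimes_pathI_pow {n : ℕ} (hn : 1 ≤ n) :
    associatedPrimes (MvPolynomial (Fin 4) K) (MvPolynomial (Fin 4) K ⧸ pathI K ^ n) =
      Set.range fun i => W K (cov i) 1 := by
  have hmem : ∀ f g : MvPolynomial (Fin 4) K,
      g ∈ Submodule.colon (⊥ : Submodule (MvPolynomial (Fin 4) K)
        (MvPolynomial (Fin 4) K ⧸ pathI K ^ n)) {Ideal.Quotient.mk _ f} ↔
      ∀ i, (n : ℕ∞) ≤ wo (cov i) g + wo (cov i) f := by
    intro f g
    rw [Submodule.mem_colon_singleton, Submodule.mem_bot]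
    change Ideal.Quotient.mk (pathI K ^ n) (g * f) = 0 ↔ _
    rw [Ideal.Quotient.eq_zero_iff_mem, mem_pathI_pow]
    simp only [wo_mul]
  ext P
  rw [AssociatedPrimes.mem_iff, isAssociatedPrime_iff, Set.mem_range]
  constructor
  · rintro ⟨hP, x, rfl⟩
    obtain ⟨f, rfl⟩ := Ideal.Quotient.mk_surjective x
    obtain ⟨i, hi, hle⟩ : ∃ i, wo (cov i) f < n ∧
        W K (cov i) 1 ≤ Submodule.colon (⊥ : Submodule (MvPolynomial (Fin 4) K)
          (MvPolynomial (Fin 4) K ⧸ pathI K ^ n)) {Ideal.Quotient.mk _ f} := by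
      by_contra! hcon
      -- Otherwise each `i` has some `g i` outside the colon ideal a power of which is harmless
      -- at `i`, and the product of these powers kills the class of `f`.
      have hg : ∀ i, ∃ g, g ∉ Submodule.colon (⊥ : Submodule (MvPolynomial (Fin 4) K)
          (MvPolynomial (Fin 4) K ⧸ pathI K ^ n)) {Ideal.Quotient.mk _ f} ∧
          (n : ℕ∞) ≤ wo (cov i) (g ^ n) + wo (cov i) f := by
        intro i
        rcases lt_or_ge (wo (cov i) f) n with h | h
        · obtain ⟨g, hg, hg'⟩ := SetLike.not_le_iff_exists.mp (hcon i h)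
          refine ⟨g, hg', ?_⟩
          rw [mem_W, Nat.cast_one] at hg
          rw [wo_pow]
          refine le_add_right ?_
          simpa using mul_le_mul_right hg (n : ℕ∞)
        · exact ⟨1, fun h1 => hP.ne_top ((Ideal.eq_top_iff_one _).mpr h1), le_add_left h⟩
      choose g hg1 hg2 using hg
      have : ∏ i, g i ^ n ∈ Submodule.colon (⊥ : Submodule (MvPolynomial (Fin 4) K)
          (MvPolynomial (Fin 4) K ⧸ pathI K ^ n)) {Ideal.Quotient.mk _ f} := by
        rw [hmem]
        intro i
        rw [← Finset.mul_prod_erase _ _ (Finset.mem_univ i), wo_mul]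
        refine (hg2 i).trans ?_
        gcongr
        exact le_self_add
      obtain ⟨i, -, hi⟩ := hP.prod_mem_iff.mp this
      exact hg1 i (hP.mem_of_pow_mem _ hi)
    refine ⟨i, le_antisymm hle fun g hg => ?_⟩
    rw [hmem] at hg
    rw [mem_W, Nat.cast_one, Order.one_le_iff_ne_zero]
    intro h0
    have := hg i
    rw [h0, zero_add] at this
    exact absurd hi (not_lt.mpr this)
  · rintro ⟨i, rfl⟩
    refine ⟨W_isPrime _, ?_⟩
    obtain ⟨m, rfl⟩ := Nat.exists_eq_add_of_le' hn
    obtain ⟨f, hfi, hfj⟩ : ∃ f : MvPolynomial (Fin 4) K, wo (cov i) f = (m : ℕ) ∧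
        ∀ j, j ≠ i → ((m + 1 : ℕ) : ℕ∞) ≤ wo (cov j) f := by
      fin_cases i
      · refine ⟨mon K m (m + 1) 0 0, ?_, fun j hj => ?_⟩
        · simp [wo_mon, cov]
        · fin_cases j <;> simp [wo_mon, cov] at hj ⊢
      · refine ⟨mon K (m + 1) m 0 (m + 1), ?_, fun j hj => ?_⟩
        · simp [wo_mon, cov]
        · fin_cases j <;> simp [wo_mon, cov] at hj ⊢
      · refine ⟨mon K 0 0 (m + 1) m, ?_, fun j hj => ?_⟩
        · simp [wo_mon, cov]
        · fin_cases j <;> simp [wo_mon, cov] at hj ⊢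
    refine ⟨Ideal.Quotient.mk _ f, ?_⟩
    ext g
    rw [hmem, mem_W]
    constructor
    · intro h j
      by_cases hj : j = i
      · subst hj
        rw [hfi, add_comm]
        push_cast
        gcongr
        simpa using h
      · exact le_add_left (hfj j hj)
    · intro h
      have := h i
      rw [hfi, Nat.cast_one, Order.one_le_iff_ne_zero] at *
      intro h0
      rw [h0, zero_add] at this
      have : m + 1 ≤ m := by exact_mod_cast this
      omega

end PathIdeal

/-! ### Regular sequences on cyclic modules -/

section RegularSequences

open RingTheory.Sequence Pointwise

variable {R : Type*} [CommRing R]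

lemma isSMulRegular_quot_iff {J : Ideal R} {r : R} :
    IsSMulRegular (R ⧸ J) r ↔ ∀ h, r * h ∈ J → h ∈ J :=
  isSMulRegular_quotient_iff_mem_of_smul_mem J r

lemma mk_mem_smul_top_iff {J : Ideal R} {r a : R} :
    Ideal.Quotient.mk J a ∈ (r • ⊤ : Submodule R (R ⧸ J)) ↔ ∃ b, a - r * b ∈ J := by
  rw [Submodule.mem_smul_pointwise_iff_exists]
  constructor
  · rintro ⟨x, -, hx⟩
    obtain ⟨b, rfl⟩ := Ideal.Quotient.mk_surjective x
    refine ⟨b, Ideal.Quotient.eq.mp ?_⟩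
    exact hx.symm
  · rintro ⟨b, hb⟩
    exact ⟨Ideal.Quotient.mk J b, trivial, (Ideal.Quotient.eq.mpr hb).symm⟩

lemma isSMulRegular_quotSMulTop_iff {J : Ideal R} {r s : R} :
    IsSMulRegular (QuotSMulTop r (R ⧸ J)) s ↔
      ∀ h b, s * h - r * b ∈ J → ∃ c, h - r * c ∈ J := by
  refine (isSMulRegular_quotient_iff_mem_of_smul_mem _ s).trans ?_
  rw [Ideal.Quotient.mk_surjective.forall]
  refine forall_congr' fun h => ?_
  change (Ideal.Quotient.mk J (s * h) ∈ _ → _) ↔ _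
  rw [mk_mem_smul_top_iff, mk_mem_smul_top_iff, forall_exists_index]

/-- Nontriviality of the last quotient is automatic for sequences in a proper ideal. -/
lemma top_ne_ofList_smul_top {J m : Ideal R} (hJ : J ≤ m) (hm : m ≠ ⊤) {rs : List R}
    (hrs : ∀ r ∈ rs, r ∈ m) : (⊤ : Submodule R (R ⧸ J)) ≠ Ideal.ofList rs • ⊤ := by
  intro h
  have h1 : Ideal.Quotient.mk J 1 ∈ (Ideal.ofList rs • ⊤ : Submodule R (R ⧸ J)) := h ▸ trivial
  have hle : Ideal.ofList rs ≤ m := Ideal.span_le.mpr hrs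
  obtain ⟨a, ha, ha'⟩ : ∃ a ∈ m, Ideal.Quotient.mk J a = Ideal.Quotient.mk J 1 := by
    refine Submodule.smul_induction_on (p := fun x => ∃ a ∈ m, Ideal.Quotient.mk J a = x) h1 ?_ ?_
    · intro r hr x _
      obtain ⟨b, rfl⟩ := Ideal.Quotient.mk_surjective x
      exact ⟨r * b, m.mul_mem_right _ (hle hr), rfl⟩
    · rintro _ _ ⟨a, ha, rfl⟩ ⟨b, hb, rfl⟩
      exact ⟨a + b, m.add_mem ha hb, map_add _ _ _⟩
  have h2 := hJ (Ideal.Quotient.eq.mp ha')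
  exact hm ((Ideal.eq_top_iff_one m).mpr (by simpa using m.sub_mem ha h2))

/-- Dividing out a weakly regular sequence drops the dimension by at least its length, over any
Noetherian ring. -/
lemma supportDim_quot_ofList_add_length_le {R : Type*} [CommRing R] [IsNoetherianRing R]
    (rs : List R) {M : Type*} [AddCommGroup M] [Module R M] [Module.Finite R M]
    (h : IsWeaklyRegular M rs) :
    Module.supportDim R (M ⧸ (Ideal.ofList rs • ⊤ : Submodule R M)) + rs.length ≤
      Module.supportDim R M := by
  induction rs generalizing M with
  | nil =>
    simp only [List.length_nil, Nat.cast_zero, add_zero]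
    exact Module.supportDim_le_of_surjective _ (Submodule.mkQ_surjective _)
  | cons r rs ih =>
    rw [isWeaklyRegular_cons_iff] at h
    have h1 := ih h.2
    have h2 := Module.supportDim_quotSMulTop_succ_le_of_notMem_minimalPrimes
      (fun _ => h.1.notMem_of_mem_minimalPrimes)
    rw [Module.supportDim_eq_of_equiv
      (Submodule.quotOfListConsSMulTopEquivQuotSMulTopInner M r rs)]
    refine le_trans ?_ h2
    refine le_trans ?_ (add_le_add_left h1 1)
    rw [List.length_cons, Nat.cast_add, Nat.cast_one, add_assoc]

lemma length_le_supportDim {R : Type*} [CommRing R] [IsNoetherianRing R]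
    {rs : List R} {M : Type*} [AddCommGroup M] [Module R M] [Module.Finite R M]
    (h : IsRegular M rs) : (rs.length : WithBot ℕ∞) ≤ Module.supportDim R M := by
  refine le_trans ?_ (supportDim_quot_ofList_add_length_le rs h.toIsWeaklyRegular)
  have : Nontrivial (M ⧸ (Ideal.ofList rs • ⊤ : Submodule R M)) :=
    Submodule.Quotient.nontrivial_iff.mpr h.top_ne_smul.symm
  have h0 : 0 ≤ Module.supportDim R (M ⧸ (Ideal.ofList rs • ⊤ : Submodule R M)) := by
    have := Module.nonempty_support_of_nontrivial (R := R)
      (M := M ⧸ (Ideal.ofList rs • ⊤ : Submodule R M))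
    have := this.to_subtype
    exact Order.krullDim_nonneg
  exact le_add_of_nonneg_left h0

lemma depthIn_eq {m J : Ideal R} {k : ℕ}
    (h1 : ∃ rs : List R, rs.length = k ∧ (∀ r ∈ rs, r ∈ m) ∧ IsRegular (R ⧸ J) rs)
    (h2 : ∀ rs : List R, (∀ r ∈ rs, r ∈ m) → IsRegular (R ⧸ J) rs → rs.length ≤ k) :
    depthIn m J = k := by
  refine IsGreatest.csSup_eq ⟨h1, ?_⟩
  rintro _ ⟨rs, rfl, h, h'⟩
  exact h2 rs h h'

/-- A form of Rees' theorem in depth one. Let `f` be regular on `R ⧸ J` and let `g` represent an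
element of `(f) : m` modulo `J` that does not lie in `(f)`. Then no two elements of `m` form a
regular sequence on `R ⧸ J`: the socle element `g` of `R ⧸ (J, f)` is carried over to a socle
element of `R ⧸ (J, r)`. -/
lemma not_isSMulRegular_pair {J m : Ideal R} {f g : R} (hf : ∀ h, f * h ∈ J → h ∈ J)
    (hg : ∀ h, g - f * h ∉ J) (hm : ∀ r ∈ m, ∃ h, r * g - f * h ∈ J)
    {r s : R} (hr : r ∈ m) (hs : s ∈ m) (h1 : IsSMulRegular (R ⧸ J) r) :
    ¬ IsSMulRegular (QuotSMulTop r (R ⧸ J)) s := by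
  rw [isSMulRegular_quot_iff] at h1
  rw [isSMulRegular_quotSMulTop_iff]
  intro h2
  obtain ⟨a, ha⟩ := hm r hr
  obtain ⟨b, hb⟩ := hm s hs
  have h3 : s * a - r * b ∈ J := by
    refine hf _ ?_
    have := J.sub_mem (J.mul_mem_left r hb) (J.mul_mem_left s ha)
    convert this using 1
    ring
  obtain ⟨c, hc⟩ := h2 a b h3
  refine hg c (h1 _ ?_)
  have := J.add_mem ha (J.mul_mem_left f hc)
  convert this using 1
  ring

end RegularSequences

/-! ### Depth of the powers of the edge ideal -/

section Depth

open MvPolynomial RingTheory.Sequence Pointwise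

variable {K : Type*} [Field K]

lemma X_mem_mIdeal (i : Fin 4) : (X i : MvPolynomial (Fin 4) K) ∈ mIdeal K :=
  Ideal.subset_span (by fin_cases i <;> simp)

lemma mIdeal_ne_top : mIdeal K ≠ ⊤ := by
  have hle : mIdeal K ≤ RingHom.ker (constantCoeff (σ := Fin 4) (R := K)) := by
    rw [mIdeal, Ideal.span_le]
    rintro f (rfl | rfl | rfl | rfl) <;> simp [RingHom.mem_ker]
  intro h
  have : (1 : MvPolynomial (Fin 4) K) ∈ mIdeal K := h ▸ trivial
  simpa [RingHom.mem_ker] using hle this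

lemma pathI_le_mIdeal : pathI K ≤ mIdeal K := by
  rw [pathI, Ideal.span_le]
  rintro f (rfl | rfl | rfl) <;> exact Ideal.mul_mem_right _ _ (X_mem_mIdeal _)

lemma pathI_pow_le_mIdeal {n : ℕ} (hn : 1 ≤ n) : pathI K ^ n ≤ mIdeal K :=
  (Ideal.pow_le_self (by omega)).trans pathI_le_mIdeal

/-- `x + y` lies in no minimal prime of the edge ideal. -/
lemma wo_cov_X0_add_X1 (i : Fin 3) :
    wo (cov i) (X 0 + X 1 : MvPolynomial (Fin 4) K) = 0 :=
  wo_X_add_X _ (by decide) (by fin_cases i <;> simp [cov])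

lemma mem_of_X0_add_X1_mul_mem {n : ℕ} (h : MvPolynomial (Fin 4) K)
    (hh : (X 0 + X 1) * h ∈ pathI K ^ n) : h ∈ pathI K ^ n := by
  rw [mem_pathI_pow] at *
  intro i
  simpa [wo_mul, wo_cov_X0_add_X1] using hh i

/-- For `n ≥ 2` the class of `w = (yz)ⁿ⁻¹` in `R ⧸ (x, z)ⁿ`, extended by zero to `R ⧸ (y, z)ⁿ` and
`R ⧸ (y, u)ⁿ`, is the fraction `y w / (x + y)` over `R ⧸ Iⁿ`. It is multiplied into `R ⧸ Iⁿ` by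
all variables but is not itself in `R ⧸ Iⁿ`, so `R ⧸ Iⁿ` has depth at most one. -/
lemma depthIn_pathI_pow {n : ℕ} (hn : 2 ≤ n) : depthIn (mIdeal K) (pathI K ^ n) = 1 := by
  obtain ⟨m, rfl⟩ := Nat.exists_eq_add_of_le' hn
  refine depthIn_eq ⟨[X 0 + X 1], rfl, ?_, ?_⟩ ?_
  · simpa using Ideal.add_mem _ (X_mem_mIdeal 0) (X_mem_mIdeal 1)
  · refine ⟨?_, top_ne_ofList_smul_top (pathI_pow_le_mIdeal (by omega)) mIdeal_ne_top ?_⟩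
    · rw [isWeaklyRegular_singleton_iff, isSMulRegular_quot_iff]
      exact mem_of_X0_add_X1_mul_mem
    · simpa using Ideal.add_mem _ (X_mem_mIdeal 0) (X_mem_mIdeal 1)
  · intro rs hrs hreg
    by_contra! hlen
    obtain ⟨r, s, t, rfl⟩ : ∃ r s t, rs = r :: s :: t := by
      match rs, hlen with
      | r :: s :: t, _ => exact ⟨r, s, t, rfl⟩
    have h := hreg.toIsWeaklyRegular
    rw [isWeaklyRegular_cons_iff, isWeaklyRegular_cons_iff] at h
    have hmon : ∀ {a b c d : ℕ}, m + 2 ≤ a + c → m + 2 ≤ b + c → m + 2 ≤ b + d →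
        mon K a b c d ∈ pathI K ^ (m + 2) := by
      intro a b c d h0 h1 h2
      rw [mem_pathI_pow]
      intro i
      rw [wo_mon, Nat.cast_le]
      fin_cases i <;> simpa [cov]
    refine not_isSMulRegular_pair (J := pathI K ^ (m + 2)) (m := mIdeal K)
      (f := X 0 + X 1) (g := mon K 0 (m + 2) (m + 1) 0) mem_of_X0_add_X1_mul_mem ?_ ?_
      (hrs r (by simp)) (hrs s (by simp)) h.1 h.2.1
    · intro h hh
      rw [mem_pathI_pow] at hh
      -- Locally at `(x, z)` the only candidate for the quotient is `w`, at `(y, u)` it is `0`.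
      have h0 : mon K 0 (m + 1) (m + 1) 0 - h ∈ W K (cov 0) (m + 2) := by
        refine mem_W_of_mul_mem (wo_cov_X0_add_X1 0) ?_
        have hx : mon K 1 (m + 1) (m + 1) 0 ∈ W K (cov 0) (m + 2) := by
          rw [mem_W, wo_mon, Nat.cast_le]
          simp [cov]; omega
        have := Ideal.add_mem _ (mem_W.mpr (hh 0)) hx
        convert this using 1
        simp only [mon]; ring
      have h2 : h ∈ W K (cov 2) (m + 2) := by
        refine mem_W_of_mul_mem (wo_cov_X0_add_X1 2) ?_
        have hx : mon K 0 (m + 2) (m + 1) 0 ∈ W K (cov 2) (m + 2) := by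
          rw [mem_W, wo_mon, Nat.cast_le]
          simp [cov]
        have := Ideal.sub_mem _ hx (mem_W.mpr (hh 2))
        convert this using 1
        ring
      obtain ⟨d, hd0, hd1, hd2, hd3⟩ : ∃ d : Fin 4 →₀ ℕ,
          d 0 = 0 ∧ d 1 = m + 1 ∧ d 2 = m + 1 ∧ d 3 = 0 :=
        ⟨Finsupp.equivFunOnFinite.symm ![0, m + 1, m + 1, 0], by simp⟩
      have c0 : coeff d (mon K 0 (m + 1) (m + 1) 0 - h) = 0 := by
        by_contra hne
        have := le_wo_iff.mp h0 d hne
        simp [cov, hd0, hd1, hd2, hd3] at this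
      have c2 : coeff d h = 0 := by
        by_contra hne
        have := le_wo_iff.mp h2 d hne
        simp [cov, hd0, hd1, hd2, hd3] at this
      have e : mon K 0 (m + 1) (m + 1) 0 = monomial d 1 := by
        rw [monomial_eq_mon, hd0, hd1, hd2, hd3]
      rw [coeff_sub, c2, e, coeff_monomial] at c0
      simp at c0
    · intro r hr
      induction hr using Submodule.span_induction with
      | zero => exact ⟨0, by simp⟩
      | add a b _ _ ha hb =>
        obtain ⟨a', ha⟩ := ha
        obtain ⟨b', hb⟩ := hb
        refine ⟨a' + b', ?_⟩
        convert Ideal.add_mem _ ha hb using 1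
        ring
      | smul c a _ ha =>
        obtain ⟨a', ha⟩ := ha
        refine ⟨c * a', ?_⟩
        convert Ideal.mul_mem_left _ c ha using 1
        simp only [smul_eq_mul]
        ring
      | mem a ha =>
        rcases ha with rfl | rfl | rfl | rfl
        · refine ⟨0, ?_⟩
          convert hmon (a := 1) (b := m + 2) (c := m + 1) (d := 0) (by omega) (by omega)
            (by omega) using 1
          simp only [mon]; ring
        · refine ⟨mon K 0 (m + 2) (m + 1) 0, ?_⟩
          convert neg_mem (hmon (a := 1) (b := m + 2) (c := m + 1) (d := 0) (by omega)
            (by omega) (by omega)) using 1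
          simp only [mon]; ring
        · refine ⟨0, ?_⟩
          convert hmon (a := 0) (b := m + 2) (c := m + 2) (d := 0) (by omega) (by omega)
            (by omega) using 1
          simp only [mon]; ring
        · refine ⟨mon K 0 (m + 1) (m + 1) 1, ?_⟩
          convert neg_mem (hmon (a := 1) (b := m + 1) (c := m + 1) (d := 1) (by omega)
            (by omega) (by omega)) using 1
          simp only [mon]; ring

/-- `R ⧸ I` is a quotient of `R ⧸ (xy, zu)`, where `xy, zu` is a regular sequence on `R`. -/
lemma supportDim_pathI_le :
    Module.supportDim (MvPolynomial (Fin 4) K) (MvPolynomial (Fin 4) K ⧸ pathI K) ≤ 2 := by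
  have hreg : IsWeaklyRegular (MvPolynomial (Fin 4) K)
      [X 0 * X 1, (X 2 * X 3 : MvPolynomial (Fin 4) K)] := by
    rw [isWeaklyRegular_cons_iff, isWeaklyRegular_singleton_iff]
    constructor
    · exact IsSMulRegular.of_ne_zero (by simp)
    · refine (isSMulRegular_quotient_iff_mem_of_smul_mem _ _).mpr ?_
      have hmem : ∀ f : MvPolynomial (Fin 4) K,
          f ∈ ((X 0 * X 1 : MvPolynomial (Fin 4) K) • ⊤ : Ideal (MvPolynomial (Fin 4) K)) ↔
            f ∈ W K ![1, 0, 0, 0] 1 ∧ f ∈ W K ![0, 1, 0, 0] 1 := by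
        intro f
        rw [← Submodule.ideal_span_singleton_smul, smul_eq_mul, Ideal.mul_top]
        constructor
        · intro h
          obtain ⟨g, rfl⟩ := Ideal.mem_span_singleton.mp h
          simp only [mem_W, wo_mul, wo_X]
          simp
        · rintro ⟨h0, h1⟩
          refine mem_of_mon_mem fun d hd => ?_
          have e0 := le_wo_iff.mp h0 d hd
          have e1 := le_wo_iff.mp h1 d hd
          simp at e0 e1
          refine mon_mem_of_le (a := 1) (b := 1) (c := 0) (d := 0) ?_ (by omega) (by omega)
            (by omega) (by omega)
          simp [mon]
      intro f hf
      rw [hmem] at hf ⊢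
      refine ⟨mem_W_of_mul_mem ?_ hf.1, mem_W_of_mul_mem ?_ hf.2⟩ <;>
        simp [wo_mul, wo_X]
  have h1 := supportDim_quot_ofList_add_length_le _ hreg
  have h2 : Module.supportDim (MvPolynomial (Fin 4) K) (MvPolynomial (Fin 4) K) = 4 := by
    rw [Module.supportDim_self_eq_ringKrullDim, MvPolynomial.ringKrullDim_of_isNoetherianRing,
      ringKrullDim_eq_zero_of_field]
    simp
  have hle : (Ideal.ofList [X 0 * X 1, (X 2 * X 3 : MvPolynomial (Fin 4) K)] • ⊤ :
      Ideal (MvPolynomial (Fin 4) K)) ≤ pathI K := by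
    rw [smul_eq_mul, Ideal.mul_top, Ideal.ofList, Ideal.span_le]
    intro f hf
    simp only [List.mem_cons, List.not_mem_nil, or_false, Set.mem_ofPred_eq] at hf
    rcases hf with rfl | rfl
    · exact X_mul_X_mem.1
    · exact X_mul_X_mem.2.2
  have h3 := Module.supportDim_le_of_surjective (Submodule.factor hle)
    (Submodule.factor_surjective hle)
  refine h3.trans ?_
  rw [h2] at h1
  generalize Module.supportDim (MvPolynomial (Fin 4) K) (MvPolynomial (Fin 4) K ⧸
    (Ideal.ofList [X 0 * X 1, (X 2 * X 3 : MvPolynomial (Fin 4) K)] • ⊤ :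
      Ideal (MvPolynomial (Fin 4) K))) = q at h1
  simp only [List.length_cons, List.length_nil] at h1
  induction q using WithBot.recBotCoe with
  | bot => exact bot_le
  | coe q =>
    have h4 : q + 2 ≤ 2 + 2 := WithBot.coe_le_coe.mp h1
    exact WithBot.coe_le_coe.mpr ((ENat.add_le_add_iff_right (by simp)).mp h4)

/-- The substitution `y ↦ -x`, which identifies `R ⧸ (x + y)` with a polynomial ring. -/
noncomputable def subst (K : Type*) [Field K] :
    MvPolynomial (Fin 4) K →ₐ[K] MvPolynomial (Fin 4) K :=
  aeval ![X 0, -X 0, X 2, X 3]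

lemma sub_subst_mem (f : MvPolynomial (Fin 4) K) :
    f - subst K f ∈ Ideal.span {(X 0 + X 1 : MvPolynomial (Fin 4) K)} := by
  induction f using MvPolynomial.induction_on with
  | C a => simp [subst]
  | add p q hp hq =>
    convert Ideal.add_mem _ hp hq using 1
    rw [map_add]; ring
  | mul_X p i hp =>
    have hi : (X i : MvPolynomial (Fin 4) K) - subst K (X i) ∈
        Ideal.span {(X 0 + X 1 : MvPolynomial (Fin 4) K)} := by
      rw [Ideal.mem_span_singleton, subst, aeval_X]
      fin_cases i <;> simp
      exact ⟨1, by ring⟩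
    convert Ideal.add_mem _ (Ideal.mul_mem_right (X i) _ hp)
      (Ideal.mul_mem_left _ (subst K p) hi) using 1
    rw [map_mul]; ring

/-- The substitution `y ↦ -x` carries the edge ideal into `(x², xz, zu)`, which is the intersection
of the primary ideals `(x², z)` and `(x, u)`; both of them are cut out by weighted orders. -/
lemma subst_mem {f : MvPolynomial (Fin 4) K} (hf : f ∈ pathI K) :
    subst K f ∈ W K ![1, 0, 2, 0] 2 ∧ subst K f ∈ W K ![1, 0, 0, 1] 1 := by
  have : pathI K ≤ (W K ![1, 0, 2, 0] 2 ⊓ W K ![1, 0, 0, 1] 1).comap (subst K) := by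
    rw [pathI, Ideal.span_le]
    rintro f (rfl | rfl | rfl) <;>
      simp only [subst, SetLike.mem_coe, Ideal.mem_comap, Ideal.mem_inf, map_mul, aeval_X,
        Matrix.cons_val_zero, Matrix.cons_val_one, Matrix.cons_val, mul_neg, neg_mul, neg_mem_iff,
        mem_W, wo_mul, wo_X] <;>
      norm_num
  exact this hf

lemma exists_sub_mem_pathI {f : MvPolynomial (Fin 4) K}
    (h1 : subst K f ∈ W K ![1, 0, 2, 0] 2) (h2 : subst K f ∈ W K ![1, 0, 0, 1] 1) :
    ∃ c, f - (X 0 + X 1) * c ∈ pathI K := by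
  suffices h : f ∈ pathI K ⊔ Ideal.span {(X 0 + X 1 : MvPolynomial (Fin 4) K)} by
    obtain ⟨a, ha, b, hb, rfl⟩ := Submodule.mem_sup.mp h
    obtain ⟨c, rfl⟩ := Ideal.mem_span_singleton.mp hb
    exact ⟨c, by simpa using ha⟩
  have hs : subst K f ∈ pathI K ⊔ Ideal.span {(X 0 + X 1 : MvPolynomial (Fin 4) K)} := by
    have hl : (X 0 + X 1 : MvPolynomial (Fin 4) K) ∈
        pathI K ⊔ Ideal.span {(X 0 + X 1 : MvPolynomial (Fin 4) K)} :=
      Ideal.mem_sup_right (Ideal.mem_span_singleton_self _)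
    have h20 : mon K 2 0 0 0 ∈
        pathI K ⊔ Ideal.span {(X 0 + X 1 : MvPolynomial (Fin 4) K)} := by
      convert Ideal.sub_mem _ (Ideal.mul_mem_left _ (X 0) hl)
        (Ideal.mem_sup_left X_mul_X_mem.1) using 1
      simp only [mon]; ring
    have h11 : mon K 1 0 1 0 ∈
        pathI K ⊔ Ideal.span {(X 0 + X 1 : MvPolynomial (Fin 4) K)} := by
      convert Ideal.sub_mem _ (Ideal.mul_mem_left _ (X 2) hl)
        (Ideal.mem_sup_left X_mul_X_mem.2.1) using 1
      simp only [mon]; ring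
    have h01 : mon K 0 0 1 1 ∈
        pathI K ⊔ Ideal.span {(X 0 + X 1 : MvPolynomial (Fin 4) K)} := by
      convert Ideal.mem_sup_left X_mul_X_mem.2.2 using 1
      simp only [mon]; ring
    refine mem_of_mon_mem fun d hd => ?_
    have e1 := le_wo_iff.mp h1 d hd
    have e2 := le_wo_iff.mp h2 d hd
    simp at e1 e2
    by_cases c2 : 2 ≤ d 0
    · exact mon_mem_of_le h20 c2 (by omega) (by omega) (by omega)
    by_cases c1 : 1 ≤ d 0
    · exact mon_mem_of_le h11 c1 (by omega) (by omega) (by omega)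
    · exact mon_mem_of_le h01 (by omega) (by omega) (by omega) (by omega)
  have := Ideal.add_mem _ (Ideal.mem_sup_right (sub_subst_mem f)) hs
  simpa using this

/-- The sequence `x + y, z + u` is regular on `R ⧸ I`. -/
lemma depthIn_pathI : depthIn (mIdeal K) (pathI K) = 2 := by
  refine depthIn_eq ⟨[X 0 + X 1, X 2 + X 3], rfl, ?_, ?_⟩ ?_
  · simpa using ⟨Ideal.add_mem _ (X_mem_mIdeal 0) (X_mem_mIdeal 1),
      Ideal.add_mem _ (X_mem_mIdeal 2) (X_mem_mIdeal 3)⟩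
  · refine ⟨?_, top_ne_ofList_smul_top pathI_le_mIdeal mIdeal_ne_top ?_⟩
    · rw [isWeaklyRegular_cons_iff, isWeaklyRegular_singleton_iff, isSMulRegular_quot_iff,
        isSMulRegular_quotSMulTop_iff]
      constructor
      · simpa using mem_of_X0_add_X1_mul_mem (K := K) (n := 1)
      · intro h b hb
        have hs := subst_mem hb
        have e : subst K ((X 2 + X 3) * h - (X 0 + X 1) * b) = (X 2 + X 3) * subst K h := by
          simp [subst]
        rw [e] at hs
        exact exists_sub_mem_pathI
          (mem_W_of_mul_mem (wo_X_add_X _ (by decide) (by simp)) hs.1)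
          (mem_W_of_mul_mem (wo_X_add_X _ (by decide) (by simp)) hs.2)
    · simpa using ⟨Ideal.add_mem _ (X_mem_mIdeal 0) (X_mem_mIdeal 1),
        Ideal.add_mem _ (X_mem_mIdeal 2) (X_mem_mIdeal 3)⟩
  · intro rs _ hreg
    exact_mod_cast (length_le_supportDim hreg).trans supportDim_pathI_le

end Depth

open MvPolynomial in
theorem stmt15 {K : Type*} [Field K]
    (I : Ideal (MvPolynomial (Fin 4) K)) (hI : I = Ideal.span {X 0 * X 1, X 1 * X 2, X 2 * X 3}) :
    (∀ n : ℕ, 1 ≤ n → associatedPrimes (MvPolynomial (Fin 4) K) (MvPolynomial (Fin 4) K ⧸ I ^ n) =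
      associatedPrimes (MvPolynomial (Fin 4) K) (MvPolynomial (Fin 4) K ⧸ I)) ∧
    astab I = 1 ∧
    depthIn (Ideal.span {X 0, X 1, X 2, X 3}) I = 2 ∧
    (∀ n : ℕ, 2 ≤ n → depthIn (Ideal.span {X 0, X 1, X 2, X 3}) (I ^ n) = 1) ∧
    dstab (Ideal.span {X 0, X 1, X 2, X 3}) I = 2 := by
  change I = pathI K at hI
  subst hI
  change _ ∧ _ ∧ depthIn (mIdeal K) _ = 2 ∧ (∀ n : ℕ, 2 ≤ n → depthIn (mIdeal K) _ = 1) ∧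
    dstab (mIdeal K) _ = 2
  refine ⟨fun n hn => ?_, ?_, depthIn_pathI, fun n hn => depthIn_pathI_pow hn, ?_⟩
  · have h1 := associatedPrimes_pathI_pow (K := K) le_rfl
    rw [pow_one] at h1
    rw [associatedPrimes_pathI_pow hn, h1]
  · refine IsLeast.csInf_eq ⟨⟨one_pos, fun n hn => ?_⟩, fun n hn => hn.1⟩
    rw [associatedPrimes_pathI_pow hn, associatedPrimes_pathI_pow le_rfl]
  · refine IsLeast.csInf_eq ⟨⟨two_pos, fun n hn => ?_⟩, fun n hn => ?_⟩
    · rw [depthIn_pathI_pow hn, depthIn_pathI_pow le_rfl]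
    · obtain ⟨h0, h⟩ := hn
      by_contra! hlt
      obtain rfl : n = 1 := by omega
      have := h 2 one_le_two
      rw [depthIn_pathI_pow le_rfl, pow_one, depthIn_pathI] at this
      omega
end
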